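/- Let r₁ = (0¹²; 1, ω²) and r₂ = (0¹²; 1, −ω) in L = Λ ⊕ H, let λ₁,…,λ₂₄ be a ℤ-basis of the complex Leech lattice Λ, and for each j choose z_j so that T_{λ_j, z_j} ∈ 𝕋. Then the ω-reflections in the 50 roots r₁, r₂, T_{λ_j,z_j}(r₁), T_{λ_j,z_j}(r₂) (j = 1,…,24) generate the reflection group R(L). -/

import Mathlib

noncomputable section

open ComplexConjugate

namespace Bimonster

/-- The primitive cube root of unity `ω = e^{2πi/3}`. -/
def ω : ℂ := Complex.exp (2 * (Real.pi : ℂ) * Complex.I / 3)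

/-- `θ = ω - ω̄ = √-3`. -/
def θ : ℂ := ω - conj ω

/-- `ξ = e^{-πi/6}`. -/
def ξ : ℂ := Complex.exp (-((Real.pi : ℂ) * Complex.I) / 6)

/-- Membership in the ring of Eisenstein integers `ℰ = ℤ[ω] ⊆ ℂ`. -/
def EisP (z : ℂ) : Prop := ∃ a b : ℤ, z = (a : ℂ) + (b : ℂ) * ω

/-- The units of the ring of Eisenstein integers. -/
def EisUnit (z : ℂ) : Prop :=
  z = 1 ∨ z = -1 ∨ z = ω ∨ z = -ω ∨ z = ω ^ 2 ∨ z = -ω ^ 2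

/-- A generator matrix of the ternary Golay code `𝒞₁₂ ⊆ 𝔽₃¹²`. -/
def golay : Fin 6 → Fin 12 → ℤ :=
  ![![1, 0, 0, 0, 0, 0, 0, 1, 1, 1, 1, 1],
    ![0, 1, 0, 0, 0, 0, -1, 0, 1, -1, -1, 1],
    ![0, 0, 1, 0, 0, 0, -1, 1, 0, 1, -1, -1],
    ![0, 0, 0, 1, 0, 0, -1, -1, 1, 0, 1, -1],
    ![0, 0, 0, 0, 1, 0, -1, -1, -1, 1, 0, 1],
    ![0, 0, 0, 0, 0, 1, -1, 1, -1, -1, 1, 0]]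

/-- The complex Leech lattice `Λ ⊆ ℰ¹²`: vectors `(m + θc_i + 3z_i)` with
`m ∈ {0, ±1}`, `(c_i)` in the ternary Golay code and `z_i ∈ ℰ` with
`Σ z_i ≡ m mod θ`. -/
def Leech : Set (Fin 12 → ℂ) :=
  {lam | ∃ (m : ℤ) (s : Fin 6 → ℤ) (za zb : Fin 12 → ℤ),
    (m = 0 ∨ m = 1 ∨ m = -1) ∧
    (∀ i, lam i = (m : ℂ) + θ * ((∑ j, golay j i * s j : ℤ) : ℂ) +
        3 * ((za i : ℂ) + (zb i : ℂ) * ω)) ∧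
    ∃ a b : ℤ, (∑ i, ((za i : ℂ) + (zb i : ℂ) * ω)) - (m : ℂ) = θ * ((a : ℂ) + (b : ℂ) * ω)}

/-- The underlying 14-dimensional complex vector space of `L = Λ ⊕ H`. -/
abbrev V : Type := Fin 14 → ℂ

/-- The Hermitian form of `L = Λ ⊕ H`: `⟨u,v⟩ = -(1/3)Σ ū_i v_i` on the twelve Leech
coordinates, and the hyperbolic cell with Gram matrix `[[0, θ̄], [θ, 0]]` on the last
two coordinates.  It is conjugate-linear in the first variable. -/
def herm (u v : V) : ℂ :=
  -(1 / 3) *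
      (∑ i : Fin 12, conj (u (Fin.castLE (by norm_num) i)) * v (Fin.castLE (by norm_num) i)) +
    conj (u 12) * conj θ * v 13 + conj (u 13) * θ * v 12

/-- The norm `⟨λ,λ⟩ = -(1/3)Σ |λ_i|²` of a vector of the complex Leech lattice. -/
def normL (lam : Fin 12 → ℂ) : ℂ := -(1 / 3) * ∑ i, conj (lam i) * lam i

/-- Assemble a vector `(λ; x, y)` of `Λ ⊕ H` from its Leech part and its two
hyperbolic coordinates. -/
def glue (lam : Fin 12 → ℂ) (x y : ℂ) : V := fun i =>
  if h : (i : ℕ) < 12 then lam ⟨(i : ℕ), h⟩ else if (i : ℕ) = 12 then x else y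

/-- The lattice `L = Λ ⊕ H` as a subset of `ℂ¹⁴`. -/
def Lset : Set V :=
  {v | (fun i : Fin 12 => v (Fin.castLE (by norm_num) i)) ∈ Leech ∧
    EisP (v 12) ∧ EisP (v 13)}

/-- A root of `L`: a primitive lattice vector of norm `-3`. -/
def IsRoot (r : V) : Prop :=
  r ∈ Lset ∧ herm r r = -3 ∧
    ∀ α : ℂ, EisP α → ∀ y ∈ Lset, r = α • y → EisUnit α

/-- The `μ`-reflection in a vector `r`: `v ↦ v − (1−μ)·r·⟨r,v⟩/|r|²`. -/
def reflMap (μ : ℂ) (r v : V) : V := v - ((1 - μ) * herm r v / herm r r) • r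

/-- The automorphism group of the lattice `L`. -/
def AutL : Subgroup (V ≃ₗ[ℂ] V) where
  carrier := {g | (∀ v : V, v ∈ Lset ↔ g v ∈ Lset) ∧ ∀ u v : V, herm (g u) (g v) = herm u v}
  one_mem' := ⟨fun _ => Iff.rfl, fun _ _ => rfl⟩
  mul_mem' := by
    rintro f g ⟨hf1, hf2⟩ ⟨hg1, hg2⟩
    refine ⟨fun v => ?_, fun u v => ?_⟩
    · exact (hg1 v).trans (hf1 (g v))
    · exact (hf2 (g u) (g v)).trans (hg2 u v)
  inv_mem' := by
    rintro g ⟨hg1, hg2⟩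
    refine ⟨fun v => ?_, fun u v => ?_⟩
    · have h := hg1 (g.symm v)
      have hv : g (g.symm v) = v := g.apply_symm_apply v
      rw [hv] at h
      exact h.symm
    · have h := hg2 (g.symm u) (g.symm v)
      have hu : g (g.symm u) = u := g.apply_symm_apply u
      have hv : g (g.symm v) = v := g.apply_symm_apply v
      rw [hu, hv] at h
      exact h.symm

/-- The set of elements of `Aut(L)` acting as the `ω`-reflection in some root in `S`. -/
def ReflAutos (S : Set V) : Set (V ≃ₗ[ℂ] V) :=
  {g | g ∈ AutL ∧ ∃ r ∈ S, ∀ v, g v = reflMap ω r v}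

/-- The reflection group `R(L)` of `L`. -/
def RL : Subgroup (V ≃ₗ[ℂ] V) := Subgroup.closure (ReflAutos {r | IsRoot r})

/-- Two roots are adjacent when `|⟨a,b⟩| = √3`. -/
def Adj (a b : V) : Prop := ‖herm a b‖ = Real.sqrt 3

/-- A set of roots is connected if its adjacency graph is connected. -/
def ConnectedSet (Φ : Set V) : Prop :=
  ∀ a ∈ Φ, ∀ b ∈ Φ, Relation.ReflTransGen (fun x y => x ∈ Φ ∧ y ∈ Φ ∧ Adj x y) a b

/-- `Rad Φ` is the radical of a set `Φ` of roots: the closure of `Φ` under reflecting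
members of the set in each other (and identification of unit multiples). -/
inductive Rad (Φ : Set V) : V → Prop
  | base {r : V} : r ∈ Φ → Rad Φ r
  | refl {a b : V} : Rad Φ a → Rad Φ b → Rad Φ (reflMap ω a b)
  | inv {a b : V} : Rad Φ a → Rad Φ b → Rad Φ (reflMap (conj ω) a b)
  | unit {u : ℂ} {r : V} : EisUnit u → Rad Φ r → Rad Φ (u • r)

/-- The translation `T_{λ,z}`, given by the block matrix
`[[I, λ, 0], [0, 1, 0], [θ⁻¹λ*, θ̄⁻¹(z − |λ|²/2), 1]]`, acting on `(μ; α, β)`. -/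
def Tmap (lam : Fin 12 → ℂ) (z : ℂ) (v : V) : V :=
  glue (fun i => v (Fin.castLE (by norm_num) i) + lam i * v 12) (v 12)
    (v 13 +
      θ⁻¹ * (-(1 / 3) *
        ∑ i : Fin 12, conj (lam i) * v (Fin.castLE (by norm_num) i)) +
      (conj θ)⁻¹ * (z - normL lam / 2) * v 12)

/-- Membership of `T_{λ,z}` in the Heisenberg group `𝕋` of translations:
`λ ∈ Λ`, `z = θα/2` with `α ∈ ℤ` and `α ≡ |λ|² (mod 2)`. -/
def memT (lam : Fin 12 → ℂ) (z : ℂ) : Prop :=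
  lam ∈ Leech ∧ ∃ α j t : ℤ, z = θ * (α : ℂ) / 2 ∧ normL lam = (j : ℂ) ∧ α - j = 2 * t

/-- The root `r₁ = (0¹²; 1, ω²)`. -/
def r1 : V := glue 0 1 (ω ^ 2)

/-- The root `r₂ = (0¹²; 1, -ω)`. -/
def r2 : V := glue 0 1 (-ω)

/-!
Let `G` be the group generated by the given reflections and `γ = φ_{r₁}φ_{r₂}`. For a translation
`T = T_{λ,z}`, the element `φ_{Tr₁}φ_{Tr₂}γ⁻¹ = T(γT⁻¹γ⁻¹) ∈ G` is a translation by `λ + ω²λ = -ωλ`,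
and conjugation by `γ` multiplies the vector of a translation by `-ω²`; hence `G` contains a
translation by each vector of `Λ`. As `γ` also shifts the last coordinate, `G` contains the
reflections in all roots whose coordinate `α` is a unit. For any other root `r = αv`, choose `λ ∈ Λ`
nearest to the projection of `v`: a reflection in a root `(λ; 1, β)` decreases `|α|`, because the
covering radius of the Leech lattice is `√2` (Conway's height reduction).

The covering radius is computed for every rootless even unimodular lattice `K` of dimension 24.
Poisson summation makes theta series with harmonic weights of degree 0 and 2 modular forms of weight
12 and 14, so the shell sizes are known and `∑ ⟪v, x⟫²` over a shell is a multiple of `‖x‖²`.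
Counting shows that each class modulo `2K` has a vector of norm at most 8, so the vertices of a hole
of radius greater than `√2` have mutual distances at most `√8`. Such vertices contain an extended
Dynkin diagram, centred at a point `z` with `‖v - z‖² = 2` for its vertices `v`, and the vectors
`v - z` are roots of the neighbour of `K` at `z`, again even unimodular. By Venkov's identity the
roots of the neighbour of the form `u - z` with `u ∈ K` generate all its roots as a monoid, and
these span the space. But `⟪u - z, c - z⟫ ≤ 0` for the centre `c` of the hole, as `u` is not closer
to `c` than the vertices; hence `c = z`, contradicting that the radius exceeds `√2`.
-/

open MeasureTheory

section PoissonSummation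

open scoped FourierTransform

variable {ι : Type*}

/-- The half-open unit cube `(0, 1]^ι`, a fundamental domain for `ℤ^ι` acting on `ℝ^ι`. -/
def unitBox (ι : Type*) : Set (ι → ℝ) := Set.univ.pi fun _ => Set.Ioc 0 1

/-- The sum of the translates of `f` by `ℤ^ι`. -/
def periodization (f : (ι → ℝ) → ℂ) (x : ι → ℝ) : ℂ := ∑' m : ι → ℤ, f (x + Int.cast ∘ m)

lemma periodization_add_intCast (f : (ι → ℝ) → ℂ) (x : ι → ℝ) (k : ι → ℤ) :
    periodization f (x + Int.cast ∘ k) = periodization f x := by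
  rw [periodization, periodization,
    ← (Equiv.addLeft k).tsum_eq fun m : ι → ℤ => f (x + Int.cast ∘ m)]
  congr 1 with m
  congr 1 with i
  simp [add_assoc]

lemma exists_eq_add_intCast {x y : ι → ℝ}
    (h : (fun i => (x i : UnitAddCircle)) = fun i => (y i : UnitAddCircle)) :
    ∃ k : ι → ℤ, x = y + Int.cast ∘ k := by
  have hcoord (i : ι) : ∃ k : ℤ, x i = y i + k := by
    have hsub : ((x i - y i : ℝ) : UnitAddCircle) = 0 := by
      rw [AddCircle.coe_sub, sub_eq_zero]
      exact congrFun h i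
    obtain ⟨n, hn⟩ := (AddCircle.coe_eq_zero_iff 1).1 hsub
    exact ⟨n, by rw [zsmul_eq_mul, mul_one] at hn; linarith⟩
  choose k hk using hcoord
  exact ⟨k, funext hk⟩

/-- The quotient map from `ℝ^ι` onto the torus `ℝ^ι / ℤ^ι`. -/
def torusMk (ι : Type*) : C(ι → ℝ, UnitAddTorus ι) :=
  ⟨fun x i => (x i : UnitAddCircle), by fun_prop⟩

lemma isQuotientMap_torusMk : Topology.IsQuotientMap (torusMk ι) :=
  (IsOpenQuotientMap.piMap fun _ => QuotientAddGroup.isOpenQuotientMap_mk).isQuotientMap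

lemma factorsThrough_torusMk_periodization (f : (ι → ℝ) → ℂ) :
    Function.FactorsThrough (periodization f) (torusMk ι) := fun x y h => by
  obtain ⟨k, rfl⟩ := exists_eq_add_intCast h
  exact periodization_add_intCast f y k

lemma measurableSet_unitBox [Countable ι] : MeasurableSet (unitBox ι) :=
  MeasurableSet.univ_pi fun _ => measurableSet_Ioc

variable [Fintype ι]

lemma norm_le_one_of_mem_unitBox {x : ι → ℝ} (hx : x ∈ unitBox ι) : ‖x‖ ≤ 1 := by
  refine (pi_norm_le_iff_of_nonneg zero_le_one).2 fun i => ?_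
  obtain ⟨hpos, hle⟩ := hx i (Set.mem_univ i)
  rwa [Real.norm_of_nonneg hpos.le]

lemma volume_unitBox : volume (unitBox ι) = 1 := by
  simp [unitBox, volume_pi_pi]

lemma fundamentalDomain_basisFun_ae_eq_unitBox :
    ZSpan.fundamentalDomain (Pi.basisFun ℝ ι) =ᵐ[volume] unitBox ι := by
  have hIco : ZSpan.fundamentalDomain (Pi.basisFun ℝ ι) =
      Set.univ.pi fun i => Set.Ico ((0 : ι → ℝ) i) ((1 : ι → ℝ) i) := by
    ext x
    simp [ZSpan.mem_fundamentalDomain]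
  rw [hIco]
  exact Measure.univ_pi_Ico_ae_eq_Icc.trans Measure.univ_pi_Ioc_ae_eq_Icc.symm

lemma integral_eq_tsum_integral_unitBox {f : (ι → ℝ) → ℂ} (hf : Integrable f) :
    ∫ x, f x = ∑' m : ι → ℤ, ∫ x in unitBox ι, f (x + Int.cast ∘ m) := by
  let b : Module.Basis ι ℝ (ι → ℝ) := Pi.basisFun ℝ ι
  let e : (ι → ℤ) ≃ (Submodule.span ℤ (Set.range b)).toAddSubgroup :=
    (b.restrictScalars ℤ).equivFun.symm.toEquiv
  have : Countable (Submodule.span ℤ (Set.range b)).toAddSubgroup := e.symm.injective.countable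
  have he (m : ι → ℤ) : (e m : ι → ℝ) = Int.cast ∘ m := by
    classical
    have hsum : e m = ∑ i, m i • (b.restrictScalars ℤ) i := Module.Basis.equivFun_symm_apply _ _
    rw [hsum]
    ext i
    simp [b, Module.Basis.restrictScalars_apply, Finset.sum_apply, Pi.single_apply]
  rw [(ZSpan.isAddFundamentalDomain' b volume).integral_eq_tsum'' f hf, ← e.tsum_eq]
  congr 1 with m
  rw [setIntegral_congr_set fundamentalDomain_basisFun_ae_eq_unitBox]
  congr 1 with x
  rw [← he, add_comm]
  rfl

/-- The translates of `f` by `ℤ^ι` are dominated, uniformly on bounded sets, by a summable family: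
this is what makes the periodization of `f` continuous and integrable termwise. -/
def HasSummableTranslates (f : (ι → ℝ) → ℂ) : Prop :=
  ∀ R : ℝ, ∃ u : (ι → ℤ) → ℝ, Summable u ∧
    ∀ m (x : ι → ℝ), ‖x‖ ≤ R → ‖f (x + Int.cast ∘ m)‖ ≤ u m

lemma continuous_periodization {f : (ι → ℝ) → ℂ} (hc : Continuous f)
    (hu : HasSummableTranslates f) : Continuous (periodization f) := by
  refine continuous_iff_continuousAt.2 fun x => ?_
  obtain ⟨u, hsum, hbound⟩ := hu (‖x‖ + 1)
  have hball : ContinuousOn (periodization f) (Metric.closedBall 0 (‖x‖ + 1)) :=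
    continuousOn_tsum (fun m => (hc.comp (by fun_prop)).continuousOn) hsum
      fun m y hy => hbound m y (by simpa using hy)
  refine hball.continuousAt (Filter.mem_of_superset (Metric.isOpen_ball.mem_nhds ?_)
    Metric.ball_subset_closedBall)
  simp

/-- The periodization of `f` as a continuous function on the torus `ℝ^ι / ℤ^ι`. -/
def torusPeriodization {f : (ι → ℝ) → ℂ} (hc : Continuous f) (hu : HasSummableTranslates f) :
    C(UnitAddTorus ι, ℂ) :=
  isQuotientMap_torusMk.lift ⟨periodization f, continuous_periodization hc hu⟩
    (factorsThrough_torusMk_periodization f)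

lemma torusPeriodization_coe {f : (ι → ℝ) → ℂ} (hc : Continuous f) (hu : HasSummableTranslates f)
    (x : ι → ℝ) :
    torusPeriodization hc hu (fun i => (x i : UnitAddCircle)) = periodization f x :=
  DFunLike.congr_fun (isQuotientMap_torusMk.lift_comp
    ⟨periodization f, continuous_periodization hc hu⟩ (factorsThrough_torusMk_periodization f)) x

lemma mFourier_neg_coe (m : ι → ℤ) (x : ι → ℝ) :
    UnitAddTorus.mFourier (-m) (fun i => (x i : UnitAddCircle)) = 𝐞 (-∑ i, (m i : ℝ) * x i) := by
  simp only [UnitAddTorus.mFourier, ContinuousMap.coe_mk, fourier_coe_apply, ← Complex.exp_sum,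
    Real.fourierChar_apply]
  congr 1
  push_cast
  rw [mul_neg, neg_mul, Finset.mul_sum, Finset.sum_mul, ← Finset.sum_neg_distrib]
  refine Finset.sum_congr rfl fun i _ => ?_
  simp only [Pi.neg_apply, Int.cast_neg, mul_neg, neg_mul, div_one, neg_inj]
  ring

lemma fourierChar_neg_sum_add_intCast (m k : ι → ℤ) (x : ι → ℝ) :
    𝐞 (-∑ i, (m i : ℝ) * (x + Int.cast ∘ k : ι → ℝ) i) = 𝐞 (-∑ i, (m i : ℝ) * x i) := by
  refine Circle.ext ?_
  rw [← mFourier_neg_coe, ← mFourier_neg_coe]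
  congr 1 with i
  simp

lemma mFourierCoeff_torusPeriodization {f : (ι → ℝ) → ℂ} (hc : Continuous f) (hi : Integrable f)
    (hu : HasSummableTranslates f) (m : ι → ℤ) :
    UnitAddTorus.mFourierCoeff (torusPeriodization hc hu) m =
      ∫ x, 𝐞 (-∑ i, (m i : ℝ) * x i) • f x := by
  have hchar : Continuous fun x : ι → ℝ => 𝐞 (-∑ i, (m i : ℝ) * x i) := by fun_prop
  have hbox : {x : ι → ℝ | ∀ i, x i ∈ Set.Ioc ((0 : ι → ℝ) i) ((0 : ι → ℝ) i + 1)} =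
      unitBox ι := by
    simp [unitBox, Set.pi]
  have hterm (x : ι → ℝ) : (UnitAddTorus.mFourier (-m) fun i => (x i : UnitAddCircle)) •
      torusPeriodization hc hu (fun i => (x i : UnitAddCircle)) =
      ∑' k : ι → ℤ, 𝐞 (-∑ i, (m i : ℝ) * (x + Int.cast ∘ k : ι → ℝ) i) • f (x + Int.cast ∘ k) := by
    simp_rw [torusPeriodization_coe, mFourier_neg_coe, fourierChar_neg_sum_add_intCast,
      Circle.smul_def, smul_eq_mul, tsum_mul_left, periodization]
  have hfi : Integrable fun x => 𝐞 (-∑ i, (m i : ℝ) * x i) • f x :=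
    hi.mono (hchar.smul hc).aestronglyMeasurable (by simp)
  rw [UnitAddTorus.mFourierCoeff_eq_integral _ m 0, hbox, integral_eq_tsum_integral_unitBox hfi]
  simp_rw [hterm]
  obtain ⟨u, hsum, hbound⟩ := hu 1
  have hvol : volume (unitBox ι) ≠ ⊤ := by simp [volume_unitBox]
  refine (integral_tsum_of_summable_integral_norm (fun k => ?_) ?_).symm
  · refine Integrable.mono' (g := fun _ => u k) (integrableOn_const hvol)
      ((hchar.smul hc).comp (by fun_prop)).aestronglyMeasurable ?_
    refine (ae_restrict_iff' measurableSet_unitBox).2 (.of_forall fun x hx => ?_)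
    rw [Circle.norm_smul]
    exact hbound k x (norm_le_one_of_mem_unitBox hx)
  · refine .of_nonneg_of_le (fun k => integral_nonneg fun x => norm_nonneg _) (fun k => ?_) hsum
    have hle (x) (hx : x ∈ unitBox ι) :
        ‖‖𝐞 (-∑ i, (m i : ℝ) * (x + Int.cast ∘ k : ι → ℝ) i) • f (x + Int.cast ∘ k)‖‖ ≤ u k := by
      rw [norm_norm, Circle.norm_smul]
      exact hbound k x (norm_le_one_of_mem_unitBox hx)
    exact (le_abs_self _).trans (by
      simpa [Measure.real, volume_unitBox] using
        norm_setIntegral_le_of_norm_le_const hvol.lt_top hle)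

theorem tsum_intCast_eq_tsum_integral {f : (ι → ℝ) → ℂ} (hc : Continuous f) (hi : Integrable f)
    (hu : HasSummableTranslates f)
    (hs : Summable fun m : ι → ℤ => ∫ x, 𝐞 (-∑ i, (m i : ℝ) * x i) • f x) :
    ∑' m : ι → ℤ, f (Int.cast ∘ m) = ∑' m : ι → ℤ, ∫ x, 𝐞 (-∑ i, (m i : ℝ) * x i) • f x := by
  have hcoeff := mFourierCoeff_torusPeriodization hc hi hu
  have hsum : Summable (UnitAddTorus.mFourierCoeff (torusPeriodization hc hu)) := by
    simpa only [← hcoeff] using hs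
  have hzero := (UnitAddTorus.hasSum_mFourier_series_apply_of_summable hsum
    (fun i => ((0 : ι → ℝ) i : UnitAddCircle))).tsum_eq
  rw [torusPeriodization_coe] at hzero
  simp only [← hcoeff]
  calc ∑' m : ι → ℤ, f (Int.cast ∘ m) = periodization f 0 := by simp [periodization]
    _ = ∑' m, UnitAddTorus.mFourierCoeff (torusPeriodization hc hu) m := by
      rw [← hzero]
      congr 1 with m
      have hchar := mFourier_neg_coe (-m) 0
      rw [neg_neg] at hchar
      rw [hchar]
      simp

end PoissonSummation

section Decay

variable {E F : Type*} [NormedAddCommGroup E] [NormedAddCommGroup F]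

/-- `f` is bounded by a multiple of `(1 + ‖v‖) ^ (-n)`. -/
def HasDecay (n : ℕ) (f : E → F) : Prop := ∃ C, ∀ v, ‖f v‖ ≤ C * ((1 + ‖v‖) ^ n)⁻¹

lemma HasDecay.norm_mul_norm {n : ℕ} {f : E → F} (hf : HasDecay (n + 1) f) :
    HasDecay n fun v => ‖v‖ * ‖f v‖ := by
  obtain ⟨C, hC⟩ := hf
  refine ⟨C, fun v => ?_⟩
  rw [norm_mul, norm_norm, norm_norm]
  calc ‖v‖ * ‖f v‖ ≤ (1 + ‖v‖) * (C * ((1 + ‖v‖) ^ (n + 1))⁻¹) := by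
        gcongr
        · linarith
        · exact hC v
    _ = C * ((1 + ‖v‖) ^ n)⁻¹ := by rw [pow_succ]; field_simp

lemma HasDecay.const_mul {n : ℕ} {f : E → ℂ} (hf : HasDecay n f) (a : ℂ) :
    HasDecay n fun v => a * f v := by
  obtain ⟨C, hC⟩ := hf
  refine ⟨‖a‖ * C, fun v => ?_⟩
  rw [norm_mul, mul_assoc]
  exact mul_le_mul_of_nonneg_left (hC v) (norm_nonneg a)

lemma HasDecay.integrable [NormedSpace ℝ E] [FiniteDimensional ℝ E] [MeasurableSpace E]
    [BorelSpace E] {μ : Measure E} [μ.IsAddHaarMeasure] {n : ℕ} {f : E → F}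
    (hf : HasDecay n f) (hn : Module.finrank ℝ E < n) (hc : Continuous f) : Integrable f μ := by
  obtain ⟨C, hC⟩ := hf
  have hdom := integrable_one_add_norm (E := E) (μ := μ) (r := n) (by exact_mod_cast hn)
  refine Integrable.mono' (hdom.const_mul C) hc.aestronglyMeasurable (.of_forall fun v => ?_)
  rw [Real.rpow_neg (by positivity), Real.rpow_natCast]
  exact hC v

lemma inv_one_add_norm_add_pow_le {x : E} {R : ℝ} (hx : ‖x‖ ≤ R) (m : E) (n : ℕ) :
    ((1 + ‖x + m‖) ^ n)⁻¹ ≤ (1 + R) ^ n * ((1 + ‖m‖) ^ n)⁻¹ := by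
  have hR : 0 ≤ R := (norm_nonneg x).trans hx
  have hm : ‖m‖ ≤ ‖x + m‖ + ‖x‖ := by simpa using norm_sub_le (x + m) x
  rw [← div_eq_mul_inv, le_div_iff₀ (by positivity), ← div_eq_inv_mul,
    div_le_iff₀ (by positivity), ← mul_pow]
  gcongr
  nlinarith [norm_nonneg (x + m)]

end Decay

section LatticePoisson

open scoped RealInnerProductSpace FourierTransform

variable {E : Type*} [NormedAddCommGroup E]

section
variable [NormedSpace ℝ E] [FiniteDimensional ℝ E]
  {K : Submodule ℤ E} [DiscreteTopology K] [IsZLattice ℝ K]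

lemma summable_inv_one_add_norm_pow {n : ℕ} (hn : Module.finrank ℝ E < n) :
    Summable fun k : K => ((1 + ‖(k : E)‖) ^ n)⁻¹ := by
  refine .of_norm_bounded_eventually (ZLattice.summable_norm_pow_inv K n
    (by rwa [ZLattice.rank ℝ K])) ?_
  have hne : ∀ᶠ k : K in Filter.cofinite, k ≠ 0 := by simp [Filter.eventually_cofinite]
  filter_upwards [hne] with k hk
  have hpos : 0 < ‖(k : E)‖ := by simpa using hk
  rw [norm_inv, Real.norm_of_nonneg (by positivity), inv_pow]
  gcongr
  simp

lemma HasDecay.summable {F : Type*} [NormedAddCommGroup F] [CompleteSpace F] {n : ℕ} {f : E → F}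
    (hf : HasDecay n f) (hn : Module.finrank ℝ E < n) : Summable fun k : K => f k := by
  obtain ⟨C, hC⟩ := hf
  exact .of_norm_bounded ((summable_inv_one_add_norm_pow hn).mul_left C) fun k => hC k

variable {ι : Type*} [Fintype ι]

/-- The coordinates of `E` with respect to a `ℤ`-basis of a full lattice. -/
def latticeCoords (b : Module.Basis ι ℤ K) : (ι → ℝ) ≃L[ℝ] E :=
  (b.ofZLatticeBasis ℝ K).equivFun.symm.toContinuousLinearEquiv

lemma latticeCoords_apply (b : Module.Basis ι ℤ K) (x : ι → ℝ) :
    latticeCoords b x = ∑ i, x i • (b i : E) := by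
  refine ((b.ofZLatticeBasis ℝ K).equivFun_symm_apply x).trans ?_
  simp only [b.ofZLatticeBasis_apply ℝ K]

lemma latticeCoords_intCast (b : Module.Basis ι ℤ K) (m : ι → ℤ) :
    latticeCoords b (Int.cast ∘ m) = (b.equivFun.symm m : K) := by
  simp [latticeCoords_apply, b.equivFun_symm_apply, Int.cast_smul_eq_zsmul]

lemma HasDecay.hasSummableTranslates {n : ℕ} {f : E → ℂ} (hf : HasDecay n f)
    (hn : Module.finrank ℝ E < n) (b : Module.Basis ι ℤ K) :
    HasSummableTranslates (f ∘ latticeCoords b) := by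
  obtain ⟨C, hC⟩ := hf
  have hC0 : 0 ≤ C := by simpa using (norm_nonneg _).trans (hC 0)
  intro R
  set M := ‖(latticeCoords b : (ι → ℝ) →L[ℝ] E)‖ * R
  refine ⟨fun m => C * ((1 + M) ^ n * ((1 + ‖(b.equivFun.symm m : E)‖) ^ n)⁻¹),
    .mul_left _ (.mul_left _ ?_), fun m x hx => ?_⟩
  · exact (b.equivFun.symm.toEquiv.summable_iff (f := fun k : K => ((1 + ‖(k : E)‖) ^ n)⁻¹)).2
      (summable_inv_one_add_norm_pow hn)
  · have hM : ‖latticeCoords b x‖ ≤ M :=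
      ((latticeCoords b : (ι → ℝ) →L[ℝ] E).le_opNorm x).trans
        (mul_le_mul_of_nonneg_left hx (norm_nonneg _))
    rw [Function.comp_apply, map_add, latticeCoords_intCast]
    exact (hC _).trans (mul_le_mul_of_nonneg_left (inv_one_add_norm_add_pow_le hM _ _) hC0)
end

variable [InnerProductSpace ℝ E]

/-- A subgroup of `E` that coincides with its dual with respect to the inner product. -/
def IsSelfDual (K : Submodule ℤ E) : Prop := ∀ x : E, x ∈ K ↔ ∀ y ∈ K, ∃ n : ℤ, ⟪x, y⟫ = n

variable [FiniteDimensional ℝ E] {K : Submodule ℤ E} [DiscreteTopology K] [IsZLattice ℝ K]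

lemma IsSelfDual.exists_dualEquiv {ι : Type*} [Finite ι] (hK : IsSelfDual K)
    (b : Module.Basis ι ℤ K) :
    ∃ D : (ι → ℤ) ≃ K, ∀ m i, ⟪(D m : E), b i⟫ = m i := by
  have := Fintype.ofFinite ι
  set B := b.ofZLatticeBasis ℝ K
  have hB (i : ι) : B i = b i := b.ofZLatticeBasis_apply ℝ K i
  have hex (m : ι → ℤ) : ∃ k : K, ∀ i, ⟪(k : E), b i⟫ = m i := by
    let w := (InnerProductSpace.toDual ℝ E).symm
      (LinearMap.toContinuousLinearMap (B.constr ℝ fun i => (m i : ℝ)))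
    have hw (i : ι) : ⟪w, b i⟫ = m i := by
      rw [InnerProductSpace.toDual_symm_apply, ← hB]
      exact B.constr_basis ℝ _ i
    refine ⟨⟨w, (hK w).2 fun y hy => ?_⟩, hw⟩
    obtain ⟨n, hn⟩ := b.equivFun.symm.surjective ⟨y, hy⟩
    have hy' : y = ∑ i, (n i : ℝ) • (b i : E) := by
      simpa [b.equivFun_symm_apply, Int.cast_smul_eq_zsmul] using (congrArg Subtype.val hn).symm
    exact ⟨∑ i, n i * m i, by simp [hy', inner_sum, real_inner_smul_right, hw]⟩
  choose D hD using hex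
  refine ⟨.ofBijective D ⟨fun m n hmn => funext fun i => ?_, fun k => ?_⟩, hD⟩
  · exact_mod_cast (hD m i).symm.trans ((congrArg (fun k : K => ⟪(k : E), b i⟫) hmn).trans (hD n i))
  · choose m hm using fun i => (hK k).1 k.2 (b i) (b i).2
    refine ⟨m, Subtype.ext (InnerProductSpace.ext_inner_right_basis (𝕜 := ℝ) B fun i => ?_)⟩
    rw [hB, hD, hm]

variable [MeasurableSpace E] [BorelSpace E] {ι : Type*} [Fintype ι]

lemma map_latticeCoords_volume (b : Module.Basis ι ℤ K) :
    Measure.map (latticeCoords b) volume =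
      (ENNReal.ofReal (ZLattice.covolume K))⁻¹ • (volume : Measure E) := by
  ext s hs
  rw [Measure.map_apply (latticeCoords b).continuous.measurable hs, Measure.smul_apply,
    smul_eq_mul, mul_comm, ← div_eq_mul_inv,
    ← ZLattice.volume_image_eq_volume_div_covolume' K b hs.nullMeasurableSet]
  congr 1
  exact ((b.ofZLatticeBasis ℝ K).equivFun.image_eq_preimage_symm s).symm

lemma integral_comp_latticeCoords (b : Module.Basis ι ℤ K) (g : E → ℂ) :
    ∫ x, g (latticeCoords b x) = ((ZLattice.covolume K)⁻¹ : ℝ) * ∫ v, g v := by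
  have hpos := ZLattice.covolume_pos K
  refine ((latticeCoords b).toHomeomorph.measurableEmbedding.integral_map g).symm.trans ?_
  change ∫ v, g v ∂(Measure.map (latticeCoords b) volume) = _
  rw [map_latticeCoords_volume, integral_smul_measure, ENNReal.toReal_inv,
    ENNReal.toReal_ofReal hpos.le, Complex.real_smul]

theorem IsSelfDual.tsum_eq_tsum_fourier_div_covolume (hK : IsSelfDual K) {n : ℕ}
    (hn : Module.finrank ℝ E < n) {f : E → ℂ} (hc : Continuous f) (hf : HasDecay n f)
    (hf' : HasDecay n (𝓕 f)) :
    ∑' k : K, f k = ((ZLattice.covolume K)⁻¹ : ℝ) * ∑' k : K, 𝓕 f k := by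
  let b := Module.Free.chooseBasis ℤ K
  obtain ⟨D, hD⟩ := hK.exists_dualEquiv b
  have hcoeff (m) : ∫ x, 𝐞 (-∑ i, (m i : ℝ) * x i) • (f ∘ latticeCoords b) x =
      ((ZLattice.covolume K)⁻¹ : ℝ) * 𝓕 f (D m) := by
    rw [Real.fourier_eq, ← integral_comp_latticeCoords b]
    congr 1 with x
    simp only [latticeCoords_apply, sum_inner, real_inner_smul_left, Function.comp_apply]
    congr 4 with i
    rw [real_inner_comm, hD, mul_comm]
  have hint : Integrable (f ∘ latticeCoords b) := by
    have hmap : Integrable f (Measure.map (latticeCoords b) volume) := by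
      rw [map_latticeCoords_volume]
      exact (hf.integrable hn hc).smul_measure (by simpa using ZLattice.covolume_pos K)
    exact (latticeCoords b).toHomeomorph.measurableEmbedding.integrable_map_iff.1 hmap
  have hsum : Summable fun m : _ → ℤ => 𝓕 f (D m) :=
    (D.summable_iff (f := fun k : K => 𝓕 f k)).2 (hf'.summable hn)
  have hpoisson := tsum_intCast_eq_tsum_integral (hc.comp (latticeCoords b).continuous) hint
    (hf.hasSummableTranslates hn b) (by simpa only [hcoeff] using hsum.mul_left _)
  simp only [hcoeff, tsum_mul_left, D.tsum_eq fun k : K => 𝓕 f k] at hpoisson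
  rw [← hpoisson, ← b.equivFun.symm.toEquiv.tsum_eq]
  simp [latticeCoords_intCast]

end LatticePoisson

section Gaussian

open scoped RealInnerProductSpace FourierTransform
open Real (pi)

variable {E : Type*} [NormedAddCommGroup E]

lemma exp_neg_mul_sq_le_inv_one_add_pow {a : ℝ} (ha : 0 < a) (n : ℕ) :
    ∃ C, 0 ≤ C ∧ ∀ t : ℝ, 0 ≤ t → Real.exp (-a * t ^ 2) ≤ C * ((1 + t) ^ n)⁻¹ := by
  refine ⟨n.factorial * Real.exp (1 + 1 / (4 * a)), by positivity, fun t ht => ?_⟩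
  have hpow : (1 + t) ^ n ≤ n.factorial * Real.exp (1 + t) := by
    have := Real.pow_div_factorial_le_exp (1 + t) (by linarith) n
    rwa [div_le_iff₀ (by positivity), mul_comm] at this
  have hexponent : -a * t ^ 2 + (1 + t) ≤ 1 + 1 / (4 * a) := by
    have hsq : -a * t ^ 2 + (1 + t) = 1 + 1 / (4 * a) - a * (t - 1 / (2 * a)) ^ 2 := by
      field_simp
      ring
    have : 0 ≤ a * (t - 1 / (2 * a)) ^ 2 := by positivity
    linarith
  rw [← div_eq_mul_inv, le_div_iff₀ (by positivity)]
  calc Real.exp (-a * t ^ 2) * (1 + t) ^ n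
      ≤ Real.exp (-a * t ^ 2) * (n.factorial * Real.exp (1 + t)) := by gcongr
    _ = n.factorial * Real.exp (-a * t ^ 2 + (1 + t)) := by rw [Real.exp_add (-a * t ^ 2)]; ring
    _ ≤ n.factorial * Real.exp (1 + 1 / (4 * a)) := by gcongr

/-- The Gaussian `exp (-π b ‖v‖²)` with complex parameter `b`; its value at `b = -iτ` is the term
`q ^ (‖v‖² / 2)` of a theta series. -/
def gaussian (b : ℂ) (v : E) : ℂ := Complex.exp (-(pi * b) * (‖v‖ : ℂ) ^ 2)

lemma norm_gaussian (b : ℂ) (v : E) : ‖gaussian b v‖ = Real.exp (-(pi * b.re) * ‖v‖ ^ 2) := by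
  have hre : -(pi * b) * (‖v‖ : ℂ) ^ 2 = ((-(pi * ‖v‖ ^ 2) : ℝ) : ℂ) * b := by push_cast; ring
  rw [gaussian, Complex.norm_exp, hre, Complex.re_ofReal_mul]
  ring_nf

lemma continuous_gaussian (b : ℂ) : Continuous (gaussian b : E → ℂ) := by
  unfold gaussian
  fun_prop

variable [InnerProductSpace ℝ E]

lemma hasDecay_mul_gaussian {P : E → ℂ} (hP : P.HasTemperateGrowth) {b : ℂ} (hb : 0 < b.re)
    (n : ℕ) : HasDecay n fun v => P v * gaussian b v := by
  obtain ⟨k, M, hM0, hM⟩ := hP.norm_iteratedFDeriv_le_uniform 0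
  obtain ⟨C, _, hC⟩ := exp_neg_mul_sq_le_inv_one_add_pow (mul_pos Real.pi_pos hb) (n + k)
  refine ⟨M * C, fun v => ?_⟩
  rw [norm_mul, norm_gaussian]
  calc ‖P v‖ * Real.exp (-(pi * b.re) * ‖v‖ ^ 2)
      ≤ (M * (1 + ‖v‖) ^ k) * (C * ((1 + ‖v‖) ^ (n + k))⁻¹) := by
        gcongr
        · simpa using hM 0 le_rfl v
        · exact hC _ (norm_nonneg _)
    _ = M * C * ((1 + ‖v‖) ^ n)⁻¹ := by
      rw [pow_add]
      field_simp

lemma hasDecay_gaussian {b : ℂ} (hb : 0 < b.re) (n : ℕ) : HasDecay n (gaussian b : E → ℂ) := by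
  simpa using hasDecay_mul_gaussian (E := E) (.const 1) hb n

lemma hasLineDerivAt_gaussian (b : ℂ) (w y : E) :
    HasLineDerivAt ℝ (gaussian b) (-(2 * pi * b * (⟪y, w⟫ : ℝ)) * gaussian b w) w y := by
  have hnorm : HasLineDerivAt ℝ (fun v : E => ‖v‖ ^ 2) (2 * ⟪y, w⟫) w y := by
    simpa [real_inner_comm] using (hasStrictFDerivAt_norm_sq w).hasFDerivAt.hasLineDerivAt y
  have hexp := (hnorm.ofReal_comp.const_mul (-(pi * b))).cexp
  simp only [zero_smul, add_zero, Complex.ofReal_pow] at hexp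
  refine hexp.congr_deriv ?_
  rw [gaussian]
  push_cast
  ring

variable [FiniteDimensional ℝ E] [MeasurableSpace E] [BorelSpace E]

lemma fourier_gaussian {b : ℂ} (hb : 0 < b.re) (w : E) :
    𝓕 (gaussian b : E → ℂ) w = (1 / b) ^ (Module.finrank ℝ E / 2 : ℂ) * gaussian (1 / b) w := by
  have hb0 : b ≠ 0 := by rintro rfl; simp at hb
  have hpi : (pi : ℂ) ≠ 0 := by exact_mod_cast Real.pi_ne_zero
  have hpib : 0 < ((pi : ℂ) * b).re := by rw [Complex.re_ofReal_mul]; exact mul_pos Real.pi_pos hb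
  refine (fourier_gaussian_innerProductSpace hpib w).trans ?_
  rw [gaussian]
  congr 2 <;> field_simp

lemma hasLineDerivAt_fourier {f : E → ℂ} (hf : Integrable f)
    (hf' : Integrable fun v => ‖v‖ * ‖f v‖) (w y : E) :
    HasLineDerivAt ℝ (𝓕 f) (-(2 * pi * Complex.I) * 𝓕 (fun v => (⟪y, v⟫ : ℝ) * f v) w) w y := by
  have hint : Integrable (VectorFourier.fourierSMulRight (innerSL ℝ) f) := by
    refine Integrable.mono' (hf'.const_mul (2 * pi * ‖innerSL ℝ (E := E)‖))
      hf.aestronglyMeasurable.fourierSMulRight (.of_forall fun v => ?_)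
    simpa only [mul_assoc] using VectorFourier.norm_fourierSMulRight_le (innerSL ℝ) f v
  refine ((Real.hasFDerivAt_fourier hf hf' w).hasLineDerivAt y).congr_deriv ?_
  rw [Real.fourier_continuousLinearMap_apply hint, Real.fourier_eq, Real.fourier_eq,
    ← integral_const_mul]
  congr 1 with v
  have hinner : innerSL ℝ v y = ⟪y, v⟫ := real_inner_comm y v
  simp only [VectorFourier.fourierSMulRight_apply, Circle.smul_def, Complex.real_smul, smul_eq_mul,
    hinner]
  ring

end Gaussian

section SelfDualPoisson

open scoped FourierTransform

variable {E : Type*} [NormedAddCommGroup E] [InnerProductSpace ℝ E] [FiniteDimensional ℝ E]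
  [MeasurableSpace E] [BorelSpace E] {K : Submodule ℤ E} [DiscreteTopology K] [IsZLattice ℝ K]

/- The Gaussian with parameter `1` is its own Fourier transform and has a positive sum over `K`. -/
lemma IsSelfDual.covolume_eq_one (hK : IsSelfDual K) : ZLattice.covolume K = 1 := by
  have hself : 𝓕 (gaussian 1 : E → ℂ) = gaussian 1 := by
    ext w
    simp [fourier_gaussian (b := 1) (by simp)]
  have hdecay : HasDecay (Module.finrank ℝ E + 1) (gaussian 1 : E → ℂ) :=
    hasDecay_gaussian (by simp) _
  have hpoisson := hK.tsum_eq_tsum_fourier_div_covolume (Nat.lt_succ_self _)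
    (continuous_gaussian 1) hdecay (by rwa [hself])
  have hreal (v : E) : gaussian 1 v = (Real.exp (-Real.pi * ‖v‖ ^ 2) : ℝ) := by simp [gaussian]
  have hne : ∑' k : K, gaussian 1 (k : E) ≠ 0 := by
    have hsum : Summable fun k : K => gaussian 1 (k : E) := hdecay.summable (Nat.lt_succ_self _)
    simp_rw [hreal] at hsum ⊢
    rw [← Complex.ofReal_tsum]
    exact_mod_cast ((Complex.summable_ofReal.1 hsum).tsum_pos (fun k => (Real.exp_pos _).le) 0
      (Real.exp_pos _)).ne'
  rw [hself] at hpoisson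
  have hone := mul_right_cancel₀ hne (hpoisson.symm.trans (one_mul _).symm)
  exact inv_eq_one.1 (by exact_mod_cast hone)

theorem IsSelfDual.tsum_eq_tsum_fourier (hK : IsSelfDual K) {n : ℕ}
    (hn : Module.finrank ℝ E < n) {f : E → ℂ} (hc : Continuous f) (hf : HasDecay n f)
    (hf' : HasDecay n (𝓕 f)) : ∑' k : K, f k = ∑' k : K, 𝓕 f k := by
  simp [hK.tsum_eq_tsum_fourier_div_covolume hn hc hf hf', hK.covolume_eq_one]

end SelfDualPoisson

section ThetaKernel

open scoped RealInnerProductSpace FourierTransform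
open Complex (I)

variable {E : Type*} [NormedAddCommGroup E] [InnerProductSpace ℝ E] [FiniteDimensional ℝ E]
  [MeasurableSpace E] [BorelSpace E]

/-- A weight function `P` for which the theta series `∑ P(k) q^(‖k‖²/2)` of a self-dual lattice
transforms with weight `w` under `τ ↦ -1/τ`. The parameter `b` is `-iτ`, so `i b = τ`. -/
structure IsThetaKernel (P : E → ℂ) (w : ℕ) : Prop where
  temperate : P.HasTemperateGrowth
  fourier_mul_gaussian : ∀ b : ℂ, 0 < b.re → ∀ x : E,
    𝓕 (fun v => P v * gaussian b v) x = ((I * b) ^ w)⁻¹ * (P x * gaussian (1 / b) x)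

lemma isThetaKernel_one {w : ℕ} (hE : Module.finrank ℝ E = 2 * w) (hw : 4 ∣ w) :
    IsThetaKernel (fun _ : E => (1 : ℂ)) w := by
  refine ⟨.const 1, fun b hb x => ?_⟩
  obtain ⟨m, rfl⟩ := hw
  have hexp : ((Module.finrank ℝ E : ℂ) / 2) = (4 * m : ℕ) := by rw [hE]; push_cast; ring
  simp only [one_mul]
  rw [fourier_gaussian hb, hexp, Complex.cpow_natCast, mul_pow, pow_mul I, Complex.I_pow_four,
    one_pow, one_mul, one_div, inv_pow]

/- Multiplication by `⟪y, ·⟫` corresponds to differentiation of the Fourier transform along `y`,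
which only sees the Gaussian factor when `P` does not vary in that direction. -/
lemma IsThetaKernel.inner_mul {P : E → ℂ} {w : ℕ} (hP : IsThetaKernel P w) {y : E}
    (hy : ∀ x (t : ℝ), P (x + t • y) = P x) :
    IsThetaKernel (fun v => (⟪y, v⟫ : ℝ) * P v) (w + 1) := by
  have htemp := hP.temperate
  refine ⟨by fun_prop, fun b hb x => ?_⟩
  have hb0 : b ≠ 0 := by rintro rfl; simp at hb
  have hpi : (Real.pi : ℂ) ≠ 0 := by exact_mod_cast Real.pi_ne_zero
  have hcont : Continuous fun v => P v * gaussian b v :=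
    htemp.1.continuous.mul (continuous_gaussian b)
  have hdecay (n : ℕ) : HasDecay n fun v => P v * gaussian b v := hasDecay_mul_gaussian htemp hb n
  have hfourier := hasLineDerivAt_fourier ((hdecay _).integrable (Nat.lt_succ_self _) hcont)
    ((hdecay _).norm_mul_norm.integrable (Nat.lt_succ_self _) (by fun_prop)) x y
  have hgaussian : HasLineDerivAt ℝ (𝓕 fun v => P v * gaussian b v)
      (((I * b) ^ w)⁻¹ * (P x * (-(2 * Real.pi * (1 / b) * (⟪y, x⟫ : ℝ)) * gaussian (1 / b) x)))
      x y := by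
    have hline := ((hasLineDerivAt_gaussian (1 / b) x y).const_mul (P x)).const_mul ((I * b) ^ w)⁻¹
    simpa only [HasLineDerivAt, hP.fourier_mul_gaussian b hb, hy] using hline
  have heq := hfourier.unique hgaussian
  simp only [mul_assoc] at heq ⊢
  refine mul_left_cancel₀ (a := -(2 * (Real.pi * I))) (by simp) (heq.trans ?_)
  field_simp
  ring

lemma isThetaKernel_inner_mul_inner {w : ℕ} (hE : Module.finrank ℝ E = 2 * w) (hw : 4 ∣ w)
    {y y' : E} (h : ⟪y, y'⟫ = 0) :
    IsThetaKernel (fun v : E => ((⟪y, v⟫ * ⟪y', v⟫ : ℝ) : ℂ)) (w + 2) := by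
  have hy' := (isThetaKernel_one hE hw).inner_mul (y := y') (by simp)
  simpa using hy'.inner_mul (y := y) fun x t => by
    simp [inner_add_right, real_inner_smul_right, real_inner_comm, h]

end ThetaKernel

section ModularForms

open UpperHalfPlane hiding I
open Complex (differentiableOn_tsum_of_summable_norm)
open ModularForm EisensteinSeries MatrixGroups
open Function.Periodic (qParam norm_qParam)
open scoped Manifold ArithmeticFunction.sigma

lemma mdifferentiable_of_hasSum_qParam {f : ℍ → ℂ} {a : ℕ → ℂ}
    (hf : ∀ τ : ℍ, HasSum (fun m => a m • qParam 1 τ ^ m) (f τ)) : MDiff f := by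
  rw [UpperHalfPlane.mdifferentiable_iff]
  intro z hz
  have hz' : 0 < z.im := hz
  have hopen : IsOpen {w : ℂ | z.im / 2 < w.im} := isOpen_lt continuous_const Complex.continuous_im
  have hdiff : DifferentiableOn ℂ (fun w : ℂ => ∑' m, a m • qParam 1 w ^ m)
      {w : ℂ | z.im / 2 < w.im} := by
    let τ₀ : ℍ := ⟨((z.im / 2 : ℝ) : ℂ) * Complex.I, by simp [hz']⟩
    have him : (τ₀ : ℂ).im = z.im / 2 := by simp [τ₀]
    refine differentiableOn_tsum_of_summable_norm (u := fun m => ‖a m • qParam 1 τ₀ ^ m‖)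
      (hf τ₀).summable.norm (fun m => ?_) hopen fun m w hw => ?_
    · have : Differentiable ℂ (qParam 1) := by
        unfold qParam
        fun_prop
      exact ((this.pow m).const_smul (a m)).differentiableOn
    · simp only [norm_smul, norm_pow, norm_qParam, him]
      have hexp : Real.exp (-2 * Real.pi * w.im / 1) ≤ Real.exp (-2 * Real.pi * (z.im / 2) / 1) :=
        Real.exp_le_exp.2 (by nlinarith [Real.pi_pos, Set.mem_ofPred_eq ▸ hw])
      gcongr
  have hat : DifferentiableAt ℂ (fun w : ℂ => ∑' m, a m • qParam 1 w ^ m) z :=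
    hdiff.differentiableAt (hopen.mem_nhds (by simpa using hz'))
  refine (hat.congr_of_eventuallyEq ?_).differentiableWithinAt
  filter_upwards [isOpen_upperHalfPlaneSet.mem_nhds hz] with w hw
  rw [Function.comp_apply, ofComplex_apply_of_im_pos hw]
  exact (hf ⟨w, hw⟩).tsum_eq.symm

lemma slash_T_eq_of_hasSum_qParam {f : ℍ → ℂ} {a : ℕ → ℂ} (k : ℤ)
    (hf : ∀ τ : ℍ, HasSum (fun m => a m • qParam 1 τ ^ m) (f τ)) :
    f ∣[k] ModularGroup.T = f := by
  ext τ
  have hshift : f (ModularGroup.T • τ) = f τ := by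
    refine (hf _).unique ?_
    convert hf τ using 4
    rw [UpperHalfPlane.modular_T_smul, UpperHalfPlane.coe_vadd, add_comm, Complex.ofReal_one]
    simpa [qParam, mul_add] using Complex.exp_periodic (2 * Real.pi * Complex.I * (τ : ℂ))
  have hdenom : denom ((ModularGroup.T : SL(2, ℤ)) : GL (Fin 2) ℝ) τ = 1 := by simp [denom]
  rw [SL_slash_apply, hshift, hdenom, one_zpow, mul_one]

lemma slash_S_eq_of_apply_S_smul {f : ℍ → ℂ} {k : ℕ}
    (hS : ∀ τ : ℍ, f (ModularGroup.S • τ) = (τ : ℂ) ^ k * f τ) :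
    f ∣[(k : ℤ)] ModularGroup.S = f := by
  ext τ
  have hτ : (τ : ℂ) ≠ 0 := τ.ne_zero
  rw [SL_slash_apply, hS, ModularGroup.denom_S τ, zpow_neg, zpow_natCast]
  field_simp

theorem exists_modularForm_of_hasSum_qParam {f : ℍ → ℂ} {a : ℕ → ℂ} (k : ℕ)
    (hf : ∀ τ : ℍ, HasSum (fun m => a m • qParam 1 τ ^ m) (f τ))
    (hS : ∀ τ : ℍ, f (ModularGroup.S • τ) = (τ : ℂ) ^ k * f τ) :
    ∃ F : ModularForm 𝒮ℒ (k : ℤ), ∀ m, (qExpansion 1 F).coeff m = a m := by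
  have hslash := SlashInvariantForm.slash_action_generators_SL2Z (slash_S_eq_of_apply_S_smul hS)
    (slash_T_eq_of_hasSum_qParam k hf)
  let F : ModularForm 𝒮ℒ (k : ℤ) :=
    { toFun := f
      slash_action_eq' := by
        rintro _ ⟨γ, rfl⟩
        exact hslash γ
      holo' := mdifferentiable_of_hasSum_qParam hf
      bdd_at_cusps' := by
        intro c hc
        rw [Subgroup.IsArithmetic.isCusp_iff_isCusp_SL2Z] at hc
        rw [OnePoint.isBoundedAt_iff_forall_SL2Z hc]
        intro γ _
        rw [hslash γ]
        exact isBoundedAtImInfty_of_hasSum_qExpansion one_pos hf }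
  exact ⟨F, fun m =>
    (ModularFormClass.qExpansion_coeff_unique (f := F) one_pos one_mem_strictPeriods_SL hf m).symm⟩

lemma modularForm_weight_fourteen_eq_zero (F : ModularForm 𝒮ℒ ((14 : ℕ) : ℤ))
    (h0 : (qExpansion 1 F).coeff 0 = 0) : F = 0 := by
  suffices CuspForm.discriminantEquiv (ModularForm.toCuspForm F h0) = 0 by
    simpa [CuspForm.discriminantEquiv.map_eq_zero_iff, DFunLike.ext_iff]
  exact rank_zero_iff_forall_zero.mp (by exact levelOne_weight_two_rank_zero) _

lemma coeff_qExpansion_E₄ (m : ℕ) :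
    (qExpansion 1 E₄).coeff m = if m = 0 then 1 else 240 * (σ 3 m : ℂ) := by
  have hbernoulli : bernoulli 4 = -1 / 30 := by
    rw [bernoulli_eq_bernoulli'_of_ne_one (by norm_num), bernoulli'_four]
  rw [E_qExpansion_coeff _ ⟨2, rfl⟩, hbernoulli]
  norm_num

lemma coeff_qExpansion_E₆ (m : ℕ) :
    (qExpansion 1 E₆).coeff m = if m = 0 then 1 else -504 * (σ 5 m : ℂ) := by
  have hbernoulli : bernoulli 6 = 1 / 42 := by decide +kernel
  rw [E_qExpansion_coeff _ ⟨3, rfl⟩, hbernoulli]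
  norm_num

/-- The modular form `7/12 E₄³ + 5/12 E₆² = 1 + 0 q + ⋯`, which is the theta series of every
rootless even unimodular lattice of dimension 24. -/
def leechTheta : ModularForm 𝒮ℒ ((12 : ℕ) : ℤ) :=
  (7 / 12 : ℂ) • ModularForm.mcast (by decide) (E₄.pow 3) +
    (5 / 12 : ℂ) • ModularForm.mcast (by decide) (E₆.pow 2)

lemma coeff_qExpansion_leechTheta (m : ℕ) :
    (qExpansion 1 leechTheta).coeff m =
      7 / 12 * (qExpansion 1 E₄ * qExpansion 1 E₄ * qExpansion 1 E₄).coeff m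
        + 5 / 12 * (qExpansion 1 E₆ * qExpansion 1 E₆).coeff m := by
  rw [leechTheta, FunLike.coe_add,
    ModularForm.qExpansion_add one_pos one_mem_strictPeriods_SL, FunLike.coe_smul,
    FunLike.coe_smul, ModularForm.qExpansion_smul one_pos one_mem_strictPeriods_SL,
    ModularForm.qExpansion_smul one_pos one_mem_strictPeriods_SL, coe_mcast, coe_mcast,
    ModularForm.qExpansion_pow one_pos one_mem_strictPeriods_SL,
    ModularForm.qExpansion_pow one_pos one_mem_strictPeriods_SL]
  simp [pow_succ]

lemma coeff_qExpansion_leechTheta_values :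
    (qExpansion 1 leechTheta).coeff 0 = 1 ∧ (qExpansion 1 leechTheta).coeff 1 = 0 ∧
      (qExpansion 1 leechTheta).coeff 2 = 196560 ∧
      (qExpansion 1 leechTheta).coeff 3 = 16773120 ∧
      (qExpansion 1 leechTheta).coeff 4 = 398034000 := by
  have hσ₃ : σ 3 1 = 1 ∧ σ 3 2 = 9 ∧ σ 3 3 = 28 ∧ σ 3 4 = 73 := by decide
  have hσ₅ : σ 5 1 = 1 ∧ σ 5 2 = 33 ∧ σ 5 3 = 244 ∧ σ 5 4 = 1057 := by decide
  norm_num [coeff_qExpansion_leechTheta, PowerSeries.coeff_mul,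
    Finset.Nat.antidiagonal_succ, coeff_qExpansion_E₄, coeff_qExpansion_E₆, hσ₃, hσ₅,
    -PowerSeries.coeff_zero_eq_constantCoeff]

lemma eq_leechTheta (F : ModularForm 𝒮ℒ ((12 : ℕ) : ℤ)) (h0 : (qExpansion 1 F).coeff 0 = 1)
    (h1 : (qExpansion 1 F).coeff 1 = 0) : F = leechTheta := by
  rw [← sub_eq_zero]
  apply sturm_bound_levelOne_nat
  refine lt_of_lt_of_le (b := ((2 : ℕ) : ℕ∞)) (by norm_num) ?_
  refine PowerSeries.nat_le_order _ _ fun i hi => ?_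
  obtain ⟨hcoeff0, hcoeff1, _⟩ := coeff_qExpansion_leechTheta_values
  rw [FunLike.coe_sub, ModularForm.qExpansion_sub one_pos one_mem_strictPeriods_SL, map_sub]
  interval_cases i
  · rw [h0, hcoeff0, sub_self]
  · rw [h1, hcoeff1, sub_self]

end ModularForms

section EvenUnimodular

open scoped RealInnerProductSpace

variable {E : Type*} [NormedAddCommGroup E] [InnerProductSpace ℝ E]

/-- Even unimodular lattices. That `K` is discrete and spans `E` follows from the two conditions. -/
structure IsEvenUnimodular (K : Submodule ℤ E) : Prop where
  even : ∀ x ∈ K, ∃ n : ℤ, ‖x‖ ^ 2 = 2 * n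
  mem_of_forall_inner : ∀ x : E, (∀ y ∈ K, ∃ n : ℤ, ⟪x, y⟫ = n) → x ∈ K

/-- The vectors of norm `⟪x, x⟫ = 2n` in `K`. -/
def shell (K : Submodule ℤ E) (n : ℕ) : Set E := {x | x ∈ K ∧ ‖x‖ ^ 2 = 2 * n}

namespace IsEvenUnimodular

variable {K : Submodule ℤ E}

lemma exists_inner_eq_intCast (hK : IsEvenUnimodular K) {x y : E} (hx : x ∈ K) (hy : y ∈ K) :
    ∃ n : ℤ, ⟪x, y⟫ = n := by
  obtain ⟨a, ha⟩ := hK.even x hx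
  obtain ⟨b, hb⟩ := hK.even y hy
  obtain ⟨c, hc⟩ := hK.even (x + y) (K.add_mem hx hy)
  have := norm_add_sq_real x y
  exact ⟨c - a - b, by push_cast; linarith⟩

lemma isSelfDual (hK : IsEvenUnimodular K) : IsSelfDual K := fun x =>
  ⟨fun hx _ hy => hK.exists_inner_eq_intCast hx hy, hK.mem_of_forall_inner x⟩

lemma exists_norm_sq_eq_two_mul_natCast (hK : IsEvenUnimodular K) {x : E} (hx : x ∈ K) :
    ∃ n : ℕ, ‖x‖ ^ 2 = 2 * n := by
  obtain ⟨n, hn⟩ := hK.even x hx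
  have hn0 : 0 ≤ n := by
    have : (0 : ℝ) ≤ 2 * n := hn ▸ sq_nonneg _
    exact_mod_cast (by linarith : (0 : ℝ) ≤ n)
  lift n to ℕ using hn0
  exact ⟨n, by exact_mod_cast hn⟩

lemma two_le_norm_sq (hK : IsEvenUnimodular K) {x : E} (hx : x ∈ K) (hx0 : x ≠ 0) :
    2 ≤ ‖x‖ ^ 2 := by
  obtain ⟨n, hn⟩ := hK.exists_norm_sq_eq_two_mul_natCast hx
  have hpos : (0 : ℝ) < n := by linarith [pow_pos (norm_pos_iff.2 hx0) 2]
  have hone : (1 : ℝ) ≤ n := by exact_mod_cast hpos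
  linarith

lemma discreteTopology (hK : IsEvenUnimodular K) : DiscreteTopology K := by
  refine DiscreteTopology.of_forall_le_dist (r := 1) one_pos fun x y hxy => ?_
  have hsq := hK.two_le_norm_sq (K.sub_mem x.2 y.2)
    (sub_ne_zero.2 fun h => hxy (Subtype.ext h))
  beta_reduce
  rw [Subtype.dist_eq, dist_eq_norm]
  nlinarith [norm_nonneg ((x : E) - y)]

variable [FiniteDimensional ℝ E]

/- A vector orthogonal to `K` would have all its multiples in `K`. -/
lemma isZLattice [DiscreteTopology K] (hK : IsEvenUnimodular K) : IsZLattice ℝ K := by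
  refine ⟨Submodule.orthogonal_eq_bot_iff.1 ((Submodule.eq_bot_iff _).2 fun x hx => ?_)⟩
  by_contra hx0
  have hmem (t : ℝ) : t • x ∈ K := by
    refine hK.mem_of_forall_inner _ fun y hy => ⟨0, ?_⟩
    rw [real_inner_smul_left, real_inner_comm,
      (Submodule.mem_orthogonal _ _).1 hx y (Submodule.subset_span hy)]
    simp
  have hunit := hK.two_le_norm_sq (hmem (1 / ‖x‖)) (by simp [hx0])
  rw [norm_smul] at hunit
  simp [norm_ne_zero_iff.2 hx0] at hunit

lemma finite_inter_closedBall (hK : IsEvenUnimodular K) (c : E) (r : ℝ) :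
    ((K : Set E) ∩ Metric.closedBall c r).Finite := by
  have := hK.discreteTopology
  rw [Set.inter_comm]
  exact Metric.finite_isBounded_inter_isClosed DiscreteTopology.isDiscrete
    Metric.isBounded_closedBall (AddSubgroup.isClosed_of_discrete (H := K.toAddSubgroup))

lemma finite_shell (hK : IsEvenUnimodular K) (n : ℕ) : (shell K n).Finite := by
  refine (hK.finite_inter_closedBall 0 (√(2 * n))).subset fun x hx => ⟨hx.1, ?_⟩
  rw [mem_closedBall_zero_iff]
  exact Real.le_sqrt_of_sq_le hx.2.le

end IsEvenUnimodular

end EvenUnimodular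

section Theta

open UpperHalfPlane hiding I
open ModularForm MatrixGroups
open Complex (I)
open Function.Periodic (qParam)
open scoped RealInnerProductSpace

variable {E : Type*} [NormedAddCommGroup E]

lemma gaussian_neg_I_mul (τ : ℂ) {x : E} {n : ℕ} (hx : ‖x‖ ^ 2 = 2 * n) :
    gaussian (-I * τ) x = qParam 1 τ ^ n := by
  have hx' : (‖x‖ : ℂ) ^ 2 = 2 * n := by exact_mod_cast hx
  rw [gaussian, qParam, ← Complex.exp_nat_mul, hx']
  push_cast
  ring_nf

namespace IsEvenUnimodular

variable [InnerProductSpace ℝ E] {K : Submodule ℤ E}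

lemma bijective_sigma_shell (hK : IsEvenUnimodular K) :
    Function.Bijective fun p : Σ n, shell K n => (⟨p.2, p.2.2.1⟩ : K) := by
  constructor
  · rintro ⟨m, x, hx⟩ ⟨n, y, hy⟩ h
    obtain rfl : x = y := congrArg Subtype.val h
    obtain rfl : m = n := by
      have : (2 * m : ℝ) = 2 * n := hx.2.symm.trans hy.2
      exact_mod_cast mul_left_cancel₀ two_ne_zero this
    rfl
  · rintro ⟨x, hx⟩
    obtain ⟨n, hn⟩ := hK.exists_norm_sq_eq_two_mul_natCast hx
    exact ⟨⟨n, x, hx, hn⟩, rfl⟩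

variable [FiniteDimensional ℝ E]

lemma toFinset_shell_zero (hK : IsEvenUnimodular K) : (hK.finite_shell 0).toFinset = {0} := by
  ext x
  suffices x = 0 → x ∈ K by simpa [shell]
  rintro rfl
  exact K.zero_mem

variable [MeasurableSpace E] [BorelSpace E] {P : E → ℂ} {w : ℕ}

lemma tsum_mul_gaussian_eq (hK : IsEvenUnimodular K) (hP : IsThetaKernel P w) {b : ℂ}
    (hb : 0 < b.re) :
    ∑' k : K, P k * gaussian b (k : E) =
      ((I * b) ^ w)⁻¹ * ∑' k : K, P k * gaussian (1 / b) (k : E) := by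
  have := hK.discreteTopology
  have := hK.isZLattice
  have hb' : 0 < (1 / b).re := by
    rw [one_div, Complex.inv_re]
    exact div_pos hb (Complex.normSq_pos.2 (by rintro rfl; simp at hb))
  have hpoisson := hK.isSelfDual.tsum_eq_tsum_fourier (f := fun v => P v * gaussian b v)
    (Nat.lt_succ_self _) (hP.temperate.1.continuous.mul (continuous_gaussian b))
    (hasDecay_mul_gaussian hP.temperate hb _)
  rw [funext (hP.fourier_mul_gaussian b hb), tsum_mul_left] at hpoisson
  exact hpoisson ((hasDecay_mul_gaussian hP.temperate hb' _).const_mul _)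

lemma hasSum_theta_qParam (hK : IsEvenUnimodular K) (hP : IsThetaKernel P w) (τ : ℍ) :
    HasSum (fun n => (∑ x ∈ (hK.finite_shell n).toFinset, P x) • qParam 1 τ ^ n)
      (∑' k : K, P k * gaussian (-I * τ) (k : E)) := by
  have := hK.discreteTopology
  have := hK.isZLattice
  have hre : 0 < (-I * (τ : ℂ)).re := by simpa using τ.im_pos
  have hsum : Summable fun k : K => P k * gaussian (-I * τ) (k : E) :=
    (hasDecay_mul_gaussian hP.temperate hre _).summable (Nat.lt_succ_self _)
  have hsigma := (Equiv.ofBijective _ hK.bijective_sigma_shell).hasSum_iff.2 hsum.hasSum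
  refine hsigma.sigma fun n => ?_
  have hshell := (hK.finite_shell n).toFinset.hasSum fun x => P x * gaussian (-I * τ) x
  rw [(hK.finite_shell n).coe_toFinset] at hshell
  rw [smul_eq_mul, Finset.sum_mul, Finset.sum_congr rfl fun x hx => by
    rw [← gaussian_neg_I_mul (τ : ℂ) ((hK.finite_shell n).mem_toFinset.1 hx).2]]
  exact hshell

theorem exists_modularForm_coeff_eq_sum_shell (hK : IsEvenUnimodular K) (hP : IsThetaKernel P w) :
    ∃ F : ModularForm 𝒮ℒ (w : ℤ), ∀ n,
      (qExpansion 1 F).coeff n = ∑ x ∈ (hK.finite_shell n).toFinset, P x := by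
  refine exists_modularForm_of_hasSum_qParam w (hK.hasSum_theta_qParam hP) fun τ => ?_
  have hre : 0 < (-I * (τ : ℂ)).re := by simpa using τ.im_pos
  have hτ : (τ : ℂ) ≠ 0 := τ.ne_zero
  have hS : 1 / (-I * (τ : ℂ)) = -I * ((ModularGroup.S • τ : ℍ) : ℂ) := by
    rw [UpperHalfPlane.modular_S_smul]
    simp only [neg_mul, one_div, inv_neg, mul_inv_rev, Complex.inv_I, mul_neg, neg_neg]
    field_simp
  have hIτ : I * (-I * (τ : ℂ)) = τ := by rw [← mul_assoc]; simp
  rw [hK.tsum_mul_gaussian_eq hP hre, hS, hIτ, mul_inv_cancel_left₀ (pow_ne_zero _ hτ)]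

end IsEvenUnimodular

end Theta

section Design

open ModularForm MatrixGroups UpperHalfPlane
open scoped RealInnerProductSpace

variable {E : Type*} [NormedAddCommGroup E] [InnerProductSpace ℝ E] [FiniteDimensional ℝ E]
  {K : Submodule ℤ E}

namespace IsEvenUnimodular

lemma ncard_shell_of_shell_one_eq_empty (hK : IsEvenUnimodular K)
    (hE : Module.finrank ℝ E = 24) (hroot : shell K 1 = ∅) :
    (shell K 2).ncard = 196560 ∧ (shell K 3).ncard = 16773120 ∧ (shell K 4).ncard = 398034000 := by
  borelize E
  obtain ⟨F, hF⟩ := hK.exists_modularForm_coeff_eq_sum_shell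
    (isThetaKernel_one (w := 12) hE (by norm_num))
  have hcard (n : ℕ) : (qExpansion 1 F).coeff n = ((shell K n).ncard : ℂ) := by
    rw [hF, Set.ncard_eq_toFinset_card _ (hK.finite_shell n)]
    simp
  obtain rfl := eq_leechTheta F (by rw [hF, hK.toFinset_shell_zero]; simp)
    (by rw [hcard, hroot]; simp)
  obtain ⟨-, -, h2, h3, h4⟩ := coeff_qExpansion_leechTheta_values
  rw [hcard] at h2 h3 h4
  exact ⟨by exact_mod_cast h2, by exact_mod_cast h3, by exact_mod_cast h4⟩

lemma sum_shell_inner_mul_inner_eq_zero (hK : IsEvenUnimodular K)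
    (hE : Module.finrank ℝ E = 24) {y y' : E} (h : ⟪y, y'⟫ = 0) (n : ℕ) :
    ∑ x ∈ (hK.finite_shell n).toFinset, ⟪y, x⟫ * ⟪y', x⟫ = 0 := by
  borelize E
  obtain ⟨F, hF⟩ := hK.exists_modularForm_coeff_eq_sum_shell
    (isThetaKernel_inner_mul_inner (w := 12) hE (by norm_num) h)
  obtain rfl := modularForm_weight_fourteen_eq_zero F (by
    rw [hF, hK.toFinset_shell_zero]
    simp)
  have hcoeff := hF n
  rw [FunLike.coe_zero, qExpansion_zero, map_zero] at hcoeff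
  exact_mod_cast hcoeff.symm

/- Polarization: for `‖u‖ = ‖v‖` the vectors `u + v` and `u - v` are orthogonal. -/
theorem exists_sum_shell_inner_sq_eq (hK : IsEvenUnimodular K)
    (hE : Module.finrank ℝ E = 24) (n : ℕ) :
    ∃ c : ℝ, ∀ y : E, ∑ x ∈ (hK.finite_shell n).toFinset, ⟪y, x⟫ ^ 2 = c * ⟪y, y⟫ := by
  have : Nontrivial E := Module.nontrivial_of_finrank_pos (R := ℝ) (by omega)
  obtain ⟨e, he⟩ := exists_norm_eq E zero_le_one
  have hnorm (u v : E) (huv : ‖u‖ = ‖v‖) : ∑ x ∈ (hK.finite_shell n).toFinset, ⟪u, x⟫ ^ 2 =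
      ∑ x ∈ (hK.finite_shell n).toFinset, ⟪v, x⟫ ^ 2 := by
    rw [← sub_eq_zero, ← Finset.sum_sub_distrib, ← hK.sum_shell_inner_mul_inner_eq_zero hE
      ((real_inner_add_sub_eq_zero_iff u v).2 huv) n]
    refine Finset.sum_congr rfl fun x _ => ?_
    rw [inner_add_left, inner_sub_left]
    ring
  refine ⟨∑ x ∈ (hK.finite_shell n).toFinset, ⟪e, x⟫ ^ 2, fun y => ?_⟩
  rw [hnorm y (‖y‖ • e) (by simp [norm_smul, he]), real_inner_self_eq_norm_sq, Finset.sum_mul]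
  refine Finset.sum_congr rfl fun x _ => ?_
  rw [real_inner_smul_left]
  ring

end IsEvenUnimodular

end Design

section ModTwo

open scoped RealInnerProductSpace

lemma exists_sub_eq_two_zsmul {M : Type*} [AddCommGroup M] {K : Submodule ℤ M} {x y : K}
    (h : ModN.mkQ 2 x = ModN.mkQ 2 y) : ∃ m ∈ K, (x : M) - y = (2 : ℤ) • m := by
  obtain ⟨m, hm⟩ := (Submodule.Quotient.eq _).1 h
  exact ⟨m, m.2, by simpa using congrArg Subtype.val hm.symm⟩

variable {E : Type*} [NormedAddCommGroup E] [InnerProductSpace ℝ E] {K : Submodule ℤ E}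

lemma norm_two_zsmul_sq (x : E) : ‖(2 : ℤ) • x‖ ^ 2 = 4 * ‖x‖ ^ 2 := by
  rw [← Int.cast_smul_eq_zsmul ℝ, norm_smul, mul_pow]
  norm_num

lemma card_le_two_mul_finrank_of_pairwise_orthogonal [FiniteDimensional ℝ E] (F : Finset E)
    (h0 : ∀ x ∈ F, x ≠ 0) (hF : ∀ x ∈ F, ∀ y ∈ F, x = y ∨ x = -y ∨ ⟪x, y⟫ = 0) :
    F.card ≤ 2 * Module.finrank ℝ E := by
  classical
  obtain ⟨A, hAF, hspan, hli⟩ := exists_linearIndependent ℝ (F : Set E)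
  lift A to Finset E using F.finite_toSet.subset hAF
  have hA : A.card ≤ Module.finrank ℝ E := by simpa using hli.fintype_card_le_finrank
  have hsub : F ⊆ A ∪ A.image Neg.neg := by
    intro x hx
    by_contra hxA
    simp only [Finset.mem_union, Finset.mem_image, not_or, not_exists, not_and] at hxA
    have horth : (A : Set E) ⊆ (ℝ ∙ x)ᗮ := fun a ha => by
      rw [SetLike.mem_coe, Submodule.mem_orthogonal_singleton_iff_inner_right]
      rcases hF x hx a (hAF ha) with rfl | h | h
      exacts [absurd ha hxA.1, absurd h.symm (hxA.2 a ha), h]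
    have hxspan : x ∈ Submodule.span ℝ (A : Set E) := hspan ▸ Submodule.subset_span hx
    exact h0 x hx (inner_self_eq_zero.1 (Submodule.mem_orthogonal_singleton_iff_inner_right.1
      (Submodule.span_le.2 horth hxspan)))
  calc F.card ≤ (A ∪ A.image Neg.neg).card := Finset.card_le_card hsub
    _ ≤ A.card + (A.image Neg.neg).card := Finset.card_union_le _ _
    _ ≤ A.card + A.card := Nat.add_le_add_left Finset.card_image_le _
    _ ≤ 2 * Module.finrank ℝ E := by omega

/-- The classes modulo `2K` that meet the shell of norm `2n`. -/
def shellClasses (K : Submodule ℤ E) (n : ℕ) : Set (ModN K 2) :=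
  ModN.mkQ 2 '' {x : K | (x : E) ∈ shell K n}

namespace IsEvenUnimodular

lemma four_le_norm_sq (hK : IsEvenUnimodular K) (hroot : shell K 1 = ∅) {x : E} (hx : x ∈ K)
    (hx0 : x ≠ 0) : 4 ≤ ‖x‖ ^ 2 := by
  obtain ⟨n, hn⟩ := hK.exists_norm_sq_eq_two_mul_natCast hx
  have hn0 : n ≠ 0 := by
    rintro rfl
    simp_all
  have hn1 : n ≠ 1 := by
    rintro rfl
    exact Set.notMem_empty x (hroot ▸ ⟨hx, hn⟩)
  have hn2 : (2 : ℝ) ≤ n := by exact_mod_cast (by omega : 2 ≤ n)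
  linarith

lemma eq_or_eq_neg_or_inner_eq_zero (hK : IsEvenUnimodular K) (hroot : shell K 1 = ∅)
    {x y m : E} (hy : y ∈ K) (hm : m ∈ K) (h : x - y = (2 : ℤ) • m) (hx8 : ‖x‖ ^ 2 ≤ 8)
    (hy8 : ‖y‖ ^ 2 ≤ 8) : x = y ∨ x = -y ∨ (⟪x, y⟫ = 0 ∧ ‖x‖ ^ 2 = 8 ∧ ‖y‖ ^ 2 = 8) := by
  by_contra! hne
  have h' : x + y = (2 : ℤ) • (m + y) := by rw [smul_add, ← h, two_smul]; abel
  have hm0 : m ≠ 0 := by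
    rintro rfl
    exact hne.1 (sub_eq_zero.1 (by simpa using h))
  have hmy0 : m + y ≠ 0 := by
    intro h0
    exact hne.2.1 (eq_neg_of_add_eq_zero_left (by simpa [h0] using h'))
  have hsub : 16 ≤ ‖x - y‖ ^ 2 := by
    rw [h, norm_two_zsmul_sq]
    linarith [hK.four_le_norm_sq hroot hm hm0]
  have hadd : 16 ≤ ‖x + y‖ ^ 2 := by
    rw [h', norm_two_zsmul_sq]
    linarith [hK.four_le_norm_sq hroot (K.add_mem hm hy) hmy0]
  rw [norm_sub_sq_real] at hsub
  rw [norm_add_sq_real] at hadd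
  exact hne.2.2 (by linarith) (by linarith) (by linarith)

lemma disjoint_shellClasses (hK : IsEvenUnimodular K) (hroot : shell K 1 = ∅) {m n : ℕ}
    (hm : m ≤ 4) (hn : n ≤ 4) (hmn : m ≠ n) :
    Disjoint (shellClasses K m) (shellClasses K n) := by
  rw [Set.disjoint_left]
  rintro _ ⟨x, ⟨-, hx⟩, rfl⟩ ⟨y, ⟨-, hy⟩, hxy⟩
  obtain ⟨k, hk, hkxy⟩ := exists_sub_eq_two_zsmul hxy.symm
  have hm' : (m : ℝ) ≤ 4 := by exact_mod_cast hm
  have hn' : (n : ℝ) ≤ 4 := by exact_mod_cast hn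
  have hnorm : ‖(x : E)‖ ^ 2 = ‖(y : E)‖ ^ 2 := by
    rcases hK.eq_or_eq_neg_or_inner_eq_zero hroot y.2 hk hkxy (by linarith) (by linarith)
      with h | h | ⟨-, hx8, hy8⟩
    · rw [h]
    · rw [h, norm_neg]
    · rw [hx8, hy8]
  exact hmn (by exact_mod_cast (by linarith : (m : ℝ) = n))

variable [FiniteDimensional ℝ E]

lemma ncard_shell_le_mul_ncard_shellClasses (hK : IsEvenUnimodular K) {n c : ℕ}
    (hc : ∀ F : Finset E, (∀ x ∈ F, x ∈ shell K n) →
      (∀ x ∈ F, ∀ y ∈ F, ∃ m ∈ K, x - y = (2 : ℤ) • m) → F.card ≤ c) :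
    (shell K n).ncard ≤ c * (shellClasses K n).ncard := by
  classical
  have hfin : {x : K | (x : E) ∈ shell K n}.Finite :=
    (hK.finite_shell n).preimage Subtype.val_injective.injOn
  have hcard : (shell K n).ncard = hfin.toFinset.card := by
    rw [← Set.ncard_eq_toFinset_card _ hfin]
    exact (Set.ncard_preimage_of_injective_subset_range Subtype.val_injective
      fun x hx => ⟨⟨x, hx.1⟩, rfl⟩).symm
  have himage : shellClasses K n = (hfin.toFinset.image (ModN.mkQ 2) : Set (ModN K 2)) := by
    simp [shellClasses]
  rw [hcard, himage, Set.ncard_coe_finset]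
  refine Finset.card_le_mul_card_image _ _ fun κ _ => ?_
  rw [← Finset.card_map (Function.Embedding.subtype (· ∈ K))]
  refine hc _ (fun x hx => ?_) fun x hx y hy => ?_
  · obtain ⟨x, hxκ, rfl⟩ := Finset.mem_map.1 hx
    exact hfin.mem_toFinset.1 (Finset.mem_filter.1 hxκ).1
  · obtain ⟨x, hxκ, rfl⟩ := Finset.mem_map.1 hx
    obtain ⟨y, hyκ, rfl⟩ := Finset.mem_map.1 hy
    exact exists_sub_eq_two_zsmul
      ((Finset.mem_filter.1 hxκ).2.trans (Finset.mem_filter.1 hyκ).2.symm)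

lemma ncard_shell_le_two_mul (hK : IsEvenUnimodular K) (hroot : shell K 1 = ∅) {n : ℕ}
    (hn : n < 4) : (shell K n).ncard ≤ 2 * (shellClasses K n).ncard := by
  classical
  refine hK.ncard_shell_le_mul_ncard_shellClasses fun F hF hcongr => ?_
  rcases F.eq_empty_or_nonempty with rfl | ⟨x, hx⟩
  · simp
  refine (Finset.card_le_card (t := {x, -x}) fun y hy => ?_).trans Finset.card_le_two
  obtain ⟨m, hm, hmyx⟩ := hcongr y hy x hx
  have hn' : (n : ℝ) < 4 := by exact_mod_cast hn
  rcases hK.eq_or_eq_neg_or_inner_eq_zero hroot (hF x hx).1 hm hmyx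
    (by linarith [(hF y hy).2]) (by linarith [(hF x hx).2]) with h | h | ⟨-, -, h⟩
  · simp [h]
  · simp [h]
  · linarith [(hF x hx).2]

lemma ncard_shell_four_le (hK : IsEvenUnimodular K) (hroot : shell K 1 = ∅) :
    (shell K 4).ncard ≤ 2 * Module.finrank ℝ E * (shellClasses K 4).ncard := by
  refine hK.ncard_shell_le_mul_ncard_shellClasses fun F hF hcongr => ?_
  have hnorm (x : E) (hx : x ∈ F) : ‖x‖ ^ 2 = 8 := (hF x hx).2.trans (by norm_num)
  refine card_le_two_mul_finrank_of_pairwise_orthogonal F ?_ fun x hx y hy => ?_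
  · rintro _ hx rfl
    simpa using hnorm 0 hx
  · obtain ⟨m, hm, hmxy⟩ := hcongr x hx y hy
    have := hK.eq_or_eq_neg_or_inner_eq_zero hroot (hF y hy).1 hm hmxy (hnorm x hx).le
      (hnorm y hy).le
    tauto

/- The classes of the shells of norm `0, 4, 6, 8` already account for
`1 + 196560 / 2 + 16773120 / 2 + 398034000 / 48 = 2²⁴` classes. -/
lemma union_shellClasses_eq_univ (hK : IsEvenUnimodular K) (hE : Module.finrank ℝ E = 24)
    (hroot : shell K 1 = ∅) :
    shellClasses K 0 ∪ shellClasses K 2 ∪ shellClasses K 3 ∪ shellClasses K 4 = Set.univ := by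
  have := hK.discreteTopology
  have := hK.isZLattice
  have hcard : (Set.univ : Set (ModN K 2)).ncard = 2 ^ 24 := by
    rw [Set.ncard_univ, ModN.natCard_eq, ZLattice.rank ℝ K, hE]
  obtain ⟨h2, h3, h4⟩ := hK.ncard_shell_of_shell_one_eq_empty hE hroot
  have hcl2 := hK.ncard_shell_le_two_mul hroot (n := 2) (by norm_num)
  have hcl3 := hK.ncard_shell_le_two_mul hroot (n := 3) (by norm_num)
  have hcl4 := hK.ncard_shell_four_le hroot
  rw [hE] at hcl4
  have hcl0 : 0 < (shellClasses K 0).ncard :=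
    (Set.ncard_pos (Set.toFinite _)).2 ⟨_, 0, ⟨K.zero_mem, by simp⟩, rfl⟩
  refine Set.eq_of_subset_of_ncard_le (Set.subset_univ _) ?_ (Set.toFinite _)
  rw [Set.ncard_union_eq, Set.ncard_union_eq, Set.ncard_union_eq, hcard]
  · omega
  all_goals simp [hK.disjoint_shellClasses hroot]

theorem exists_norm_sq_le_eight (hK : IsEvenUnimodular K) (hE : Module.finrank ℝ E = 24)
    (hroot : shell K 1 = ∅) {x : E} (hx : x ∈ K) :
    ∃ y ∈ K, ‖y‖ ^ 2 ≤ 8 ∧ ∃ m ∈ K, x - y = (2 : ℤ) • m := by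
  have hmem : ModN.mkQ 2 (⟨x, hx⟩ : K) ∈
      shellClasses K 0 ∪ shellClasses K 2 ∪ shellClasses K 3 ∪ shellClasses K 4 := by
    rw [hK.union_shellClasses_eq_univ hE hroot]
    exact Set.mem_univ _
  rcases hmem with ((⟨y, hy, hxy⟩ | ⟨y, hy, hxy⟩) | ⟨y, hy, hxy⟩) | ⟨y, hy, hxy⟩
  all_goals exact ⟨y, y.2, hy.2.trans_le (by norm_num), exists_sub_eq_two_zsmul hxy.symm⟩

end IsEvenUnimodular

end ModTwo

section Holes

open scoped RealInnerProductSpace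

variable {E : Type*} [NormedAddCommGroup E] [InnerProductSpace ℝ E]

/-- `c` is a hole of radius `R` of the point set `S`: no point of `S` is closer to `c` than `R`,
and the points of `S` at distance `R` (the vertices of the hole) surround `c`. -/
structure IsHole (S : Set E) (c : E) (R : ℝ) : Prop where
  le_norm_sub : ∀ v ∈ S, R ≤ ‖v - c‖
  mem_convexHull : c ∈ convexHull ℝ {v ∈ S | ‖v - c‖ = R}

lemma exists_forall_infDist_le [FiniteDimensional ℝ E] (K : Submodule ℤ E) [DiscreteTopology K]
    [IsZLattice ℝ K] :
    ∃ c : E, ∀ x, Metric.infDist x (K : Set E) ≤ Metric.infDist c (K : Set E) := by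
  have hK0 : (K : Set E).Nonempty := ⟨0, K.zero_mem⟩
  let B := (Module.Free.chooseBasis ℤ K).ofZLatticeBasis ℝ K
  have hB : Submodule.span ℤ (Set.range B) = K := Module.Basis.ofZLatticeBasis_span ℝ K _
  obtain ⟨c, -, hc⟩ := (ZSpan.fundamentalDomain_isBounded B).isCompact_closure.exists_isMaxOn
    ⟨_, subset_closure (ZSpan.fract_mem_fundamentalDomain B 0)⟩
    (Metric.continuous_infDist_pt (K : Set E)).continuousOn
  refine ⟨c, fun x => le_trans ?_ (hc (subset_closure (ZSpan.fract_mem_fundamentalDomain B x)))⟩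
  refine (Metric.le_infDist hK0).2 fun y hy => ?_
  have hdist : dist (ZSpan.fract B x) y = dist x (y + ZSpan.floor B x) := by
    rw [ZSpan.fract_apply, dist_eq_norm, dist_eq_norm, sub_sub, add_comm]
  rw [hdist]
  exact Metric.infDist_le_dist_of_mem (K.add_mem hy (hB.le (ZSpan.floor B x).2))

lemma exists_forall_inner_sub_neg_of_notMem_convexHull [CompleteSpace E] {S : Set E}
    (hS : S.Finite) {c : E} (hc : c ∉ convexHull ℝ S) : ∃ d : E, ∀ v ∈ S, ⟪d, v - c⟫ < 0 := by
  obtain ⟨f, u, hfS, hfc⟩ := geometric_hahn_banach_closed_point (convex_convexHull ℝ S)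
    (hS.isCompact_convexHull (𝕜 := ℝ)).isClosed hc
  refine ⟨(InnerProductSpace.toDual ℝ E).symm f, fun v hv => ?_⟩
  rw [InnerProductSpace.toDual_symm_apply, map_sub]
  linarith [hfS v (subset_convexHull ℝ S hv)]

lemma exists_pos_forall_add_le_norm_sub {E : Type*} [SeminormedAddCommGroup E] {S : Set E}
    {c : E} {R : ℝ} (hS : (S ∩ Metric.closedBall c (R + 1)).Finite) :
    ∃ δ > 0, ∀ v ∈ S, R < ‖v - c‖ → R + δ ≤ ‖v - c‖ := by
  have hT : {v ∈ S ∩ Metric.closedBall c (R + 1) | R < ‖v - c‖}.Finite :=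
    hS.subset (Set.sep_subset _ _)
  rcases Set.eq_empty_or_nonempty {v ∈ S ∩ Metric.closedBall c (R + 1) | R < ‖v - c‖}
    with hempty | hne
  · refine ⟨1, one_pos, fun v hv hRv => ?_⟩
    by_contra! hlt
    exact Set.notMem_empty v (hempty ▸ ⟨⟨hv, mem_closedBall_iff_norm.2 hlt.le⟩, hRv⟩)
  · obtain ⟨w, ⟨⟨-, hwR⟩, hRw⟩, hmin⟩ := Set.exists_min_image _ (fun v => ‖v - c‖) hT hne
    rw [mem_closedBall_iff_norm] at hwR
    refine ⟨‖w - c‖ - R, sub_pos.2 hRw, fun v hv hRv => ?_⟩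
    rcases le_total ‖v - c‖ (R + 1) with hle | hle
    · linarith [hmin v ⟨⟨hv, mem_closedBall_iff_norm.2 hle⟩, hRv⟩]
    · linarith

/- If `c` were not surrounded, moving it slightly away from its nearest points would increase its
distance from `S`. -/
lemma isHole_of_forall_infDist_le [FiniteDimensional ℝ E] {S : Set E}
    (hS : ∀ c r, (S ∩ Metric.closedBall c r).Finite) (hcl : IsClosed S) (hne : S.Nonempty) {c : E}
    (hc : ∀ x, Metric.infDist x S ≤ Metric.infDist c S) : IsHole S c (Metric.infDist c S) := by
  set R := Metric.infDist c S
  have hle : ∀ v ∈ S, R ≤ ‖v - c‖ := fun v hv => by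
    rw [← dist_eq_norm, dist_comm]
    exact Metric.infDist_le_dist_of_mem hv
  refine ⟨hle, by_contra fun hnot => ?_⟩
  have hfin : {v ∈ S | ‖v - c‖ = R}.Finite :=
    (hS c R).subset fun v hv => ⟨hv.1, mem_closedBall_iff_norm.2 hv.2.le⟩
  obtain ⟨d, hd⟩ := exists_forall_inner_sub_neg_of_notMem_convexHull hfin hnot
  obtain ⟨δ, hδ, hgap⟩ := exists_pos_forall_add_le_norm_sub (hS c (R + 1))
  set ε := δ / (‖d‖ + 1)
  have hε : 0 < ε := by positivity
  obtain ⟨v, hv, hdist⟩ := hcl.exists_infDist_eq_dist hne (c + ε • d)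
  have hvle : ‖v - c - ε • d‖ ≤ R := by
    rw [sub_sub, ← dist_eq_norm, dist_comm, ← hdist]
    exact hc _
  rcases (hle v hv).eq_or_lt with hvR | hvR
  · have hsq : ‖v - c - ε • d‖ ^ 2 = R ^ 2 - 2 * (ε * ⟪d, v - c⟫) + ‖ε • d‖ ^ 2 := by
      rw [norm_sub_sq_real, ← hvR, real_inner_smul_right, real_inner_comm]
    have hlt : ε * ⟪d, v - c⟫ < 0 := mul_neg_of_pos_of_neg hε (hd v ⟨hv, hvR.symm⟩)
    have : ‖v - c - ε • d‖ ^ 2 ≤ R ^ 2 := by gcongr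
    linarith [sq_nonneg ‖ε • d‖]
  · have htri : ‖v - c‖ ≤ ‖v - c - ε • d‖ + ‖ε • d‖ := norm_le_norm_sub_add _ _
    have hεd : ‖ε • d‖ < δ := by
      rw [norm_smul, Real.norm_of_nonneg hε.le, div_mul_eq_mul_div, div_lt_iff₀ (by positivity)]
      linarith
    linarith [hgap v hv hvR]

lemma exists_multiset_norm_sum_le {S : Set E} {c : E} (hc : c ∈ convexHull ℝ S) :
    ∃ C, ∀ k : ℕ, ∃ m : Multiset E, k ≤ m.card ∧ (∀ v ∈ m, v ∈ S) ∧
      ‖(m.map fun v => v - c).sum‖ ≤ C := by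
  obtain ⟨ι, _, p, y, hp0, hp1, hyS, hpc⟩ := mem_convexHull_iff_exists_fintype.1 hc
  refine ⟨∑ i, ‖y i - c‖, fun k => ?_⟩
  set N : ℝ := k + Fintype.card ι
  have hN : 0 ≤ N := by positivity
  have hle (i : ι) : (⌊N * p i⌋₊ : ℝ) ≤ N * p i := Nat.floor_le (mul_nonneg hN (hp0 i))
  have hlt (i : ι) : N * p i < ⌊N * p i⌋₊ + 1 := Nat.lt_floor_add_one _
  refine ⟨∑ i, Multiset.replicate ⌊N * p i⌋₊ (y i), ?_, fun v hv => ?_, ?_⟩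
  · have hsum : ∑ i, N * p i ≤ ∑ i, ((⌊N * p i⌋₊ : ℝ) + 1) :=
      Finset.sum_le_sum fun i _ => (hlt i).le
    rw [← Finset.mul_sum, hp1, Finset.sum_add_distrib] at hsum
    simp only [mul_one, Finset.sum_const, Finset.card_univ, nsmul_eq_mul] at hsum
    simp only [Multiset.card_sum, Multiset.card_replicate]
    exact_mod_cast (add_le_add_iff_right _).1 hsum
  · obtain ⟨i, -, hi⟩ := Multiset.mem_sum.1 hv
    exact Multiset.eq_of_mem_replicate hi ▸ hyS i
  · have hzero : ∑ i, (N * p i) • (y i - c) = 0 := by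
      simp only [mul_smul, ← Finset.smul_sum, smul_sub, Finset.sum_sub_distrib, hpc,
        ← Finset.sum_smul, hp1, one_smul, sub_self]
    have hsum : (Multiset.map (fun v => v - c) (∑ i, Multiset.replicate ⌊N * p i⌋₊ (y i))).sum =
        ∑ i, ((⌊N * p i⌋₊ : ℝ) - N * p i) • (y i - c) := by
      simp only [sub_smul, Finset.sum_sub_distrib, hzero, sub_zero, ← Multiset.coe_mapAddMonoidHom,
        ← Multiset.coe_sumAddMonoidHom, map_sum]
      simp [Nat.cast_smul_eq_nsmul]
    rw [hsum]
    refine norm_sum_le_of_le _ fun i _ => ?_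
    rw [norm_smul]
    refine mul_le_of_le_one_left (norm_nonneg _) (abs_le.2 ⟨?_, ?_⟩)
    · linarith [hlt i]
    · linarith [hle i]

end Holes

section NullMultiset

open LinearMap (BilinForm)

variable {M : Type*} [AddCommGroup M] [Module ℝ M] {B : BilinForm ℝ M} {S : Set M}

lemma apply_add_add_self (hB : B.IsSymm) (v w : M) :
    B (v + w) (v + w) = B w w + 2 * B w v + B v v := by
  rw [map_add, map_add, LinearMap.add_apply, LinearMap.add_apply, hB.eq v w]
  ring

lemma exists_apply_sum_eq_intCast (hint : ∀ u ∈ S, ∀ v ∈ S, ∃ n : ℤ, B u v = n) {v : M}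
    (hv : v ∈ S) (m : Multiset M) (hm : ∀ u ∈ m, u ∈ S) : ∃ n : ℤ, B m.sum v = n := by
  induction m using Multiset.induction_on with
  | empty => exact ⟨0, by simp⟩
  | cons u m ih =>
    obtain ⟨n, hn⟩ := ih fun w hw => hm w (Multiset.mem_cons_of_mem hw)
    obtain ⟨k, hk⟩ := hint u (hm u (Multiset.mem_cons_self u m)) v hv
    exact ⟨k + n, by simp [hn, hk]⟩

lemma exists_apply_sum_sum_eq_two_mul (hB : B.IsSymm) (htwo : ∀ v ∈ S, B v v = 2)
    (hint : ∀ u ∈ S, ∀ v ∈ S, ∃ n : ℤ, B u v = n) (m : Multiset M) (hm : ∀ v ∈ m, v ∈ S) :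
    ∃ n : ℤ, B m.sum m.sum = 2 * n := by
  induction m using Multiset.induction_on with
  | empty => exact ⟨0, by simp⟩
  | cons v m ih =>
    have hv := hm v (Multiset.mem_cons_self v m)
    have hm' : ∀ w ∈ m, w ∈ S := fun w hw => hm w (Multiset.mem_cons_of_mem hw)
    obtain ⟨n, hn⟩ := ih hm'
    obtain ⟨k, hk⟩ := exists_apply_sum_eq_intCast hint hv m hm'
    refine ⟨n + k + 1, ?_⟩
    rw [Multiset.sum_cons, apply_add_add_self hB, hn, hk, htwo v hv]
    push_cast
    ring

lemma apply_sum_sum_nonneg_of_card_le_two (hB : B.IsSymm) (htwo : ∀ v ∈ S, B v v = 2)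
    (hge : ∀ u ∈ S, ∀ v ∈ S, -2 ≤ B u v) {m : Multiset M} (hm : ∀ v ∈ m, v ∈ S)
    (hcard : m.card ≤ 2) : 0 ≤ B m.sum m.sum := by
  interval_cases h : m.card
  · simp [Multiset.card_eq_zero.1 h]
  · obtain ⟨v, rfl⟩ := Multiset.card_eq_one.1 h
    simp [htwo v (hm v (by simp))]
  · obtain ⟨u, v, rfl⟩ := Multiset.card_eq_two.1 h
    have hu := hm u (by simp)
    have hv := hm v (by simp)
    rw [Multiset.insert_eq_cons, Multiset.sum_cons, Multiset.sum_singleton,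
      apply_add_add_self hB, htwo u hu, htwo v hv]
    linarith [hge v hv u hu]

lemma two_mul_apply_sum_le (hB : B.IsSymm) (htwo : ∀ v ∈ S, B v v = 2)
    (hint : ∀ u ∈ S, ∀ v ∈ S, ∃ n : ℤ, B u v = n) {v : M} (hv : v ∈ S) {m : Multiset M}
    (hm : ∀ u ∈ m, u ∈ S) (hpos : 0 < B m.sum m.sum) :
    2 * B (v ::ₘ m).sum v ≤ B (v ::ₘ m).sum (v ::ₘ m).sum := by
  obtain ⟨n, hn⟩ := exists_apply_sum_sum_eq_two_mul hB htwo hint m hm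
  have hn1 : (1 : ℝ) ≤ n := by
    have : (0 : ℝ) < n := by linarith
    exact_mod_cast this
  rw [Multiset.sum_cons, apply_add_add_self hB, map_add, LinearMap.add_apply, htwo v hv]
  linarith

lemma apply_sum_eq_zero_of_forall_two_mul_le (hB : B.IsSymm) (htwo : ∀ v ∈ S, B v v = 2)
    (hge : ∀ u ∈ S, ∀ v ∈ S, -2 ≤ B u v) {m : Multiset M} (hm : ∀ v ∈ m, v ∈ S)
    (hnonpos : B m.sum m.sum ≤ 0) (hle : ∀ v ∈ m, 2 * B m.sum v ≤ B m.sum m.sum) :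
    ∀ v ∈ m, B m.sum v = 0 := by
  have hsum : B m.sum m.sum = (m.map (B m.sum)).sum := map_multiset_sum _ _
  have hnull : B m.sum m.sum = 0 := by
    by_contra hne
    have hcard : ¬ m.card ≤ 2 := fun h =>
      hne (hnonpos.antisymm (apply_sum_sum_nonneg_of_card_le_two hB htwo hge hm h))
    have hcard' : (2 : ℝ) < m.card := by exact_mod_cast not_le.1 hcard
    have hbound := Multiset.sum_le_card_nsmul (m.map (B m.sum)) (B m.sum m.sum / 2) fun y hy => by
      obtain ⟨v, hv, rfl⟩ := Multiset.mem_map.1 hy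
      linarith [hle v hv]
    rw [← hsum, Multiset.card_map, nsmul_eq_mul] at hbound
    nlinarith [lt_of_le_of_ne hnonpos hne]
  intro v hv
  obtain ⟨m', hm'⟩ := Multiset.exists_cons_of_mem hv
  have hrest := Multiset.sum_le_card_nsmul (m'.map (B m.sum)) 0 fun y hy => by
    obtain ⟨w, hw, rfl⟩ := Multiset.mem_map.1 hy
    linarith [hle w (hm' ▸ Multiset.mem_cons_of_mem hw)]
  rw [smul_zero] at hrest
  have hsplit : B m.sum v + (m'.map (B m.sum)).sum = 0 := by
    rw [← hnull, hsum, ← Multiset.sum_cons, ← Multiset.map_cons, ← hm']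
  linarith [hle v hv]

/- A minimal configuration of nonpositive norm is an extended Dynkin diagram, `m'.sum` being its
null vector. -/
lemma exists_multiset_forall_apply_sum_eq_zero (hB : B.IsSymm) (htwo : ∀ v ∈ S, B v v = 2)
    (hint : ∀ u ∈ S, ∀ v ∈ S, ∃ n : ℤ, B u v = n) (hge : ∀ u ∈ S, ∀ v ∈ S, -2 ≤ B u v)
    {m : Multiset M} (hm0 : m ≠ 0) (hm : ∀ v ∈ m, v ∈ S) (hnonpos : B m.sum m.sum ≤ 0) :
    ∃ m' : Multiset M, m' ≠ 0 ∧ (∀ v ∈ m', v ∈ S) ∧ ∀ v ∈ m', B m'.sum v = 0 := by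
  induction h : m.card using Nat.strong_induction_on generalizing m with
  | _ n ih =>
  by_cases hmin : ∃ v m', m = v ::ₘ m' ∧ m' ≠ 0 ∧ B m'.sum m'.sum ≤ 0
  · obtain ⟨v, m', rfl, hm'0, hm'⟩ := hmin
    exact ih m'.card (by simp [← h]) hm'0 (fun w hw => hm w (Multiset.mem_cons_of_mem hw)) hm' rfl
  · push Not at hmin
    refine ⟨m, hm0, hm, apply_sum_eq_zero_of_forall_two_mul_le hB htwo hge hm hnonpos
      fun v hv => ?_⟩
    obtain ⟨m', rfl⟩ := Multiset.exists_cons_of_mem hv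
    have hm'0 : m' ≠ 0 := by
      rintro rfl
      simp only [Multiset.cons_zero, Multiset.sum_singleton, htwo v (hm v hv)] at hnonpos
      norm_num at hnonpos
    exact two_mul_apply_sum_le hB htwo hint (hm v hv)
      (fun w hw => hm w (Multiset.mem_cons_of_mem hw)) (hmin v m' rfl hm'0)

end NullMultiset

section DeepHoles

open scoped RealInnerProductSpace

variable {E : Type*} [NormedAddCommGroup E] [InnerProductSpace ℝ E]

/-- The form `a s t + ⟪x, y⟫` on `ℝ × E`, Lorentzian for `a < 0`. With `a = 2 - R ^ 2` the vertices
`v` of a hole of radius `R` and centre `c` become vectors `(1, v - c)` of norm `2`. -/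
def extendedForm (E : Type*) [NormedAddCommGroup E] [InnerProductSpace ℝ E] (a : ℝ) :
    LinearMap.BilinForm ℝ (ℝ × E) :=
  a • (LinearMap.mul ℝ ℝ).compl₁₂ (LinearMap.fst ℝ ℝ E) (LinearMap.fst ℝ ℝ E) +
    (innerₗ E).compl₁₂ (LinearMap.snd ℝ ℝ E) (LinearMap.snd ℝ ℝ E)

lemma extendedForm_apply (a : ℝ) (x y : ℝ × E) :
    extendedForm E a x y = a * (x.1 * y.1) + ⟪x.2, y.2⟫ := by
  simp [extendedForm]

lemma isSymm_extendedForm (a : ℝ) : (extendedForm E a).IsSymm :=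
  ⟨fun x y => by simp [extendedForm_apply, mul_comm x.1, real_inner_comm x.2]⟩

lemma sum_map_one_prodMk {ι M : Type*} [AddCommMonoid M] (m : Multiset ι) (f : ι → M) :
    (m.map fun v => ((1 : ℝ), f v)).sum = ((m.card : ℝ), (m.map f).sum) := by
  induction m using Multiset.induction_on with
  | empty => simp [Prod.zero_eq_mk]
  | cons v m ih => simp [ih, add_comm]

lemma extendedForm_vertex {c u v : E} {R : ℝ} (hu : ‖u - c‖ = R) (hv : ‖v - c‖ = R) :
    extendedForm E (2 - R ^ 2) (1, u - c) (1, v - c) = 2 - ‖u - v‖ ^ 2 / 2 := by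
  rw [extendedForm_apply, ← sub_sub_sub_cancel_right u v c, norm_sub_sq_real, hu, hv]
  ring

lemma IsHole.exists_multiset_extendedForm_nonpos {S : Set E} {c : E} {R : ℝ} (h : IsHole S c R)
    (hR : 2 < R ^ 2) : ∃ m : Multiset (ℝ × E), m ≠ 0 ∧
      (∀ w ∈ m, w ∈ (fun v => ((1 : ℝ), v - c)) '' {v ∈ S | ‖v - c‖ = R}) ∧
      extendedForm E (2 - R ^ 2) m.sum m.sum ≤ 0 := by
  obtain ⟨C, hC⟩ := exists_multiset_norm_sum_le h.mem_convexHull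
  obtain ⟨k, hk⟩ := exists_nat_ge (C ^ 2 / (R ^ 2 - 2))
  obtain ⟨m, hkm, hmS, hmC⟩ := hC (k + 1)
  refine ⟨m.map fun v => ((1 : ℝ), v - c), ?_, ?_, ?_⟩
  · rw [← Multiset.card_pos, Multiset.card_map]
    omega
  · intro w hw
    obtain ⟨v, hv, rfl⟩ := Multiset.mem_map.1 hw
    exact ⟨v, hmS v hv, rfl⟩
  · rw [sum_map_one_prodMk, extendedForm_apply, real_inner_self_eq_norm_sq]
    have hcard : (k : ℝ) + 1 ≤ m.card := by exact_mod_cast hkm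
    have hsq : (k : ℝ) ≤ m.card * m.card := by nlinarith [(Nat.cast_nonneg k : (0 : ℝ) ≤ k)]
    have hCsq : ‖(m.map fun v => v - c).sum‖ ^ 2 ≤ C ^ 2 := by gcongr
    have hkC : C ^ 2 ≤ k * (R ^ 2 - 2) := (div_le_iff₀ (by linarith)).1 hk
    nlinarith

namespace IsEvenUnimodular

variable [FiniteDimensional ℝ E] {K : Submodule ℤ E}

lemma exists_isHole (hK : IsEvenUnimodular K) {x : E} (hx : ∀ v ∈ K, 2 < ‖x - v‖ ^ 2) :
    ∃ c R, IsHole (K : Set E) c R ∧ 0 < R ∧ 2 < R ^ 2 := by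
  have := hK.discreteTopology
  have := hK.isZLattice
  have hne : (K : Set E).Nonempty := ⟨0, K.zero_mem⟩
  have hcl : IsClosed (K : Set E) := AddSubgroup.isClosed_of_discrete (H := K.toAddSubgroup)
  obtain ⟨c, hc⟩ := exists_forall_infDist_le K
  obtain ⟨v, hv, hdist⟩ := hcl.exists_infDist_eq_dist hne x
  have hsq : 2 < Metric.infDist c (K : Set E) ^ 2 := by
    refine (hx v hv).trans_le ?_
    rw [← dist_eq_norm, ← hdist]
    gcongr
    exacts [Metric.infDist_nonneg, hc x]
  have hnonneg : 0 ≤ Metric.infDist c (K : Set E) := Metric.infDist_nonneg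
  exact ⟨c, _, isHole_of_forall_infDist_le hK.finite_inter_closedBall hcl hne hc,
    by nlinarith, hsq⟩

lemma norm_sub_sq_le_eight (hK : IsEvenUnimodular K) (hE : Module.finrank ℝ E = 24)
    (hroot : shell K 1 = ∅) {c : E} {R : ℝ} (h : IsHole (K : Set E) c R) (hR : 0 < R) {u v : E}
    (hu : u ∈ K) (hv : v ∈ K) (huR : ‖u - c‖ = R) (hvR : ‖v - c‖ = R) : ‖u - v‖ ^ 2 ≤ 8 := by
  obtain ⟨y, hy, hy8, m, hm, hmy⟩ := hK.exists_norm_sq_le_eight hE hroot (K.sub_mem hu hv)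
  obtain rfl : y = u - v - (2 : ℤ) • m := by rw [← hmy, sub_sub_cancel]
  have hfst : R ^ 2 ≤ ‖v + m - c‖ ^ 2 := by
    gcongr
    exact h.le_norm_sub _ (K.add_mem hv hm)
  have hsnd : R ^ 2 ≤ ‖u - m - c‖ ^ 2 := by
    gcongr
    exact h.le_norm_sub _ (K.sub_mem hu hm)
  have hshift := parallelogram_law_with_norm ℝ (u - m - c) (v + m - c)
  have hvertex := parallelogram_law_with_norm ℝ (u - c) (v - c)
  have hsub : u - m - c - (v + m - c) = u - v - (2 : ℤ) • m := by rw [two_smul]; abel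
  have hadd : u - m - c + (v + m - c) = u - c + (v - c) := by abel
  rw [hsub, hadd] at hshift
  rw [sub_sub_sub_cancel_right, huR, hvR] at hvertex
  linarith

lemma exists_null_multiset (hK : IsEvenUnimodular K) (hE : Module.finrank ℝ E = 24)
    (hroot : shell K 1 = ∅) {c : E} {R : ℝ} (h : IsHole (K : Set E) c R) (hR : 0 < R)
    (hR2 : 2 < R ^ 2) : ∃ m : Multiset (ℝ × E), m ≠ 0 ∧
      (∀ w ∈ m, w ∈ (fun v => ((1 : ℝ), v - c)) '' {v ∈ (K : Set E) | ‖v - c‖ = R}) ∧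
      ∀ w ∈ m, extendedForm E (2 - R ^ 2) m.sum w = 0 := by
  obtain ⟨m, hm0, hm, hnonpos⟩ := h.exists_multiset_extendedForm_nonpos hR2
  refine exists_multiset_forall_apply_sum_eq_zero (isSymm_extendedForm _) ?_ ?_ ?_ hm0 hm hnonpos
  · rintro _ ⟨v, ⟨-, hv⟩, rfl⟩
    simp [extendedForm_vertex hv hv]
  · rintro _ ⟨u, ⟨huK, hu⟩, rfl⟩ _ ⟨v, ⟨hvK, hv⟩, rfl⟩
    obtain ⟨n, hn⟩ := hK.even _ (K.sub_mem huK hvK)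
    refine ⟨2 - n, ?_⟩
    rw [extendedForm_vertex hu hv, hn]
    push_cast
    ring
  · rintro _ ⟨u, ⟨huK, hu⟩, rfl⟩ _ ⟨v, ⟨hvK, hv⟩, rfl⟩
    rw [extendedForm_vertex hu hv]
    linarith [hK.norm_sub_sq_le_eight hE hroot h hR huK hvK hu hv]

end IsEvenUnimodular

/- The centre `c` projects to the point `c - d` at distance `√2` from the vertices of the null
configuration. -/
lemma norm_add_sq_eq_two_of_extendedForm_eq_zero {c v M d : E} {R h : ℝ} (hh : h ≠ 0)
    (hd : M = -(h • d)) (hv : ‖v - c‖ = R)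
    (hself : extendedForm E (2 - R ^ 2) (h, M) (h, M) = 0)
    (hvM : extendedForm E (2 - R ^ 2) (h, M) (1, v - c) = 0) :
    ‖d‖ ^ 2 = R ^ 2 - 2 ∧ ‖v - c + d‖ ^ 2 = 2 := by
  rw [extendedForm_apply] at hself hvM
  simp only [hd, inner_neg_left, inner_neg_right, real_inner_smul_left, real_inner_smul_right]
    at hself hvM
  have hdn : ‖d‖ ^ 2 = R ^ 2 - 2 := by
    rw [← real_inner_self_eq_norm_sq]
    exact mul_left_cancel₀ (mul_ne_zero hh hh) (by linear_combination hself)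
  have hdv : ⟪d, v - c⟫ = 2 - R ^ 2 := mul_left_cancel₀ hh (by linear_combination -hvM)
  refine ⟨hdn, ?_⟩
  rw [norm_add_sq_real, real_inner_comm, hdv, hdn, hv]
  ring

lemma exists_sum_snd_eq_and_norm_add_sq_eq_two {c : E} {R : ℝ} {m : Multiset (ℝ × E)}
    (hm0 : m ≠ 0) (hm : ∀ w ∈ m, ∃ v, ‖v - c‖ = R ∧ w = (1, v - c))
    (hnull : ∀ w ∈ m, extendedForm E (2 - R ^ 2) m.sum w = 0) :
    ∃ d, m.sum.2 = -((m.card : ℝ) • d) ∧ ‖d‖ ^ 2 = R ^ 2 - 2 ∧ ∀ w ∈ m, ‖w.2 + d‖ ^ 2 = 2 := by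
  have hself : extendedForm E (2 - R ^ 2) m.sum m.sum = 0 := by
    rw [map_multiset_sum]
    exact Multiset.sum_eq_zero fun y hy => by
      obtain ⟨w, hw, rfl⟩ := Multiset.mem_map.1 hy
      exact hnull w hw
  have hone : ∀ w ∈ m, w.1 = 1 := fun w hw => by
    obtain ⟨v, -, rfl⟩ := hm w hw
    rfl
  have hfst : (m.map Prod.fst).sum = m.sum.1 := (map_multiset_sum (LinearMap.fst ℝ ℝ E) m).symm
  have hcard : m.sum.1 = m.card := by
    rw [← hfst, Multiset.map_congr rfl hone]
    simp
  have hcard0 : (m.card : ℝ) ≠ 0 := by simpa using hm0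
  have hsum : m.sum = ((m.card : ℝ), m.sum.2) := Prod.ext hcard rfl
  rw [hsum] at hself hnull
  obtain ⟨d, hd⟩ : ∃ d, m.sum.2 = -((m.card : ℝ) • d) :=
    ⟨-((m.card : ℝ)⁻¹ • m.sum.2), by rw [smul_neg, neg_neg, smul_inv_smul₀ hcard0]⟩
  have hvertex : ∀ w ∈ m, ‖d‖ ^ 2 = R ^ 2 - 2 ∧ ‖w.2 + d‖ ^ 2 = 2 := fun w hw => by
    obtain ⟨v, hvR, rfl⟩ := hm w hw
    exact norm_add_sq_eq_two_of_extendedForm_eq_zero hcard0 hd hvR hself (hnull _ hw)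
  obtain ⟨w₀, hw₀⟩ := Multiset.exists_mem_of_ne_zero hm0
  exact ⟨d, hd, (hvertex w₀ hw₀).1, fun w hw => (hvertex w hw).2⟩

namespace IsEvenUnimodular

variable [FiniteDimensional ℝ E] {K : Submodule ℤ E}

lemma exists_multiset_sum_eq_zero (hK : IsEvenUnimodular K) (hE : Module.finrank ℝ E = 24)
    (hroot : shell K 1 = ∅) {x : E} (hx : ∀ v ∈ K, 2 < ‖x - v‖ ^ 2) :
    ∃ (z d : E) (m : Multiset E), m ≠ 0 ∧ (∀ r ∈ m, z + r ∈ K ∧ ‖r‖ ^ 2 = 2) ∧ m.sum = 0 ∧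
      d ≠ 0 ∧ ∀ u ∈ K, ‖u - z‖ ^ 2 = 2 → ⟪u - z, d⟫ ≤ 0 := by
  obtain ⟨c, R, h, hR, hR2⟩ := hK.exists_isHole hx
  obtain ⟨m, hm0, hm, hnull⟩ := hK.exists_null_multiset hE hroot h hR hR2
  have hvertex : ∀ w ∈ m, ∃ v ∈ K, ‖v - c‖ = R ∧ w = (1, v - c) := fun w hw => by
    obtain ⟨v, ⟨hvK, hvR⟩, rfl⟩ := hm w hw
    exact ⟨v, hvK, hvR, rfl⟩
  obtain ⟨d, hdsum, hdn, hnorm⟩ := exists_sum_snd_eq_and_norm_add_sq_eq_two hm0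
    (fun w hw => (hvertex w hw).imp fun _ => And.right) hnull
  refine ⟨c - d, d, m.map fun w => w.2 + d, by simpa using hm0, ?_, ?_, ?_, fun u hu hu2 => ?_⟩
  · intro r hr
    obtain ⟨w, hw, rfl⟩ := Multiset.mem_map.1 hr
    refine ⟨?_, hnorm w hw⟩
    obtain ⟨v, hvK, -, rfl⟩ := hvertex w hw
    rwa [sub_add_add_cancel, add_sub_cancel]
  · have hsnd : (m.map Prod.snd).sum = m.sum.2 := (map_multiset_sum (LinearMap.snd ℝ ℝ E) m).symm
    rw [Multiset.sum_map_add, hsnd, hdsum]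
    simp [Nat.cast_smul_eq_nsmul]
  · intro hd0
    rw [hd0, norm_zero] at hdn
    linarith
  · have hRu : R ^ 2 ≤ ‖u - c‖ ^ 2 := by
      gcongr
      exact h.le_norm_sub u hu
    have heq : u - c = u - (c - d) - d := by abel
    rw [heq, norm_sub_sq_real, hu2, hdn] at hRu
    linarith

end IsEvenUnimodular

end DeepHoles

section Roots

open scoped RealInnerProductSpace

variable {E : Type*} [NormedAddCommGroup E] [InnerProductSpace ℝ E] [FiniteDimensional ℝ E]
  {K : Submodule ℤ E}

/-- A height function with values in `ℤ / h`, represented by integers in `[1, h - 1]`, on a root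
system `Φ`. The simple and the lowest roots of an irreducible system have height `1` for
`h` the Coxeter number. -/
structure IsCyclicHeight (Φ : Finset E) (ht : E → ℤ) (h : ℤ) : Prop where
  one_le : ∀ r ∈ Φ, 1 ≤ ht r
  neg : ∀ r ∈ Φ, ht (-r) = h - ht r
  add : ∀ r ∈ Φ, ∀ s ∈ Φ, r + s ∈ Φ → ht (r + s) = ht r + ht s ∨ ht (r + s) + h = ht r + ht s

namespace IsEvenUnimodular

/-- The vectors of norm `2`. -/
def roots (hK : IsEvenUnimodular K) : Finset E :=
  (hK.finite_shell 1).toFinset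

lemma mem_roots (hK : IsEvenUnimodular K) {r : E} : r ∈ hK.roots ↔ r ∈ K ∧ ‖r‖ ^ 2 = 2 := by
  simp [roots, shell]

lemma neg_mem_roots (hK : IsEvenUnimodular K) {r : E} : -r ∈ hK.roots ↔ r ∈ hK.roots := by
  simp [mem_roots]

lemma inner_self_of_mem_roots (hK : IsEvenUnimodular K) {r : E} (hr : r ∈ hK.roots) :
    ⟪r, r⟫ = 2 := by
  rw [real_inner_self_eq_norm_sq, (hK.mem_roots.1 hr).2]

lemma eq_or_inner_eq_one (hK : IsEvenUnimodular K) {r s : E} (hr : r ∈ hK.roots)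
    (hs : s ∈ hK.roots) (hpos : 0 < ⟪r, s⟫) : r = s ∨ ⟪r, s⟫ = 1 := by
  rw [mem_roots] at hr hs
  obtain ⟨n, hn⟩ := hK.exists_inner_eq_intCast hr.1 hs.1
  have hsub : ‖r - s‖ ^ 2 = 4 - 2 * n := by
    rw [norm_sub_sq_real, hr.2, hs.2, hn]
    ring
  have hn0 : 0 < n := by exact_mod_cast hn ▸ hpos
  have hn2 : n ≤ 2 := by
    have : (n : ℝ) ≤ 2 := by linarith [sq_nonneg ‖r - s‖]
    exact_mod_cast this
  obtain rfl | rfl : n = 1 ∨ n = 2 := by omega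
  · exact Or.inr (by simpa using hn)
  · left
    norm_num at hsub
    exact sub_eq_zero.1 hsub

open Classical in
/-- The roots `r` with `⟪r, r₀⟫ = 1`, that is, those for which `r₀ = r + (r₀ - r)` is a sum of two
roots. -/
def adjacentRoots (hK : IsEvenUnimodular K) (r₀ : E) : Finset E :=
  {r ∈ hK.roots | ⟪r, r₀⟫ = 1}

lemma mem_adjacentRoots (hK : IsEvenUnimodular K) {r r₀ : E} :
    r ∈ hK.adjacentRoots r₀ ↔ r ∈ hK.roots ∧ ⟪r, r₀⟫ = 1 :=
  Finset.mem_filter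

lemma sub_mem_adjacentRoots (hK : IsEvenUnimodular K) {r r₀ : E} (h₀ : r₀ ∈ hK.roots)
    (hr : r ∈ hK.adjacentRoots r₀) : r₀ - r ∈ hK.adjacentRoots r₀ := by
  rw [mem_adjacentRoots] at hr ⊢
  obtain ⟨hr, hrr₀⟩ := hr
  refine ⟨hK.mem_roots.2 ⟨K.sub_mem (hK.mem_roots.1 h₀).1 (hK.mem_roots.1 hr).1, ?_⟩, ?_⟩
  · rw [norm_sub_sq_real, (hK.mem_roots.1 h₀).2, (hK.mem_roots.1 hr).2, real_inner_comm, hrr₀]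
    norm_num
  · rw [inner_sub_left, hK.inner_self_of_mem_roots h₀, hrr₀]
    norm_num

open Classical in
lemma filter_inner_pos_roots (hK : IsEvenUnimodular K) {r₀ : E} (h₀ : r₀ ∈ hK.roots) :
    {r ∈ hK.roots | 0 < ⟪r, r₀⟫} = insert r₀ (hK.adjacentRoots r₀) := by
  ext r
  rw [Finset.mem_insert, Finset.mem_filter, mem_adjacentRoots]
  constructor
  · rintro ⟨hr, hpos⟩
    exact (hK.eq_or_inner_eq_one hr h₀ hpos).imp_right fun h => ⟨hr, h⟩
  · rintro (rfl | ⟨hr, hrr₀⟩)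
    · exact ⟨h₀, by rw [hK.inner_self_of_mem_roots h₀]; norm_num⟩
    · exact ⟨hr, by rw [hrr₀]; norm_num⟩

lemma sum_roots_eq_two_mul (hK : IsEvenUnimodular K) {r₀ : E} (h₀ : r₀ ∈ hK.roots) {F : E → ℝ}
    (hF : ∀ r ∈ hK.roots, F (-r) = F r) (hF0 : ∀ r ∈ hK.roots, ⟪r, r₀⟫ = 0 → F r = 0) :
    ∑ r ∈ hK.roots, F r = 2 * (F r₀ + ∑ r ∈ hK.adjacentRoots r₀, F r) := by
  classical
  have hnot : ∑ r ∈ hK.roots with ¬ 0 < ⟪r, r₀⟫, F r = ∑ r ∈ hK.roots with ⟪r, r₀⟫ < 0, F r := by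
    refine (Finset.sum_subset (fun r hr => ?_) fun r hr hr' => ?_).symm
    · rw [Finset.mem_filter] at hr ⊢
      exact ⟨hr.1, hr.2.le.not_gt⟩
    · rw [Finset.mem_filter] at hr hr'
      exact hF0 r hr.1 (by_contra fun hne => hr' ⟨hr.1, (not_lt.1 hr.2).lt_of_ne hne⟩)
  have hneg : ∑ r ∈ hK.roots with ⟪r, r₀⟫ < 0, F r = ∑ r ∈ hK.roots with 0 < ⟪r, r₀⟫, F r := by
    refine Finset.sum_nbij' Neg.neg Neg.neg ?_ ?_ (fun r _ => neg_neg r) (fun r _ => neg_neg r) ?_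
    · simp +contextual [neg_mem_roots]
    · simp +contextual [neg_mem_roots]
    · exact fun r hr => (hF r (Finset.mem_filter.1 hr).1).symm
  have hr₀ : r₀ ∉ hK.adjacentRoots r₀ := by
    rw [mem_adjacentRoots, hK.inner_self_of_mem_roots h₀]
    norm_num
  rw [← Finset.sum_filter_add_sum_filter_not _ fun r => 0 < ⟪r, r₀⟫, hnot, hneg,
    hK.filter_inner_pos_roots h₀, Finset.sum_insert hr₀, two_mul]

lemma card_adjacentRoots (hK : IsEvenUnimodular K) {c : ℝ}
    (hc : ∀ y, ∑ r ∈ hK.roots, ⟪y, r⟫ ^ 2 = c * ⟪y, y⟫) {r₀ : E} (h₀ : r₀ ∈ hK.roots) :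
    ((hK.adjacentRoots r₀).card : ℝ) = c - 4 := by
  have hsum := hK.sum_roots_eq_two_mul h₀ (F := fun r => ⟪r₀, r⟫ ^ 2)
    (fun r _ => by rw [inner_neg_right, neg_sq])
    fun r _ hr => by rw [real_inner_comm, hr, zero_pow two_ne_zero]
  have hone : ∀ r ∈ hK.adjacentRoots r₀, ⟪r₀, r⟫ ^ 2 = 1 := fun r hr => by
    rw [real_inner_comm, (hK.mem_adjacentRoots.1 hr).2, one_pow]
  rw [hc, Finset.sum_congr rfl hone, hK.inner_self_of_mem_roots h₀] at hsum
  simp only [Finset.sum_const, nsmul_eq_mul, mul_one] at hsum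
  linarith

open Classical in
/-- The roots `r` for which `r₀ = r + (r₀ - r)` is a decomposition along which the height is
additive. -/
def additiveParts (hK : IsEvenUnimodular K) (ht : E → ℤ) (r₀ : E) : Finset E :=
  {r ∈ hK.adjacentRoots r₀ | ht r + ht (r₀ - r) = ht r₀}

/-- The sum of the roots weighted by their height; its inner products with the roots are
controlled by Venkov's identity. -/
def heightVector (hK : IsEvenUnimodular K) (ht : E → ℤ) : E :=
  ∑ r ∈ hK.roots, (ht r : ℝ) • r

section Height

variable {ht : E → ℤ} {h : ℤ}

lemma two_mul_sum_adjacentRoots_height (hK : IsEvenUnimodular K)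
    (hht : IsCyclicHeight hK.roots ht h) {r₀ : E} (h₀ : r₀ ∈ hK.roots) :
    2 * ∑ r ∈ hK.adjacentRoots r₀, (ht r : ℝ) =
      (hK.adjacentRoots r₀).card * (ht r₀ + h) - h * (hK.additiveParts ht r₀).card := by
  classical
  have hreflect : ∑ r ∈ hK.adjacentRoots r₀, (ht r : ℝ) =
      ∑ r ∈ hK.adjacentRoots r₀, (ht (r₀ - r) : ℝ) :=
    Finset.sum_nbij' (r₀ - ·) (r₀ - ·) (fun r => hK.sub_mem_adjacentRoots h₀)
      (fun r => hK.sub_mem_adjacentRoots h₀) (fun r _ => sub_sub_cancel r₀ r)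
      (fun r _ => sub_sub_cancel r₀ r) fun r _ => by rw [sub_sub_cancel]
  have hterm : ∀ r ∈ hK.adjacentRoots r₀, (ht r + ht (r₀ - r) : ℝ) =
      ht r₀ + h - h * (if ht r + ht (r₀ - r) = ht r₀ then 1 else 0) := by
    intro r hr
    have hadd := hht.add r (hK.mem_adjacentRoots.1 hr).1 (r₀ - r)
      (hK.mem_adjacentRoots.1 (hK.sub_mem_adjacentRoots h₀ hr)).1
    rw [add_sub_cancel] at hadd
    split_ifs with heq
    · rw [mul_one, add_sub_cancel_right]
      exact_mod_cast heq
    · rw [mul_zero, sub_zero]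
      exact_mod_cast ((hadd h₀).resolve_left (Ne.symm heq)).symm
  rw [two_mul]
  nth_rewrite 2 [hreflect]
  rw [← Finset.sum_add_distrib, Finset.sum_congr rfl hterm, Finset.sum_sub_distrib,
    ← Finset.mul_sum, Finset.sum_boole, Finset.sum_const, nsmul_eq_mul]
  rfl

lemma two_mul_inner_heightVector (hK : IsEvenUnimodular K) (hht : IsCyclicHeight hK.roots ht h)
    (y : E) : 2 * ⟪hK.heightVector ht, y⟫ = ∑ r ∈ hK.roots, (2 * ht r - h) * ⟪r, y⟫ := by
  have hinner : ⟪hK.heightVector ht, y⟫ = ∑ r ∈ hK.roots, ht r * ⟪r, y⟫ := by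
    simp only [heightVector, sum_inner, real_inner_smul_left]
  have hneg : ∑ r ∈ hK.roots, ht r * ⟪r, y⟫ = ∑ r ∈ hK.roots, (h - ht r) * -⟪r, y⟫ := by
    refine Finset.sum_nbij' Neg.neg Neg.neg (fun r => hK.neg_mem_roots.2)
      (fun r => hK.neg_mem_roots.2) (fun r _ => neg_neg r) (fun r _ => neg_neg r) fun r hr => ?_
    rw [hht.neg r hr, inner_neg_left]
    push_cast
    ring
  rw [two_mul, hinner]
  nth_rewrite 2 [hneg]
  rw [← Finset.sum_add_distrib]
  exact Finset.sum_congr rfl fun r _ => by ring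

lemma inner_heightVector (hK : IsEvenUnimodular K) (hht : IsCyclicHeight hK.roots ht h) {c : ℝ}
    (hc : ∀ y, ∑ r ∈ hK.roots, ⟪y, r⟫ ^ 2 = c * ⟪y, y⟫) {r₀ : E} (h₀ : r₀ ∈ hK.roots) :
    ⟪hK.heightVector ht, r₀⟫ = c * ht r₀ - 2 * h - h * (hK.additiveParts ht r₀).card := by
  have hsplit := hK.sum_roots_eq_two_mul h₀ (F := fun r => (2 * ht r - h) * ⟪r, r₀⟫)
    (fun r hr => by simp only [hht.neg r hr, inner_neg_left]; push_cast; ring)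
    fun r _ hr => by simp only [hr, mul_zero]
  have hadj : ∑ r ∈ hK.adjacentRoots r₀, (2 * ht r - h) * ⟪r, r₀⟫ =
      2 * ∑ r ∈ hK.adjacentRoots r₀, (ht r : ℝ) - (hK.adjacentRoots r₀).card * h := by
    rw [Finset.mul_sum, ← nsmul_eq_mul, ← Finset.sum_const, ← Finset.sum_sub_distrib]
    exact Finset.sum_congr rfl fun r hr => by rw [(hK.mem_adjacentRoots.1 hr).2, mul_one]
  rw [← hK.two_mul_inner_heightVector hht, hadj, hK.two_mul_sum_adjacentRoots_height hht h₀,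
    hK.inner_self_of_mem_roots h₀, hK.card_adjacentRoots hc h₀] at hsplit
  linarith

lemma exists_add_eq_of_mem_additiveParts (hK : IsEvenUnimodular K) {r r₀ : E}
    (h₀ : r₀ ∈ hK.roots) (hr : r ∈ hK.additiveParts ht r₀) :
    r ∈ hK.roots ∧ r₀ - r ∈ hK.roots ∧ ht r + ht (r₀ - r) = ht r₀ := by
  obtain ⟨hr, hadd⟩ := Finset.mem_filter.1 hr
  exact ⟨(hK.mem_adjacentRoots.1 hr).1,
    (hK.mem_adjacentRoots.1 (hK.sub_mem_adjacentRoots h₀ hr)).1, hadd⟩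

lemma additiveParts_eq_empty (hK : IsEvenUnimodular K) (hht : IsCyclicHeight hK.roots ht h)
    {r₀ : E} (h₀ : r₀ ∈ hK.roots) (hht₀ : ht r₀ = 1) : hK.additiveParts ht r₀ = ∅ := by
  refine Finset.eq_empty_of_forall_notMem fun r hr => ?_
  obtain ⟨hr, hr', hadd⟩ := hK.exists_add_eq_of_mem_additiveParts h₀ hr
  have := hht.one_le r hr
  have := hht.one_le _ hr'
  omega

lemma eq_two_mul_of_sum_eq_zero (hK : IsEvenUnimodular K) (hht : IsCyclicHeight hK.roots ht h)
    {c : ℝ} (hc : ∀ y, ∑ r ∈ hK.roots, ⟪y, r⟫ ^ 2 = c * ⟪y, y⟫) {m : Multiset E} (hm0 : m ≠ 0)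
    (hm : ∀ r ∈ m, r ∈ hK.roots ∧ ht r = 1) (hsum : m.sum = 0) : c = 2 * h := by
  have hconst : ∀ r ∈ m, innerₗ E (hK.heightVector ht) r = c - 2 * h := fun r hr => by
    rw [innerₗ_apply_apply, hK.inner_heightVector hht hc (hm r hr).1,
      hK.additiveParts_eq_empty hht (hm r hr).1 (hm r hr).2, (hm r hr).2]
    simp
  have hzero : innerₗ E (hK.heightVector ht) m.sum = 0 := by rw [hsum, map_zero]
  rw [map_multiset_sum, Multiset.map_congr rfl hconst, Multiset.map_const', Multiset.sum_replicate,
    nsmul_eq_mul] at hzero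
  have hcard : (m.card : ℝ) ≠ 0 := by simpa using hm0
  linarith [(mul_eq_zero.1 hzero).resolve_left hcard]

lemma inner_heightVector_nonneg (hK : IsEvenUnimodular K) (hht : IsCyclicHeight hK.roots ht h)
    (hh : 0 < h) (hc : ∀ y, ∑ r ∈ hK.roots, ⟪y, r⟫ ^ 2 = 2 * h * ⟪y, y⟫) {r₀ : E}
    (h₀ : r₀ ∈ hK.roots) : 0 ≤ ⟪hK.heightVector ht, r₀⟫ ∧ (⟪hK.heightVector ht, r₀⟫ = 0 →
      r₀ ∈ AddSubmonoid.closure {r | r ∈ hK.roots ∧ ht r = 1}) := by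
  induction hn : (ht r₀).toNat using Nat.strong_induction_on generalizing r₀ with
  | _ n ih =>
  have hht₀ := hht.one_le r₀ h₀
  rcases (hK.additiveParts ht r₀).eq_empty_or_nonempty with hempty | ⟨r, hr⟩
  · have hinner : ⟪hK.heightVector ht, r₀⟫ = 2 * h * (ht r₀ - 1) := by
      rw [hK.inner_heightVector hht hc h₀, hempty, Finset.card_empty, Nat.cast_zero]
      ring
    have hhR : (0 : ℝ) < 2 * h := by exact_mod_cast (by omega : 0 < 2 * h)
    rw [hinner]
    refine ⟨mul_nonneg hhR.le (sub_nonneg.2 (by exact_mod_cast hht₀)), fun hzero => ?_⟩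
    have hone : (ht r₀ : ℝ) = 1 := sub_eq_zero.1 ((mul_eq_zero.1 hzero).resolve_left hhR.ne')
    exact AddSubmonoid.subset_closure ⟨h₀, by exact_mod_cast hone⟩
  · obtain ⟨hr, hr', hadd⟩ := hK.exists_add_eq_of_mem_additiveParts h₀ hr
    have := hht.one_le r hr
    have := hht.one_le _ hr'
    obtain ⟨hnonneg, hmem⟩ := ih (ht r).toNat (by omega) hr rfl
    obtain ⟨hnonneg', hmem'⟩ := ih (ht (r₀ - r)).toNat (by omega) hr' rfl
    have hsum : ⟪hK.heightVector ht, r₀⟫ =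
        ⟪hK.heightVector ht, r⟫ + ⟪hK.heightVector ht, r₀ - r⟫ := by
      rw [← inner_add_right, add_sub_cancel]
    refine ⟨by linarith, fun hzero => ?_⟩
    rw [← add_sub_cancel r r₀]
    exact add_mem (hmem (by linarith)) (hmem' (by linarith))

lemma mem_closure_height_one (hK : IsEvenUnimodular K) (hE : Module.finrank ℝ E = 24)
    (hht : IsCyclicHeight hK.roots ht h) {m : Multiset E} (hm0 : m ≠ 0)
    (hm : ∀ r ∈ m, r ∈ hK.roots ∧ ht r = 1) (hsum : m.sum = 0) {r₀ : E} (h₀ : r₀ ∈ hK.roots) :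
    r₀ ∈ AddSubmonoid.closure {r | r ∈ hK.roots ∧ ht r = 1} := by
  obtain ⟨c, hc⟩ := hK.exists_sum_shell_inner_sq_eq hE 1
  obtain rfl := hK.eq_two_mul_of_sum_eq_zero hht hc hm0 hm hsum
  have hh : 0 < h := by
    have := hht.one_le r₀ h₀
    have := hht.one_le (-r₀) (hK.neg_mem_roots.2 h₀)
    rw [hht.neg r₀ h₀] at this
    omega
  obtain ⟨hpos, hmem⟩ := hK.inner_heightVector_nonneg hht hh hc h₀
  obtain ⟨hneg, -⟩ := hK.inner_heightVector_nonneg hht hh hc (hK.neg_mem_roots.2 h₀)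
  rw [inner_neg_right] at hneg
  exact hmem (by linarith)

end Height

end IsEvenUnimodular

end Roots

section Neighbours

lemma exists_forall_eq_intCast_mul {A : Type*} [AddCommGroup A] (f : A →+ ℝ) {h : ℤ} (hh : h ≠ 0)
    (hf : ∀ l, ∃ n : ℤ, h * f l = n) : ∃ (l₀ : A) (k₀ q : ℤ), q * (f l₀ + k₀) = 1 ∧
      ∀ l, ∃ t : ℤ, f l = t * (f l₀ + k₀) := by
  have hhR : (h : ℝ) ≠ 0 := Int.cast_ne_zero.2 hh
  let φ : A × ℤ →+ ℝ := (AddMonoidHom.mulLeft (h : ℝ)).comp (f.coprod (Int.castAddHom ℝ))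
  obtain ⟨e, he⟩ := Int.subgroup_cyclic (φ.range.comap (Int.castAddHom ℝ))
  have hmul : ∀ n : ℤ, (∃ l, ∃ k : ℤ, h * (f l + k) = n) → ∃ t : ℤ, t * e = n := by
    rintro n ⟨l, k, hn⟩
    have hmem : n ∈ φ.range.comap (Int.castAddHom ℝ) := ⟨(l, k), hn⟩
    rw [he, AddSubgroup.mem_closure_singleton] at hmem
    simpa only [smul_eq_mul] using hmem
  obtain ⟨⟨l₀, k₀⟩, he₀⟩ : e ∈ φ.range.comap (Int.castAddHom ℝ) :=
    he ▸ AddSubgroup.mem_closure_singleton_self e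
  replace he₀ : h * (f l₀ + k₀) = e := he₀
  obtain ⟨q, hq⟩ := hmul h ⟨0, 1, by simp⟩
  refine ⟨l₀, k₀, q, mul_left_cancel₀ hhR ?_, fun l => ?_⟩
  · rw [mul_left_comm, he₀, mul_one]
    exact_mod_cast hq
  · obtain ⟨n, hn⟩ := hf l
    obtain ⟨t, ht⟩ := hmul n ⟨l, 0, by simpa using hn⟩
    refine ⟨t, mul_left_cancel₀ hhR ?_⟩
    rw [hn, mul_left_comm, he₀]
    exact_mod_cast ht.symm

lemma exists_forall_sub_eq_intCast {A : Type*} [AddCommGroup A] (f g : A →+ ℝ) {h : ℤ} (hh : h ≠ 0)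
    (hf : ∀ l, ∃ n : ℤ, h * f l = n) (hfg : ∀ l, (∃ n : ℤ, f l = n) → ∃ n : ℤ, g l = n) :
    ∃ b : ℤ, ∀ l, ∃ n : ℤ, g l - b * f l = n := by
  obtain ⟨l₀, k₀, q, hq₀, hmul⟩ := exists_forall_eq_intCast_mul f hh hf
  obtain ⟨b, hb⟩ := hfg (q • l₀) ⟨1 - q * k₀, by
    rw [map_zsmul, zsmul_eq_mul]
    push_cast
    linarith⟩
  refine ⟨b, fun l => ?_⟩
  obtain ⟨t, hfl⟩ := hmul l
  obtain ⟨j, hj⟩ := hfg (l - t • l₀) ⟨t * k₀, by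
    rw [map_sub, map_zsmul, zsmul_eq_mul, hfl]
    push_cast
    ring⟩
  refine ⟨j, ?_⟩
  rw [map_sub, map_zsmul, zsmul_eq_mul] at hj
  rw [map_zsmul, zsmul_eq_mul] at hb
  rw [← hj, ← hb, hfl]
  linear_combination (-t * g l₀) * hq₀

variable {E : Type*} [NormedAddCommGroup E]

lemma exists_height_eq_emod {A : Type*} [AddGroup A] {G : AddSubgroup (A × ℤ)} {h : ℤ}
    (hG : ∀ a : ℤ, ((0 : A), a) ∈ G ↔ h ∣ a) :
    ∃ ht : A → ℤ, ∀ x a, (x, a) ∈ G → ht x = a % h ∧ (x, ht x) ∈ G := by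
  classical
  refine ⟨fun x => if hx : ∃ a, (x, a) ∈ G then hx.choose % h else 0, fun x a ha => ?_⟩
  have hx : ∃ a, (x, a) ∈ G := ⟨a, ha⟩
  have hsub := G.sub_mem hx.choose_spec ha
  rw [Prod.mk_sub_mk, sub_self, hG] at hsub
  have hemod : hx.choose % h = a % h := Int.emod_eq_emod_iff_emod_sub_eq_zero.2
    (Int.emod_eq_zero_of_dvd hsub)
  have hmul : ((0 : A), h * (a / h)) ∈ G := (hG _).2 (dvd_mul_right _ _)
  simp only [dif_pos hx, hemod, true_and]
  simpa [Int.emod_def] using G.sub_mem ha hmul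

lemma exists_isCyclicHeight {G : AddSubgroup (E × ℤ)} {h : ℤ} (hh : 0 < h)
    (hG : ∀ a : ℤ, ((0 : E), a) ∈ G ↔ h ∣ a) {Φ : Finset E}
    (hΦ : ∀ r ∈ Φ, (∃ a, (r, a) ∈ G) ∧ (r, 0) ∉ G) :
    ∃ ht : E → ℤ, IsCyclicHeight Φ ht h ∧ ∀ x a, (x, a) ∈ G → ht x = a % h ∧ (x, ht x) ∈ G := by
  obtain ⟨ht, hht⟩ := exists_height_eq_emod hG
  have hpos : ∀ r ∈ Φ, 1 ≤ ht r ∧ ht r < h ∧ (r, ht r) ∈ G := fun r hr => by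
    obtain ⟨⟨a, ha⟩, hr0⟩ := hΦ r hr
    obtain ⟨hemod, hmem⟩ := hht r a ha
    have hne : ht r ≠ 0 := fun h0 => hr0 (h0 ▸ hmem)
    have hnonneg := Int.emod_nonneg a hh.ne'
    have hlt := Int.emod_lt_of_pos a hh
    rw [← hemod] at hnonneg hlt
    exact ⟨by omega, hlt, hmem⟩
  refine ⟨ht, ⟨fun r hr => (hpos r hr).1, fun r hr => ?_, fun r hr s hs _ => ?_⟩, hht⟩
  · obtain ⟨h1, hlt, hr⟩ := hpos r hr
    have hneg : (-r, h - ht r) ∈ G := by simpa using G.sub_mem ((hG h).2 dvd_rfl) hr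
    rw [(hht _ _ hneg).1, Int.emod_eq_of_lt (by omega) (by omega)]
  · obtain ⟨hr1, hrlt, hr⟩ := hpos r hr
    obtain ⟨hs1, hslt, hs⟩ := hpos s hs
    rw [(hht _ _ (G.add_mem hr hs)).1]
    rcases lt_or_ge (ht r + ht s) h with hlt | hge
    · exact Or.inl (Int.emod_eq_of_lt (by omega) hlt)
    · right
      rw [← Int.sub_emod_right, Int.emod_eq_of_lt (by omega) (by omega), sub_add_cancel]

open scoped RealInnerProductSpace

variable [InnerProductSpace ℝ E] {K : Submodule ℤ E} {z : E}

/-- The pairs `(x, a)` such that `x` lies in the neighbour of `K` at `z` and `a • z` moves `x` into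
`K`; the integer `a` is then a height of `x`. -/
def neighbourGraph (K : Submodule ℤ E) (z : E) : AddSubgroup (E × ℤ) where
  carrier := {p | p.1 + (p.2 : ℝ) • z ∈ K ∧ ∃ n : ℤ, ⟪p.1, z⟫ + p.2 * ‖z‖ ^ 2 / 2 = n}
  zero_mem' := ⟨by simp, 0, by simp⟩
  add_mem' := by
    rintro ⟨x, a⟩ ⟨y, b⟩ ⟨hx, n, hn⟩ ⟨hy, k, hk⟩
    refine ⟨?_, n + k, ?_⟩
    · convert K.add_mem hx hy using 1
      push_cast [Prod.mk_add_mk]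
      module
    · rw [Prod.mk_add_mk, inner_add_left]
      push_cast
      linarith
  neg_mem' := by
    rintro ⟨x, a⟩ ⟨hx, n, hn⟩
    refine ⟨?_, -n, ?_⟩
    · convert K.neg_mem hx using 1
      push_cast [Prod.neg_mk]
      module
    · rw [Prod.neg_mk, inner_neg_left]
      push_cast
      linarith

/-- The neighbour of the lattice `K` at the point `z`: the projection of `neighbourGraph`. If `z`
has order `h` modulo `K`, it meets `K` in the vectors with integral inner product with `z`. -/
def neighbour (K : Submodule ℤ E) (z : E) : Submodule ℤ E :=
  ((neighbourGraph K z).map (AddMonoidHom.fst E ℤ)).toIntSubmodule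

lemma mem_neighbour {x : E} : x ∈ neighbour K z ↔ ∃ a, (x, a) ∈ neighbourGraph K z := by
  change x ∈ (neighbourGraph K z).map (AddMonoidHom.fst E ℤ) ↔ _
  simp

namespace IsEvenUnimodular

lemma mk_one_mem_neighbourGraph (hK : IsEvenUnimodular K) {r : E} (hr : z + r ∈ K)
    (hr2 : ‖r‖ ^ 2 = 2) : (r, 1) ∈ neighbourGraph K z := by
  obtain ⟨n, hn⟩ := hK.even _ hr
  refine ⟨by simpa [add_comm] using hr, n - 1, ?_⟩
  rw [norm_add_sq_real, hr2, real_inner_comm] at hn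
  push_cast
  linarith

lemma exists_add_smul_mem (hK : IsEvenUnimodular K) {h : ℤ} (hh : h ≠ 0)
    (hz : (h : ℝ) • z ∈ K) {y : E} (hy : ∀ l ∈ K, (∃ n : ℤ, ⟪l, z⟫ = n) → ∃ n : ℤ, ⟪y, l⟫ = n) :
    ∃ b : ℤ, y + (b : ℝ) • z ∈ K := by
  let inner (w : E) : K →+ ℝ := (innerₗ E w).toAddMonoidHom.comp K.subtype.toAddMonoidHom
  obtain ⟨b, hb⟩ := exists_forall_sub_eq_intCast (inner z) (inner y) hh
    (fun l => by simpa [inner, real_inner_smul_left] using hK.exists_inner_eq_intCast hz l.2)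
    (fun l ⟨n, hn⟩ => hy l l.2 ⟨n, by rw [real_inner_comm]; exact hn⟩)
  refine ⟨-b, hK.mem_of_forall_inner _ fun l hl => ?_⟩
  obtain ⟨n, hn⟩ := hb ⟨l, hl⟩
  refine ⟨n, ?_⟩
  rw [inner_add_left, real_inner_smul_left, ← hn]
  push_cast
  rw [neg_mul, ← sub_eq_add_neg]
  rfl

end IsEvenUnimodular

lemma IsEvenUnimodular.neighbour (hK : IsEvenUnimodular K) {h : ℤ} (hh : h ≠ 0)
    (hz : (h : ℝ) • z ∈ K) {r : E} (hr : z + r ∈ K) (hr2 : ‖r‖ ^ 2 = 2) :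
    IsEvenUnimodular (neighbour K z) where
  even x hx := by
    obtain ⟨a, hxa, n, hn⟩ := mem_neighbour.1 hx
    obtain ⟨k, hk⟩ := hK.even _ hxa
    refine ⟨k - a * n, ?_⟩
    rw [norm_add_sq_real, real_inner_smul_right, norm_smul, mul_pow, Real.norm_eq_abs,
      sq_abs] at hk
    push_cast
    rw [← hn]
    linarith
  mem_of_forall_inner y hy := by
    obtain ⟨b, hb⟩ := hK.exists_add_smul_mem hh hz (y := y) fun l hl ⟨n, hn⟩ =>
      hy l (mem_neighbour.2 ⟨0, by simpa using hl, n, by simpa using hn⟩)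
    have hr1 := hK.mk_one_mem_neighbourGraph hr hr2
    obtain ⟨k, hk⟩ := hy r (mem_neighbour.2 ⟨1, hr1⟩)
    obtain ⟨-, n, hn⟩ := hr1
    obtain ⟨j, hj⟩ := hK.exists_inner_eq_intCast hb hr
    refine mem_neighbour.2 ⟨b, hb, j - k - b * n, ?_⟩
    simp only [inner_add_left, inner_add_right, real_inner_smul_left,
      real_inner_self_eq_norm_sq, real_inner_comm r z] at hj hn ⊢
    push_cast at hn ⊢
    rw [← hj, ← hk, ← hn]
    ring

lemma mk_sum_card_mem {A : Type*} [AddCommGroup A] {G : AddSubgroup (A × ℤ)} {m : Multiset A}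
    (hm : ∀ r ∈ m, (r, 1) ∈ G) : (m.sum, (m.card : ℤ)) ∈ G := by
  induction m using Multiset.induction_on with
  | empty => exact G.zero_mem
  | cons a t ih =>
    have ha := hm a (Multiset.mem_cons_self a t)
    have ht := ih fun r hr => hm r (Multiset.mem_cons_of_mem hr)
    simpa [add_comm] using G.add_mem ha ht

lemma exists_pos_forall_dvd_iff_mem {S : AddSubgroup ℤ} {n : ℤ} (hn : n ∈ S) (hn0 : n ≠ 0) :
    ∃ h : ℤ, 0 < h ∧ ∀ a, a ∈ S ↔ h ∣ a := by
  obtain ⟨g, rfl⟩ := Int.subgroup_cyclic S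
  have hmem : ∀ a, a ∈ AddSubgroup.closure {g} ↔ |g| ∣ a := fun a => by
    rw [AddSubgroup.mem_closure_singleton, abs_dvd]
    exact exists_congr fun t => by rw [smul_eq_mul, mul_comm, eq_comm]
  refine ⟨|g|, abs_pos.2 fun hg => hn0 ?_, hmem⟩
  rwa [hmem, hg, abs_zero, zero_dvd_iff] at hn

namespace IsEvenUnimodular

variable [FiniteDimensional ℝ E]

/- By Venkov's identity the roots of an even unimodular lattice in dimension 24 span the space as
soon as there is one. -/
lemma eq_zero_of_forall_inner_roots_nonpos (hK : IsEvenUnimodular K)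
    (hE : Module.finrank ℝ E = 24) {r₀ : E} (h₀ : r₀ ∈ hK.roots) {d : E}
    (hd : ∀ r ∈ hK.roots, ⟪r, d⟫ ≤ 0) : d = 0 := by
  have horth : ∀ r ∈ hK.roots, ⟪d, r⟫ = 0 := fun r hr => by
    have hneg := hd _ (hK.neg_mem_roots.2 hr)
    rw [inner_neg_left] at hneg
    rw [real_inner_comm]
    linarith [hd r hr]
  obtain ⟨c, hc⟩ := hK.exists_sum_shell_inner_sq_eq hE 1
  have hc0 : c ≠ 0 := by
    rintro rfl
    have hsum := hc r₀
    rw [zero_mul, Finset.sum_eq_zero_iff_of_nonneg fun _ _ => by positivity] at hsum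
    have := hsum r₀ h₀
    rw [hK.inner_self_of_mem_roots h₀] at this
    norm_num at this
  have hdd := hc d
  rw [Finset.sum_eq_zero fun r hr => by rw [horth r hr, zero_pow two_ne_zero]] at hdd
  exact inner_self_eq_zero.1 ((mul_eq_zero.1 hdd.symm).resolve_left hc0)

lemma exists_isCyclicHeight_neighbour (hroot : shell K 1 = ∅)
    (hN : IsEvenUnimodular (Bimonster.neighbour K z)) {n : ℤ} (hn : (0, n) ∈ neighbourGraph K z)
    (hn0 : n ≠ 0) : ∃ (ht : E → ℤ) (h : ℤ), IsCyclicHeight hN.roots ht h ∧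
      (∀ r ∈ hN.roots, (r, 1) ∈ neighbourGraph K z ↔ ht r = 1) := by
  obtain ⟨h, hh, hdvd⟩ := exists_pos_forall_dvd_iff_mem
    (S := (neighbourGraph K z).comap (AddMonoidHom.inr E ℤ)) hn hn0
  have hΦ : ∀ r ∈ hN.roots, (∃ a, (r, a) ∈ neighbourGraph K z) ∧ (r, 0) ∉ neighbourGraph K z := by
    intro r hr
    obtain ⟨hrN, hr2⟩ := hN.mem_roots.1 hr
    refine ⟨mem_neighbour.1 hrN, fun hr0 => ?_⟩
    have : r ∈ shell K 1 := ⟨by simpa using hr0.1, by simpa using hr2⟩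
    simp [hroot] at this
  obtain ⟨ht, hcyc, hht⟩ := exists_isCyclicHeight hh hdvd hΦ
  refine ⟨ht, h, hcyc, fun r hr => ⟨fun hr1 => ?_, fun hr1 => ?_⟩⟩
  · have hpos := hcyc.one_le r hr
    have hpos' := hcyc.one_le (-r) (hN.neg_mem_roots.2 hr)
    rw [hcyc.neg r hr] at hpos'
    rw [(hht r 1 hr1).1, Int.emod_eq_of_lt one_pos.le (by omega)]
  · obtain ⟨a, ha⟩ := (hΦ r hr).1
    exact hr1 ▸ (hht r a ha).2

theorem exists_norm_sub_sq_le_two (hK : IsEvenUnimodular K) (hE : Module.finrank ℝ E = 24)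
    (hroot : shell K 1 = ∅) (x : E) : ∃ v ∈ K, ‖x - v‖ ^ 2 ≤ 2 := by
  by_contra! hx
  obtain ⟨z, d, m, hm0, hm, hsum, hd0, hd⟩ := hK.exists_multiset_sum_eq_zero hE hroot hx
  have hm1 : ∀ r ∈ m, (r, 1) ∈ neighbourGraph K z := fun r hr =>
    hK.mk_one_mem_neighbourGraph (hm r hr).1 (hm r hr).2
  have hcard : (0, (m.card : ℤ)) ∈ neighbourGraph K z := hsum ▸ mk_sum_card_mem hm1
  have hcard0 : (m.card : ℤ) ≠ 0 := by simpa using hm0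
  obtain ⟨r₀, hr₀⟩ := Multiset.exists_mem_of_ne_zero hm0
  have hN : IsEvenUnimodular (Bimonster.neighbour K z) :=
    hK.neighbour hcard0 (by simpa using hcard.1) (hm r₀ hr₀).1 (hm r₀ hr₀).2
  have hmN : ∀ r ∈ m, r ∈ hN.roots := fun r hr =>
    hN.mem_roots.2 ⟨mem_neighbour.2 ⟨1, hm1 r hr⟩, (hm r hr).2⟩
  obtain ⟨ht, h, hcyc, hht⟩ := exists_isCyclicHeight_neighbour hroot hN hcard hcard0
  have hle : ∀ s ∈ AddSubmonoid.closure {r | r ∈ hN.roots ∧ ht r = 1}, ⟪s, d⟫ ≤ 0 := by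
    intro s hs
    induction hs using AddSubmonoid.closure_induction with
    | mem r hr =>
      have hrK : r + z ∈ K := by simpa using ((hht r hr.1).2 hr.2).1
      simpa using hd (r + z) hrK (by simpa using (hN.mem_roots.1 hr.1).2)
    | zero => simp
    | add r s _ _ hr hs =>
      rw [inner_add_left]
      linarith
  exact hd0 (hN.eq_zero_of_forall_inner_roots_nonpos hE (hmN r₀ hr₀) fun r hr =>
    hle r (hN.mem_closure_height_one hE hcyc hm0
      (fun s hs => ⟨hmN s hs, (hht s (hmN s hs)).1 (hm1 s hs)⟩) hsum hr))

end IsEvenUnimodular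

end Neighbours

section Eisenstein

lemma omega_eq : ω = ((-1 / 2 : ℝ) : ℂ) + ((√3 / 2 : ℝ) : ℂ) * Complex.I := by
  have harg : 2 * (Real.pi : ℂ) * Complex.I / 3 =
      ((Real.pi - Real.pi / 3 : ℝ) : ℂ) * Complex.I := by
    push_cast
    ring
  rw [ω, harg, Complex.exp_mul_I, ← Complex.ofReal_cos, ← Complex.ofReal_sin, Real.cos_pi_sub,
    Real.sin_pi_sub, Real.cos_pi_div_three, Real.sin_pi_div_three]
  push_cast
  ring

lemma omega_re : ω.re = -1 / 2 := by simp [omega_eq]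

lemma omega_im : ω.im = √3 / 2 := by simp [omega_eq]

lemma omega_sq : ω ^ 2 = -1 - ω := by
  have hsqrt : √3 * √3 = 3 := Real.mul_self_sqrt (by norm_num)
  apply Complex.ext
  · simp only [pow_two, Complex.mul_re, Complex.sub_re, Complex.neg_re, Complex.one_re, omega_re,
      omega_im]
    linarith
  · simp only [pow_two, Complex.mul_im, Complex.sub_im, Complex.neg_im, Complex.one_im, omega_re,
      omega_im]
    ring

lemma conj_omega : conj ω = -1 - ω := by
  apply Complex.ext
  · norm_num [omega_re]
  · simp [omega_im]

lemma theta_eq : θ = 1 + 2 * ω := by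
  rw [θ, conj_omega]
  ring

lemma add_mul_omega_inj {a b c d : ℝ} : (a + b * ω : ℂ) = c + d * ω ↔ a = c ∧ b = d := by
  refine ⟨fun h => ?_, by rintro ⟨rfl, rfl⟩; rfl⟩
  have him := congrArg Complex.im h
  have hre := congrArg Complex.re h
  simp only [Complex.add_im, Complex.add_re, Complex.ofReal_im, Complex.ofReal_re, Complex.mul_im,
    Complex.mul_re, omega_re, omega_im, zero_mul, sub_zero, zero_add, add_zero] at him hre
  have hbd : b = d := mul_right_cancel₀ (by positivity : √3 / 2 ≠ 0) him
  subst hbd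
  exact ⟨by linarith, rfl⟩

lemma intCast_add_mul_omega_inj {a b c d : ℤ} :
    (a + b * ω : ℂ) = c + d * ω ↔ a = c ∧ b = d := by
  exact_mod_cast add_mul_omega_inj (a := a) (b := b) (c := c) (d := d)

lemma exists_eq_add_mul_omega (y : ℂ) : ∃ a b : ℝ, y = a + b * ω := by
  refine ⟨y.re + y.im / √3, 2 * y.im / √3, Complex.ext ?_ ?_⟩
  · simp only [Complex.add_re, Complex.ofReal_re, Complex.re_ofReal_mul, omega_re]
    ring
  · simp only [Complex.add_im, Complex.ofReal_im, Complex.im_ofReal_mul, omega_im]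
    field_simp
    ring

lemma normSq_add_mul_omega (a b : ℝ) :
    Complex.normSq (a + b * ω) = a ^ 2 - a * b + b ^ 2 := by
  have hsqrt : √3 * √3 = 3 := Real.mul_self_sqrt (by norm_num)
  simp only [Complex.normSq_apply, Complex.add_re, Complex.ofReal_re, Complex.re_ofReal_mul,
    omega_re, Complex.add_im, Complex.ofReal_im, Complex.im_ofReal_mul, omega_im]
  linear_combination (b ^ 2 / 4) * hsqrt

lemma exists_eq_theta_mul_iff {a b : ℤ} :
    (∃ c d : ℤ, (a + b * ω : ℂ) = θ * (c + d * ω)) ↔ 3 ∣ a + b := by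
  have hmul : ∀ c d : ℤ, θ * (c + d * ω) = ((c - 2 * d : ℤ) : ℂ) + ((2 * c - d : ℤ) : ℂ) * ω := by
    intro c d
    rw [theta_eq]
    push_cast
    linear_combination 2 * (d : ℂ) * omega_sq
  simp only [hmul, intCast_add_mul_omega_inj]
  constructor
  · rintro ⟨c, d, rfl, rfl⟩
    exact ⟨c - d, by ring⟩
  · rintro ⟨k, hk⟩
    exact ⟨b - k, b - 2 * k, by linarith, by ring⟩

/-- The norm `|a + bω|²` of an Eisenstein integer. -/
def eisNorm (a b : ℤ) : ℤ := a ^ 2 - a * b + b ^ 2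

lemma eisNorm_nonneg (a b : ℤ) : 0 ≤ eisNorm a b := by
  rw [eisNorm]
  nlinarith [sq_nonneg (a - b), sq_nonneg a, sq_nonneg b]

lemma eisNorm_eq_zero {a b : ℤ} : eisNorm a b = 0 ↔ a = 0 ∧ b = 0 := by
  refine ⟨fun h => ?_, by rintro ⟨rfl, rfl⟩; rfl⟩
  rw [eisNorm] at h
  have ha : a ^ 2 = 0 := by nlinarith [sq_nonneg (a - 2 * b), sq_nonneg a]
  have hb : b ^ 2 = 0 := by nlinarith [sq_nonneg (2 * a - b), sq_nonneg b]
  exact ⟨pow_eq_zero_iff two_ne_zero |>.1 ha, pow_eq_zero_iff two_ne_zero |>.1 hb⟩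

lemma three_dvd_eisNorm_iff {a b : ℤ} : 3 ∣ eisNorm a b ↔ 3 ∣ a + b := by
  have h : eisNorm a b = (a + b) ^ 2 - 3 * (a * b) := by
    rw [eisNorm]
    ring
  rw [h, dvd_sub_left (dvd_mul_right 3 _), Int.prime_three.dvd_pow_iff_dvd two_ne_zero]

end Eisenstein

section Golay

/-- Integer vectors whose residues modulo `3` lie in the ternary Golay code, expressed by the
parity checks of this self-dual code. -/
def IsGolay (q : Fin 12 → ℤ) : Prop := ∀ j, 3 ∣ ∑ i, golay j i * q i

lemma isGolay_golay (k : Fin 6) : IsGolay (golay k) := by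
  unfold IsGolay
  revert k
  decide

lemma three_dvd_sum_golay (j : Fin 6) : 3 ∣ ∑ i, golay j i := by
  revert j
  decide

lemma six_le_card_golay_ne_zero : ∀ s : Fin 6 → ZMod 3, s ≠ 0 →
    6 ≤ (Finset.univ.filter fun i : Fin 12 => ∑ j, (golay j i : ZMod 3) * s j ≠ 0).card := by
  decide +kernel

namespace IsGolay

variable {q q' : Fin 12 → ℤ}

lemma add (h : IsGolay q) (h' : IsGolay q') : IsGolay (q + q') := fun j => by
  simpa only [Pi.add_apply, mul_add, Finset.sum_add_distrib] using dvd_add (h j) (h' j)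

lemma zsmul (h : IsGolay q) (n : ℤ) : IsGolay (n • q) := fun j => by
  simpa only [Pi.smul_apply, smul_eq_mul, mul_left_comm _ n, ← Finset.mul_sum] using
    (h j).mul_left n

lemma sum_golay_mul (s : Fin 6 → ℤ) : IsGolay fun i => ∑ l, golay l i * s l := fun j => by
  simp only [Finset.mul_sum, ← mul_assoc]
  rw [Finset.sum_comm]
  exact Finset.dvd_sum fun l _ => by
    simpa only [Finset.sum_mul] using (isGolay_golay l j).mul_right (s l)

lemma three_dvd_sub_sum (h : IsGolay q) (i : Fin 12) :
    3 ∣ q i - ∑ j : Fin 6, golay j i * q (j.castLE (by norm_num)) := by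
  have h0 := h 0
  have h1 := h 1
  have h2 := h 2
  have h3 := h 3
  have h4 := h 4
  have h5 := h 5
  simp [Fin.sum_univ_succ, golay, Fin.succ] at h0 h1 h2 h3 h4 h5
  fin_cases i <;> simp [Fin.sum_univ_succ, golay, Fin.succ, Fin.castLE] <;> omega

lemma exists_eq_sum_add (h : IsGolay q) :
    ∃ (s : Fin 6 → ℤ) (k : Fin 12 → ℤ), ∀ i, q i = ∑ j, golay j i * s j + 3 * k i := by
  choose k hk using h.three_dvd_sub_sum
  exact ⟨fun j => q (j.castLE (by norm_num)), k, fun i => by rw [← hk i, add_sub_cancel]⟩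

lemma three_dvd_sum (h : IsGolay q) : 3 ∣ ∑ i, q i := by
  obtain ⟨s, k, hq⟩ := h.exists_eq_sum_add
  simp only [hq, Finset.sum_add_distrib, ← Finset.mul_sum]
  rw [Finset.sum_comm]
  refine dvd_add (Finset.dvd_sum fun j _ => ?_) (dvd_mul_right _ _)
  simpa only [Finset.sum_mul] using (three_dvd_sum_golay j).mul_right (s j)

lemma three_dvd_sum_mul (h : IsGolay q) (h' : IsGolay q') : 3 ∣ ∑ i, q i * q' i := by
  obtain ⟨s, k, hq⟩ := h.exists_eq_sum_add
  simp only [hq, add_mul, Finset.sum_mul, Finset.sum_add_distrib, mul_assoc, ← Finset.mul_sum]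
  rw [Finset.sum_comm]
  refine dvd_add (Finset.dvd_sum fun j _ => ?_) (dvd_mul_right _ _)
  simp only [mul_left_comm _ (s j), ← Finset.mul_sum]
  exact (h' j).mul_left (s j)

lemma six_le_card (h : IsGolay q) {i₀ : Fin 12} (h₀ : ¬ 3 ∣ q i₀) :
    6 ≤ (Finset.univ.filter fun i => ¬ 3 ∣ q i).card := by
  obtain ⟨s, k, hq⟩ := h.exists_eq_sum_add
  have hcast : ∀ i, 3 ∣ q i ↔ ∑ j, (golay j i : ZMod 3) * (s j : ZMod 3) = 0 := fun i => by
    rw [hq i, dvd_add_left (dvd_mul_right 3 _)]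
    exact_mod_cast (ZMod.intCast_zmod_eq_zero_iff_dvd (∑ j, golay j i * s j) 3).symm
  simp only [hcast] at h₀ ⊢
  refine six_le_card_golay_ne_zero (fun j => s j) fun hs => h₀ ?_
  exact Finset.sum_eq_zero fun j _ => by rw [congrFun hs j, Pi.zero_apply, mul_zero]

end IsGolay

end Golay

section LeechCoords

/-- The pairs `p q` for which `(p i + q i * ω)` lies in the complex Leech lattice
(`mem_leech_iff`), described by congruences: modulo `θ` all entries agree with the first one,
the residues of `q` form a Golay codeword, and the sum of the entries is determined modulo `3θ`. -/
structure IsLeechCoords (p q : Fin 12 → ℤ) : Prop where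
  congr : ∀ i, 3 ∣ p i + q i - (p 0 + q 0)
  isGolay : IsGolay q
  nine_dvd : 9 ∣ ∑ i, (p i + q i) + 3 * (p 0 + q 0)

lemma sum_eisNorm_ne_one {ι : Type*} [Fintype ι] {a b : ι → ℤ}
    (hsum : 3 ∣ ∑ i, (a i + b i)) : ∑ i, eisNorm (a i) (b i) ≠ 1 := by
  classical
  intro hone
  obtain ⟨i, -, hi⟩ := Finset.exists_ne_zero_of_sum_ne_zero (hone ▸ one_ne_zero)
  have hpos : 0 < eisNorm (a i) (b i) := (eisNorm_nonneg _ _).lt_of_ne' hi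
  have hrest : ∑ j ∈ Finset.univ.erase i, eisNorm (a j) (b j) = 0 := by
    have hnonneg : 0 ≤ ∑ j ∈ Finset.univ.erase i, eisNorm (a j) (b j) :=
      Finset.sum_nonneg fun j _ => eisNorm_nonneg _ _
    rw [← Finset.add_sum_erase _ _ (Finset.mem_univ i)] at hone
    linarith
  have hzero : ∀ j ≠ i, a j = 0 ∧ b j = 0 := fun j hj => eisNorm_eq_zero.1 <|
    (Finset.sum_eq_zero_iff_of_nonneg fun j _ => eisNorm_nonneg _ _).1 hrest j
      (Finset.mem_erase.2 ⟨hj, Finset.mem_univ j⟩)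
  rw [Fintype.sum_eq_single i fun j hj => by rw [(hzero j hj).1, (hzero j hj).2, add_zero],
    ← three_dvd_eisNorm_iff] at hsum
  rw [← Finset.add_sum_erase _ _ (Finset.mem_univ i), hrest, add_zero] at hone
  omega

lemma isLeechCoords_iff {c : Fin 12 → ℤ} (hc : IsGolay c) (m : ℤ) (za zb : Fin 12 → ℤ) :
    IsLeechCoords (fun i => m + c i + 3 * za i) (fun i => 2 * c i + 3 * zb i) ↔
      3 ∣ ∑ i, za i + ∑ i, zb i - m := by
  have hcongr : ∀ i, 3 ∣ m + c i + 3 * za i + (2 * c i + 3 * zb i) -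
      (m + c 0 + 3 * za 0 + (2 * c 0 + 3 * zb 0)) := fun i => by omega
  have hgolay : IsGolay fun i => 2 * c i + 3 * zb i := fun j => by
    simpa only [mul_add, Finset.sum_add_distrib, mul_left_comm _ (2 : ℤ), mul_left_comm _ (3 : ℤ),
      ← Finset.mul_sum] using dvd_add ((hc j).mul_left 2) (dvd_mul_right 3 _)
  have hsum : ∑ i, (m + c i + 3 * za i + (2 * c i + 3 * zb i)) =
      12 * m + 3 * ∑ i, c i + 3 * (∑ i, za i + ∑ i, zb i) := by
    simp only [Finset.sum_add_distrib, ← Finset.mul_sum, Finset.sum_const, Finset.card_univ,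
      Fintype.card_fin, nsmul_eq_mul]
    push_cast
    ring
  obtain ⟨k, hk⟩ := hc.three_dvd_sum
  refine ⟨fun h => ?_, fun h => ⟨hcongr, hgolay, ?_⟩⟩
  · have h9 := h.nine_dvd
    rw [hsum, hk] at h9
    omega
  · rw [hsum, hk]
    omega

namespace IsLeechCoords

variable {p q p' q' : Fin 12 → ℤ}

lemma exists_eq (h : IsLeechCoords p q) :
    ∃ (m : ℤ) (s : Fin 6 → ℤ) (za zb : Fin 12 → ℤ), (m = 0 ∨ m = 1 ∨ m = -1) ∧
      (∀ i, p i = m + ∑ j, golay j i * s j + 3 * za i) ∧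
      ∀ i, q i = 2 * ∑ j, golay j i * s j + 3 * zb i := by
  obtain ⟨m, n, hm, hn⟩ : ∃ m n : ℤ, (m = 0 ∨ m = 1 ∨ m = -1) ∧ p 0 + q 0 = m + 3 * n :=
    ⟨(p 0 + q 0 + 1) % 3 - 1, (p 0 + q 0 + 1) / 3, by omega, by omega⟩
  obtain ⟨s, k, hq⟩ := (h.isGolay.zsmul (-1)).exists_eq_sum_add
  choose l hl using h.congr
  simp only [Pi.smul_apply, smul_eq_mul] at hq
  refine ⟨m, s, fun i => l i + n + k i, fun i => -k i - ∑ j, golay j i * s j, hm,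
    fun i => ?_, fun i => ?_⟩ <;> linarith [hq i, hl i]

lemma add (h : IsLeechCoords p q) (h' : IsLeechCoords p' q') :
    IsLeechCoords (p + p') (q + q') where
  congr i := by
    have := h.congr i
    have := h'.congr i
    simp only [Pi.add_apply]
    omega
  isGolay := h.isGolay.add h'.isGolay
  nine_dvd := by
    have h9 := h.nine_dvd
    have h9' := h'.nine_dvd
    simp only [Pi.add_apply, Finset.sum_add_distrib] at h9 h9' ⊢
    omega

lemma isGolay_sub (h : IsLeechCoords p q) : IsGolay (p - q) := fun j => by
  choose k hk using h.congr
  have hsum : ∑ i, golay j i * (p - q) i =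
      (p 0 + q 0) * ∑ i, golay j i + 3 * ∑ i, golay j i * k i - 2 * ∑ i, golay j i * q i := by
    simp only [Pi.sub_apply, Finset.mul_sum, ← Finset.sum_add_distrib, ← Finset.sum_sub_distrib]
    exact Finset.sum_congr rfl fun i _ => by linear_combination golay j i * hk i
  rw [hsum]
  exact dvd_sub (dvd_add ((three_dvd_sum_golay j).mul_left _) (dvd_mul_right 3 _))
    ((h.isGolay j).mul_left 2)

lemma omega (h : IsLeechCoords p q) : IsLeechCoords (-q) (p - q) where
  congr i := by
    have := h.congr i
    simp only [Pi.neg_apply, Pi.sub_apply]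
    omega
  isGolay := h.isGolay_sub
  nine_dvd := by
    have h9 := h.nine_dvd
    have h3 := h.isGolay.three_dvd_sum
    simp only [Pi.neg_apply, Pi.sub_apply, Finset.sum_add_distrib, Finset.sum_sub_distrib,
      Finset.sum_neg_distrib] at h9 ⊢
    omega

lemma nine_dvd_sum_eisNorm (h : IsLeechCoords p q) : 9 ∣ ∑ i, eisNorm (p i) (q i) := by
  choose k hk using h.congr
  set m := p 0 + q 0
  have hnorm : ∑ i, eisNorm (p i) (q i) = 12 * m ^ 2 + 6 * m * ∑ i, k i + 9 * ∑ i, k i ^ 2 -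
      3 * (m * ∑ i, q i) - 9 * ∑ i, k i * q i + 3 * ∑ i, q i * q i := by
    have hterm : ∀ i, eisNorm (p i) (q i) = m ^ 2 + 6 * m * k i + 9 * k i ^ 2 - 3 * (m * q i) -
        9 * (k i * q i) + 3 * (q i * q i) := fun i => by
      rw [eisNorm, show p i = m + 3 * k i - q i by linarith [hk i]]
      ring
    simp only [hterm, Finset.sum_add_distrib, Finset.sum_sub_distrib, ← Finset.mul_sum,
      Finset.sum_const, Finset.card_univ, Fintype.card_fin, nsmul_eq_mul, Nat.cast_ofNat]
  have hsum : ∑ i, (p i + q i) = 12 * m + 3 * ∑ i, k i := by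
    simp only [show ∀ i, p i + q i = m + 3 * k i from fun i => by linarith [hk i],
      Finset.sum_add_distrib, ← Finset.mul_sum, Finset.sum_const, Finset.card_univ,
      Fintype.card_fin, nsmul_eq_mul, Nat.cast_ofNat]
  obtain ⟨a, ha⟩ := h.isGolay.three_dvd_sum
  obtain ⟨b, hb⟩ := h.isGolay.three_dvd_sum_mul h.isGolay
  obtain ⟨c, hc⟩ := h.nine_dvd
  rw [hnorm, ha, hb, show ∑ i, k i = 3 * c - 5 * m by linarith]
  exact ⟨-2 * m ^ 2 + 2 * m * c + ∑ i, k i ^ 2 - m * a - ∑ i, k i * q i + b, by ring⟩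

lemma twelve_le_sum_eisNorm (h : IsLeechCoords p q) (hm : ¬ 3 ∣ p 0 + q 0) :
    12 ≤ ∑ i, eisNorm (p i) (q i) := by
  have hone : ∀ i, 1 ≤ eisNorm (p i) (q i) := fun i => by
    refine (eisNorm_nonneg _ _).lt_of_ne' fun h0 => hm ?_
    rw [eisNorm_eq_zero] at h0
    have := h.congr i
    omega
  simpa using Finset.card_nsmul_le_sum Finset.univ _ 1 fun i _ => hone i

lemma eighteen_le_sum_eisNorm (h : IsLeechCoords p q) (hm : 3 ∣ p 0 + q 0) {i₀ : Fin 12}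
    (h₀ : ¬ 3 ∣ q i₀) : 18 ≤ ∑ i, eisNorm (p i) (q i) := by
  have hthree : ∀ i, ¬ 3 ∣ q i → 3 ≤ eisNorm (p i) (q i) := fun i hi => by
    have hdvd : 3 ∣ eisNorm (p i) (q i) := three_dvd_eisNorm_iff.2 (by have := h.congr i; omega)
    refine Int.le_of_dvd ((eisNorm_nonneg _ _).lt_of_ne' fun h0 => hi ?_) hdvd
    rw [(eisNorm_eq_zero.1 h0).2]
    exact dvd_zero 3
  calc (18 : ℤ) ≤ ((Finset.univ.filter fun i => ¬ 3 ∣ q i).card : ℤ) * 3 := by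
        have := h.isGolay.six_le_card h₀
        omega
    _ ≤ ∑ i ∈ Finset.univ.filter fun i => ¬ 3 ∣ q i, eisNorm (p i) (q i) := by
        simpa using Finset.card_nsmul_le_sum _ _ 3 fun i hi => hthree i (Finset.mem_filter.1 hi).2
    _ ≤ ∑ i, eisNorm (p i) (q i) :=
        Finset.sum_le_sum_of_subset_of_nonneg (Finset.filter_subset _ _)
          fun i _ _ => eisNorm_nonneg _ _

lemma sum_eisNorm_ne_nine (h : IsLeechCoords p q) : ∑ i, eisNorm (p i) (q i) ≠ 9 := by
  by_cases hm : 3 ∣ p 0 + q 0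
  · by_cases hq : ∀ i, 3 ∣ q i
    · have hp : ∀ i, 3 ∣ p i := fun i => by
        have := hq i
        have := h.congr i
        omega
      choose a ha using hp
      choose b hb using hq
      have hsum : 3 ∣ ∑ i, (a i + b i) := by
        have h9 := h.nine_dvd
        simp only [ha, hb, ← mul_add, ← Finset.mul_sum] at h9
        omega
      have hnorm : ∑ i, eisNorm (p i) (q i) = 9 * ∑ i, eisNorm (a i) (b i) := by
        rw [Finset.mul_sum]
        exact Finset.sum_congr rfl fun i _ => by rw [eisNorm, eisNorm, ha, hb]; ring
      have := sum_eisNorm_ne_one hsum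
      omega
    · obtain ⟨i₀, h₀⟩ := not_forall.1 hq
      linarith [h.eighteen_le_sum_eisNorm hm h₀]
  · linarith [h.twelve_le_sum_eisNorm hm]

end IsLeechCoords

lemma mem_leech_iff {lam : Fin 12 → ℂ} :
    lam ∈ Leech ↔ ∃ p q, IsLeechCoords p q ∧ ∀ i, lam i = p i + q i * ω := by
  have hform : ∀ (m : ℤ) (s : Fin 6 → ℤ) (za zb : Fin 12 → ℤ) (i : Fin 12),
      (m : ℂ) + θ * ((∑ j, golay j i * s j : ℤ) : ℂ) + 3 * ((za i : ℂ) + (zb i : ℂ) * ω) =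
        ((m + ∑ j, golay j i * s j + 3 * za i : ℤ) : ℂ) +
          ((2 * ∑ j, golay j i * s j + 3 * zb i : ℤ) : ℂ) * ω := by
    intro m s za zb i
    rw [theta_eq]
    push_cast
    ring
  have hsum : ∀ (m : ℤ) (za zb : Fin 12 → ℤ),
      (∃ a b : ℤ, ∑ i, ((za i : ℂ) + (zb i : ℂ) * ω) - m = θ * (a + b * ω)) ↔
        3 ∣ ∑ i, za i + ∑ i, zb i - m := by
    intro m za zb
    rw [add_sub_right_comm, ← exists_eq_theta_mul_iff]
    simp only [Finset.sum_add_distrib, ← Finset.sum_mul, Int.cast_sub, Int.cast_sum,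
      add_sub_right_comm]
  constructor
  · rintro ⟨m, s, za, zb, -, hlam, h⟩
    exact ⟨_, _, (isLeechCoords_iff (IsGolay.sum_golay_mul s) m za zb).2 ((hsum m za zb).1 h),
      fun i => (hlam i).trans (hform m s za zb i)⟩
  · rintro ⟨p, q, h, hlam⟩
    obtain ⟨m, s, za, zb, hm, hp, hq⟩ := h.exists_eq
    refine ⟨m, s, za, zb, hm, fun i => ?_, (hsum m za zb).2 ?_⟩
    · rw [hlam i, hform, hp, hq]
    · rw [← isLeechCoords_iff (IsGolay.sum_golay_mul s), ← funext hp, ← funext hq]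
      exact h

end LeechCoords

section RealLeech

open scoped RealInnerProductSpace

/-- `2 Re ((a + bω)‾ (c + dω))`, the bilinear form attached to twice the Eisenstein norm. -/
def eisPairing {R : Type*} [CommRing R] (a b c d : R) : R := (2 * a - b) * c + (2 * b - a) * d

lemma two_mul_inner_add_mul_omega (a b c d : ℝ) :
    2 * ⟪(a + b * ω : ℂ), (c + d * ω : ℂ)⟫ = eisPairing a b c d := by
  have hsqrt : √3 * √3 = 3 := Real.mul_self_sqrt (by norm_num)
  simp only [Complex.inner, Complex.mul_re, Complex.conj_re, Complex.conj_im, Complex.add_re,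
    Complex.ofReal_re, omega_re, Complex.add_im, Complex.ofReal_im,
    Complex.im_ofReal_mul, omega_im, eisPairing]
  linear_combination (b * d / 2) * hsqrt

lemma isLeechCoords_three_mul {a b : Fin 12 → ℤ} (h : 3 ∣ ∑ i, a i + ∑ i, b i) :
    IsLeechCoords (fun i => 3 * a i) (fun i => 3 * b i) := by
  have h0 : IsGolay 0 := fun j => by simp
  simpa using (isLeechCoords_iff h0 0 a b).2 (by simpa using h)

lemma isLeechCoords_golay (j : Fin 6) : IsLeechCoords (golay j) (fun i => 2 * golay j i) := by
  simpa using (isLeechCoords_iff (isGolay_golay j) 0 0 0).2 (by simp)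

lemma isLeechCoords_one_add_single :
    IsLeechCoords (fun i => 1 + 3 * Pi.single (M := fun _ => ℤ) 0 1 i) fun _ => 0 := by
  have h0 : IsGolay 0 := fun j => by simp
  simpa using (isLeechCoords_iff h0 1 (Pi.single 0 1) 0).2 (by simp)

lemma exists_intCast_eq_of_forall_eisPairing {P Q : Fin 12 → ℝ}
    (h : ∀ p q, IsLeechCoords p q →
      ∃ n : ℤ, ∑ i, eisPairing (P i) (Q i) (p i) (q i) = 9 * n) :
    ∃ p q : Fin 12 → ℤ, (∀ i, P i = p i) ∧ ∀ i, Q i = q i := by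
  have hsub (i : Fin 12) : ∃ n : ℤ, P i - Q i = n := by
    obtain ⟨n, hn⟩ := h _ _ (isLeechCoords_three_mul (a := Pi.single i 1) (b := Pi.single i (-1))
      (by simp))
    refine ⟨n, ?_⟩
    simp only [eisPairing, Pi.single_apply, mul_ite, mul_one, mul_zero, Int.cast_ite,
      Int.cast_ofNat, Int.cast_zero, mul_neg, Int.cast_neg, Finset.sum_add_distrib,
      Finset.sum_ite_eq', Finset.mem_univ, ↓reduceIte] at hn
    linarith
  have htwo (i : Fin 12) : ∃ n : ℤ, 2 * P i - Q i = n := by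
    obtain ⟨n, hn⟩ := h _ _ (isLeechCoords_three_mul (a := Pi.single i 3) (b := 0) (by simp))
    refine ⟨n, ?_⟩
    simp only [eisPairing, Pi.single_apply, mul_ite, Int.reduceMul, mul_zero, Int.cast_ite,
      Int.cast_ofNat, Int.cast_zero, Pi.zero_apply, add_zero, Finset.sum_ite_eq', Finset.mem_univ,
      ↓reduceIte] at hn
    linarith
  choose a ha using hsub
  choose b hb using htwo
  refine ⟨fun i => b i - a i, fun i => b i - 2 * a i, fun i => ?_, fun i => ?_⟩ <;>
  · push_cast
    rw [← ha, ← hb]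
    ring

lemma IsLeechCoords.of_forall_eisPairing {p q : Fin 12 → ℤ}
    (h : ∀ p' q', IsLeechCoords p' q' → 9 ∣ ∑ i, eisPairing (p i) (q i) (p' i) (q' i)) :
    IsLeechCoords p q := by
  have hcongr (i : Fin 12) : 3 ∣ p i + q i - (p 0 + q 0) := by
    have h9 := h _ _ (isLeechCoords_three_mul (a := Pi.single i 1 - Pi.single 0 1) (b := 0)
      (by simp))
    simp only [eisPairing, Pi.sub_apply, Pi.single_apply, mul_sub, mul_ite, mul_one, mul_zero,
      Pi.zero_apply, add_zero, Finset.sum_sub_distrib, Finset.sum_ite_eq', Finset.mem_univ,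
      ↓reduceIte] at h9
    omega
  have hgolay : IsGolay q := fun j => by
    have h9 := h _ _ (isLeechCoords_golay j)
    have hsum : ∑ i, eisPairing (p i) (q i) (golay j i) (2 * golay j i) =
        3 * ∑ i, golay j i * q i := by
      rw [Finset.mul_sum]
      exact Finset.sum_congr rfl fun i _ => by rw [eisPairing]; ring
    omega
  refine ⟨hcongr, hgolay, ?_⟩
  have h9 := h _ _ isLeechCoords_one_add_single
  have hsum : ∑ i, eisPairing (p i) (q i) (1 + 3 * Pi.single (M := fun _ => ℤ) 0 1 i) 0 =
      2 * ∑ i, (p i + q i) - 3 * ∑ i, q i + 3 * (2 * p 0 - q 0) := by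
    simp only [eisPairing, Pi.single_apply, mul_ite, mul_one, mul_zero, mul_add, add_zero,
      Finset.sum_add_distrib, Finset.sum_sub_distrib, ← Finset.mul_sum, Finset.sum_ite_eq',
      Finset.mem_univ, ↓reduceIte]
    ring
  have h3 := hgolay.three_dvd_sum
  omega

lemma omega_smul_mem_leech {x : Fin 12 → ℂ} (hx : x ∈ Leech) : ω • x ∈ Leech := by
  obtain ⟨p, q, h, hpq⟩ := mem_leech_iff.1 hx
  refine mem_leech_iff.2 ⟨-q, p - q, h.omega, fun i => ?_⟩
  simp only [Pi.neg_apply, Pi.sub_apply, Pi.smul_apply, smul_eq_mul, hpq]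
  push_cast
  linear_combination (q i : ℂ) * omega_sq

lemma add_mem_leech {x y : Fin 12 → ℂ} (hx : x ∈ Leech) (hy : y ∈ Leech) : x + y ∈ Leech := by
  obtain ⟨p, q, h, hpq⟩ := mem_leech_iff.1 hx
  obtain ⟨p', q', h', hpq'⟩ := mem_leech_iff.1 hy
  refine mem_leech_iff.2 ⟨p + p', q + q', h.add h', fun i => ?_⟩
  simp only [Pi.add_apply, hpq, hpq']
  push_cast
  ring

/-- `Leech` as a `ℤ`-submodule of `ℂ¹²`. -/
def leechModule : Submodule ℤ (Fin 12 → ℂ) :=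
  AddSubgroup.toIntSubmodule
    { carrier := Leech
      zero_mem' := mem_leech_iff.2 ⟨0, 0, ⟨by simp, fun j => by simp, by simp⟩, by simp⟩
      add_mem' := add_mem_leech
      neg_mem' := fun {x} hx => by
        have h : -x = ω • x + ω • ω • x := by
          rw [smul_smul, ← pow_two, omega_sq, ← add_smul, add_sub_cancel, neg_one_smul]
        rw [h]
        exact add_mem_leech (omega_smul_mem_leech hx)
          (omega_smul_mem_leech (omega_smul_mem_leech hx)) }

/-- The Leech lattice in its usual scaling, as an even unimodular lattice in the real Euclidean
space `ℂ¹²`: the lattice `(√2 / 3) • Leech`. -/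
def realLeech : Submodule ℤ (EuclideanSpace ℂ (Fin 12)) :=
  leechModule.comap
    (((3 / √2 : ℝ) • (WithLp.linearEquiv 2 ℝ (Fin 12 → ℂ)).toLinearMap).restrictScalars ℤ)

lemma mem_realLeech {x : EuclideanSpace ℂ (Fin 12)} :
    x ∈ realLeech ↔ (3 / √2 : ℝ) • x.ofLp ∈ Leech := Iff.rfl

lemma three_div_sqrt_two_sq : (3 / √2) ^ 2 = 9 / 2 := by
  rw [div_pow, Real.sq_sqrt zero_le_two]
  norm_num

lemma norm_sq_eq_sum_normSq (x : EuclideanSpace ℂ (Fin 12)) :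
    ‖x‖ ^ 2 = 2 / 9 * ∑ i, Complex.normSq ((3 / √2 : ℝ) * x i) := by
  rw [EuclideanSpace.norm_sq_eq, Finset.mul_sum]
  refine Finset.sum_congr rfl fun i _ => ?_
  rw [map_mul, Complex.normSq_ofReal, ← pow_two, three_div_sqrt_two_sq, Complex.normSq_eq_norm_sq]
  ring

lemma exists_sum_normSq_eq {l : Fin 12 → ℂ} (hl : l ∈ Leech) :
    ∃ n : ℤ, ∑ i, Complex.normSq (l i) = 9 * n ∧ n ≠ 1 := by
  obtain ⟨p, q, h, hpq⟩ := mem_leech_iff.1 hl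
  obtain ⟨n, hn⟩ := h.nine_dvd_sum_eisNorm
  have hsum : ∑ i, Complex.normSq (l i) = ((∑ i, eisNorm (p i) (q i) : ℤ) : ℝ) := by
    push_cast [eisNorm]
    exact Finset.sum_congr rfl fun i _ => by
      rw [hpq]
      exact_mod_cast normSq_add_mul_omega (p i) (q i)
  refine ⟨n, by rw [hsum, hn]; push_cast; ring, ?_⟩
  rintro rfl
  exact h.sum_eisNorm_ne_nine hn

lemma nine_mul_inner_eq_sum_eisPairing {x y : EuclideanSpace ℂ (Fin 12)} {P Q P' Q' : Fin 12 → ℝ}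
    (hx : ∀ i, (3 / √2 : ℝ) * x i = P i + Q i * ω)
    (hy : ∀ i, (3 / √2 : ℝ) * y i = P' i + Q' i * ω) :
    9 * ⟪x, y⟫ = ∑ i, eisPairing (P i) (Q i) (P' i) (Q' i) := by
  rw [PiLp.inner_apply, Finset.mul_sum]
  refine Finset.sum_congr rfl fun i _ => ?_
  rw [← two_mul_inner_add_mul_omega, ← hx, ← hy, ← Complex.real_smul, ← Complex.real_smul,
    real_inner_smul_left, real_inner_smul_right]
  linear_combination -2 * ⟪x i, y i⟫ * three_div_sqrt_two_sq

lemma shell_realLeech_one : shell realLeech 1 = ∅ := by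
  refine Set.eq_empty_of_forall_notMem fun x ⟨hx, hx2⟩ => ?_
  obtain ⟨n, hn, hn1⟩ := exists_sum_normSq_eq (mem_realLeech.1 hx)
  rw [norm_sq_eq_sum_normSq] at hx2
  simp only [Pi.smul_apply, Complex.real_smul] at hn
  refine hn1 ?_
  rw [hn] at hx2
  have : (n : ℝ) = 1 := by
    push_cast at hx2
    linarith
  exact_mod_cast this

lemma isEvenUnimodular_realLeech : IsEvenUnimodular realLeech where
  even x hx := by
    obtain ⟨n, hn, -⟩ := exists_sum_normSq_eq (mem_realLeech.1 hx)
    simp only [Pi.smul_apply, Complex.real_smul] at hn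
    exact ⟨n, by rw [norm_sq_eq_sum_normSq, hn]; ring⟩
  mem_of_forall_inner x hx := by
    choose P Q hPQ using fun i => exists_eq_add_mul_omega ((3 / √2 : ℝ) * x i)
    have hpair : ∀ p q, IsLeechCoords p q →
        ∃ n : ℤ, ∑ i, eisPairing (P i) (Q i) (p i) (q i) = 9 * n := fun p q h => by
      let y : EuclideanSpace ℂ (Fin 12) :=
        WithLp.toLp 2 fun i => ((3 / √2 : ℝ) : ℂ)⁻¹ * (p i + q i * ω)
      have hy : ∀ i, (3 / √2 : ℝ) * y i = (p i : ℝ) + (q i : ℝ) * ω := fun i =>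
        mul_inv_cancel_left₀ (Complex.ofReal_ne_zero.2 (by positivity)) _
      obtain ⟨n, hn⟩ := hx y (mem_realLeech.2 (mem_leech_iff.2 ⟨p, q, h, fun i => by
        exact_mod_cast hy i⟩))
      exact ⟨n, by rw [← hn, nine_mul_inner_eq_sum_eisPairing hPQ hy]⟩
    obtain ⟨p, q, hp, hq⟩ := exists_intCast_eq_of_forall_eisPairing hpair
    refine mem_realLeech.2 (mem_leech_iff.2 ⟨p, q, .of_forall_eisPairing fun p' q' h => ?_,
      fun i => ?_⟩)
    · obtain ⟨n, hn⟩ := hpair p' q' h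
      simp only [hp, hq, eisPairing] at hn
      exact ⟨n, by exact_mod_cast hn⟩
    · simpa only [hp, hq, Complex.ofReal_intCast, Pi.smul_apply, Complex.real_smul] using hPQ i

lemma finrank_real_euclideanSpace_complex {ι : Type*} [Fintype ι] :
    Module.finrank ℝ (EuclideanSpace ℂ ι) = Fintype.card ι * 2 := by
  rw [(WithLp.linearEquiv 2 ℝ (ι → ℂ)).finrank_eq, Module.finrank_pi_fintype]
  simp [Complex.finrank_real_complex]

theorem exists_mem_leech_sum_normSq_le (y : Fin 12 → ℂ) :
    ∃ l ∈ Leech, ∑ i, Complex.normSq (y i - l i) ≤ 9 := by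
  let s : ℝ := 3 / √2
  have hs : (s : ℂ) ≠ 0 := Complex.ofReal_ne_zero.2 (by positivity)
  obtain ⟨v, hv, hle⟩ := isEvenUnimodular_realLeech.exists_norm_sub_sq_le_two
    finrank_real_euclideanSpace_complex shell_realLeech_one
    (WithLp.toLp 2 fun i => (s : ℂ)⁻¹ * y i)
  refine ⟨_, mem_realLeech.1 hv, ?_⟩
  rw [norm_sq_eq_sum_normSq] at hle
  simp only [PiLp.sub_apply, mul_sub] at hle
  have hcancel : ∀ i, ((3 / √2 : ℝ) : ℂ) * ((s : ℂ)⁻¹ * y i) = y i := fun i =>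
    mul_inv_cancel_left₀ hs _
  simp only [hcancel] at hle
  simp only [Pi.smul_apply, Complex.real_smul]
  linarith

end RealLeech

section HermitianForm

lemma omega_cube : ω ^ 3 = 1 := by linear_combination (ω - 1) * omega_sq

lemma omega_mul_conj_omega : ω * conj ω = 1 := by
  rw [conj_omega]
  linear_combination -omega_sq

lemma conj_theta : conj θ = -θ := by
  rw [θ, map_sub, Complex.conj_conj, neg_sub]

lemma theta_sq : θ ^ 2 = -3 := by
  rw [theta_eq]
  linear_combination 4 * omega_sq

lemma theta_ne_zero : θ ≠ 0 := fun h => by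
  have := theta_sq
  norm_num [h] at this

lemma EisP.add {x y : ℂ} (hx : EisP x) (hy : EisP y) : EisP (x + y) := by
  obtain ⟨a, b, rfl⟩ := hx
  obtain ⟨c, d, rfl⟩ := hy
  exact ⟨a + c, b + d, by push_cast; ring⟩

lemma EisP.neg {x : ℂ} (hx : EisP x) : EisP (-x) := by
  obtain ⟨a, b, rfl⟩ := hx
  exact ⟨-a, -b, by push_cast; ring⟩

lemma EisP.mul {x y : ℂ} (hx : EisP x) (hy : EisP y) : EisP (x * y) := by
  obtain ⟨a, b, rfl⟩ := hx
  obtain ⟨c, d, rfl⟩ := hy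
  exact ⟨a * c - b * d, a * d + b * c - b * d, by
    push_cast
    linear_combination (b * d : ℂ) * omega_sq⟩

lemma EisP.conj {x : ℂ} (hx : EisP x) : EisP (conj x) := by
  obtain ⟨a, b, rfl⟩ := hx
  exact ⟨a - b, -b, by
    simp only [map_add, map_mul, conj_omega, map_intCast]
    push_cast
    ring⟩

lemma eisP_one : EisP 1 := ⟨1, 0, by simp⟩

lemma eisP_omega : EisP ω := ⟨0, 1, by simp⟩

lemma normSq_intCast_add_mul_omega (a b : ℤ) : Complex.normSq (a + b * ω) = eisNorm a b := by
  have := normSq_add_mul_omega a b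
  push_cast at this
  rw [this, eisNorm]
  push_cast
  ring

lemma EisP.exists_normSq_eq_natCast {x : ℂ} (hx : EisP x) :
    ∃ n : ℕ, Complex.normSq x = n := by
  obtain ⟨a, b, rfl⟩ := hx
  obtain ⟨n, hn⟩ := Int.eq_ofNat_of_zero_le (eisNorm_nonneg a b)
  exact ⟨n, by rw [normSq_intCast_add_mul_omega, hn, Int.cast_natCast]⟩

lemma EisP.eisUnit {x : ℂ} (hx : EisP x) (hnorm : Complex.normSq x = 1) : EisUnit x := by
  obtain ⟨a, b, rfl⟩ := hx
  have hab : a ^ 2 - a * b + b ^ 2 = 1 := by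
    exact_mod_cast (normSq_intCast_add_mul_omega a b).symm.trans hnorm
  have ha : |a| ≤ 1 := (sq_le_one_iff_abs_le_one a).1 (by nlinarith [sq_nonneg (a - 2 * b)])
  have hb : |b| ≤ 1 := (sq_le_one_iff_abs_le_one b).1 (by nlinarith [sq_nonneg (2 * a - b)])
  obtain ⟨ha₁, ha₂⟩ := abs_le.1 ha
  obtain ⟨hb₁, hb₂⟩ := abs_le.1 hb
  rw [EisUnit, omega_sq]
  interval_cases a <;> interval_cases b <;> simp at hab ⊢ <;> ring_nf <;> simp

/-- The component in `ℂ¹²` of a vector of `ℂ¹⁴ = ℂ¹² ⊕ ℂ²`. -/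
def leechPart (v : V) : Fin 12 → ℂ := fun i => v (Fin.castLE (by norm_num) i)

@[simp] lemma leechPart_add (u v : V) : leechPart (u + v) = leechPart u + leechPart v := rfl

@[simp] lemma leechPart_sub (u v : V) : leechPart (u - v) = leechPart u - leechPart v := rfl

@[simp] lemma leechPart_smul (c : ℂ) (v : V) : leechPart (c • v) = c • leechPart v := rfl

@[simp] lemma leechPart_glue (l : Fin 12 → ℂ) (x y : ℂ) : leechPart (glue l x y) = l := by
  funext i
  simp [leechPart, glue]

@[simp] lemma glue_twelve (l : Fin 12 → ℂ) (x y : ℂ) : glue l x y 12 = x := by simp [glue]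

@[simp] lemma glue_thirteen (l : Fin 12 → ℂ) (x y : ℂ) : glue l x y 13 = y := by simp [glue]

lemma ext_leechPart {u v : V} (h : leechPart u = leechPart v) (h12 : u 12 = v 12)
    (h13 : u 13 = v 13) : u = v := by
  funext i
  by_cases hi : (i : ℕ) < 12
  · exact congrFun h ⟨i, hi⟩
  · obtain rfl | rfl : i = 12 ∨ i = 13 := by omega
    exacts [h12, h13]

lemma star_smul_dotProduct {ι : Type*} [Fintype ι] (c : ℂ) (x y : ι → ℂ) :
    star (c • x) ⬝ᵥ y = conj c * star x ⬝ᵥ y := by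
  rw [star_smul, smul_dotProduct, smul_eq_mul, starRingEnd_apply]

lemma conj_star_dotProduct {ι : Type*} [Fintype ι] (x y : ι → ℂ) :
    conj (star x ⬝ᵥ y) = star y ⬝ᵥ x := (Matrix.star_dotProduct y x).symm

lemma star_dotProduct_self {ι : Type*} [Fintype ι] (x : ι → ℂ) :
    star x ⬝ᵥ x = ((∑ i, Complex.normSq (x i) : ℝ) : ℂ) := by
  rw [Complex.ofReal_sum]
  exact Finset.sum_congr rfl fun i _ => Complex.normSq_eq_conj_mul_self.symm

lemma herm_eq (u v : V) : herm u v = -(1 / 3) * star (leechPart u) ⬝ᵥ leechPart v +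
    conj (u 12) * conj θ * v 13 + conj (u 13) * θ * v 12 := rfl

lemma conj_herm (u v : V) : conj (herm u v) = herm v u := by
  simp only [herm_eq, map_add, map_mul, map_neg, conj_star_dotProduct, map_div₀, map_one,
    map_ofNat, Complex.conj_conj]
  ring

lemma herm_add_right (u v w : V) : herm u (v + w) = herm u v + herm u w := by
  simp only [herm_eq, leechPart_add, dotProduct_add, Pi.add_apply]
  ring

lemma herm_sub_right (u v w : V) : herm u (v - w) = herm u v - herm u w := by
  simp only [herm_eq, leechPart_sub, dotProduct_sub, Pi.sub_apply]
  ring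

lemma herm_sub_left (u v w : V) : herm (u - v) w = herm u w - herm v w := by
  rw [← conj_herm, herm_sub_right, map_sub, conj_herm, conj_herm]

lemma herm_smul_right (u v : V) (c : ℂ) : herm u (c • v) = c * herm u v := by
  simp only [herm_eq, leechPart_smul, dotProduct_smul, Pi.smul_apply, smul_eq_mul]
  ring

lemma herm_smul_left (u v : V) (c : ℂ) : herm (c • u) v = conj c * herm u v := by
  rw [← conj_herm, herm_smul_right, map_mul, conj_herm]

end HermitianForm

section Lattice

lemma smul_mem_leech {x : Fin 12 → ℂ} (hx : x ∈ Leech) {c : ℂ} (hc : EisP c) : c • x ∈ Leech := by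
  obtain ⟨a, b, rfl⟩ := hc
  rw [add_smul, mul_smul, Int.cast_smul_eq_zsmul, Int.cast_smul_eq_zsmul]
  exact leechModule.add_mem (leechModule.smul_mem a hx)
    (leechModule.smul_mem b (omega_smul_mem_leech hx))

lemma exists_star_dotProduct_self_eq {x : Fin 12 → ℂ} (hx : x ∈ Leech) :
    ∃ n : ℤ, star x ⬝ᵥ x = 9 * n ∧ n ≠ 1 := by
  obtain ⟨n, hn, hn1⟩ := exists_sum_normSq_eq hx
  exact ⟨n, by rw [star_dotProduct_self, hn]; push_cast; rfl, hn1⟩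

lemma exists_star_dotProduct_add_conj_eq {x y : Fin 12 → ℂ} (hx : x ∈ Leech) (hy : y ∈ Leech) :
    ∃ a : ℤ, star x ⬝ᵥ y + conj (star x ⬝ᵥ y) = 9 * a := by
  obtain ⟨n, hn, -⟩ := exists_star_dotProduct_self_eq hx
  obtain ⟨m, hm, -⟩ := exists_star_dotProduct_self_eq hy
  obtain ⟨k, hk, -⟩ := exists_star_dotProduct_self_eq (add_mem_leech hx hy)
  simp only [star_add, add_dotProduct, dotProduct_add] at hk
  refine ⟨k - n - m, ?_⟩
  rw [conj_star_dotProduct]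
  push_cast
  linear_combination hk - hn - hm

/- An element of `ℂ` is determined by the traces of itself and of its product with `ω`; here both
traces lie in `9ℤ`. -/
lemma exists_star_dotProduct_eq {x y : Fin 12 → ℂ} (hx : x ∈ Leech) (hy : y ∈ Leech) :
    ∃ e, EisP e ∧ star x ⬝ᵥ y = 3 * θ * e := by
  obtain ⟨a, ha⟩ := exists_star_dotProduct_add_conj_eq hx hy
  obtain ⟨b, hb⟩ := exists_star_dotProduct_add_conj_eq hx (omega_smul_mem_leech hy)
  rw [dotProduct_smul, smul_eq_mul, map_mul, conj_omega] at hb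
  have hθ : θ * star x ⬝ᵥ y = 9 * (b + a + ω * a) := by
    rw [theta_eq]
    linear_combination hb + (1 + ω) * ha
  refine ⟨-((a + b : ℤ) + a * ω), EisP.neg ⟨_, _, rfl⟩, ?_⟩
  push_cast
  linear_combination (-θ / 3) * hθ + star x ⬝ᵥ y / 3 * theta_sq

lemma mem_lset_iff {v : V} : v ∈ Lset ↔ leechPart v ∈ Leech ∧ EisP (v 12) ∧ EisP (v 13) := Iff.rfl

lemma glue_mem_lset {l : Fin 12 → ℂ} {x y : ℂ} (hl : l ∈ Leech) (hx : EisP x) (hy : EisP y) :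
    glue l x y ∈ Lset := by
  rw [mem_lset_iff, leechPart_glue, glue_twelve, glue_thirteen]
  exact ⟨hl, hx, hy⟩

lemma add_mem_lset {u v : V} (hu : u ∈ Lset) (hv : v ∈ Lset) : u + v ∈ Lset :=
  ⟨add_mem_leech hu.1 hv.1, hu.2.1.add hv.2.1, hu.2.2.add hv.2.2⟩

lemma smul_mem_lset {v : V} (hv : v ∈ Lset) {c : ℂ} (hc : EisP c) : c • v ∈ Lset :=
  ⟨smul_mem_leech hv.1 hc, hc.mul hv.2.1, hc.mul hv.2.2⟩

lemma exists_herm_eq_theta_mul {u v : V} (hu : u ∈ Lset) (hv : v ∈ Lset) :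
    ∃ e, EisP e ∧ herm u v = θ * e := by
  obtain ⟨e, he, h⟩ := exists_star_dotProduct_eq (mem_lset_iff.1 hu).1 (mem_lset_iff.1 hv).1
  refine ⟨-e + (-(conj (u 12) * v 13) + conj (u 13) * v 12),
    he.neg.add ((hu.2.1.conj.mul hv.2.2).neg.add (hu.2.2.conj.mul hv.2.1)), ?_⟩
  rw [herm_eq, conj_theta, h]
  ring

lemma exists_herm_self_eq {v : V} (hv : v ∈ Lset) : ∃ n : ℤ, herm v v = 3 * n := by
  obtain ⟨e, ⟨c, d, rfl⟩, h⟩ := exists_herm_eq_theta_mul hv hv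
  have hreal := conj_herm v v
  simp only [h, conj_theta, map_add, map_mul, conj_omega, map_intCast] at hreal
  have hcd : (((2 * c : ℤ) : ℂ) + (0 : ℤ) * ω) = (d : ℤ) + (0 : ℤ) * ω := by
    apply mul_left_cancel₀ theta_ne_zero
    push_cast
    linear_combination -hreal
  refine ⟨-c, ?_⟩
  rw [h, theta_eq, ← (intCast_add_mul_omega_inj.1 hcd).1]
  push_cast
  linear_combination 4 * c * omega_sq

lemma isRoot_iff {r : V} : IsRoot r ↔ r ∈ Lset ∧ herm r r = -3 := by
  refine ⟨fun h => ⟨h.1, h.2.1⟩, fun ⟨hr, hnorm⟩ => ⟨hr, hnorm, fun c hc y hy hcy => ?_⟩⟩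
  obtain ⟨n, hn⟩ := exists_herm_self_eq hy
  obtain ⟨m, hm⟩ := hc.exists_normSq_eq_natCast
  have hmn : (m : ℤ) * n = -1 := by
    rw [hcy, herm_smul_left, herm_smul_right, hn, ← mul_assoc,
      ← Complex.normSq_eq_conj_mul_self, hm] at hnorm
    have : (((m : ℤ) * n : ℤ) : ℂ) = (-1 : ℤ) := by
      push_cast at hnorm ⊢
      linear_combination hnorm / 3
    exact_mod_cast this
  have hunit : IsUnit (m : ℤ) := IsUnit.of_mul_eq_one (-n) (by linarith)
  refine hc.eisUnit ?_
  rw [hm, Int.ofNat_isUnit.1 hunit |> Nat.isUnit_iff.1, Nat.cast_one]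

end Lattice

section Reflections

lemma reflMap_add (μ : ℂ) (r u v : V) :
    reflMap μ r (u + v) = reflMap μ r u + reflMap μ r v := by
  simp only [reflMap, herm_add_right]
  module

lemma reflMap_smul (μ : ℂ) (r v : V) (c : ℂ) : reflMap μ r (c • v) = c • reflMap μ r v := by
  simp only [reflMap, herm_smul_right]
  module

lemma reflMap_reflMap {μ ν : ℂ} (hμν : μ * ν = 1) {r : V} (hr : herm r r ≠ 0) (v : V) :
    reflMap μ r (reflMap ν r v) = v := by
  have hcoef : (1 - ν) * herm r v / herm r r +
      (1 - μ) * (herm r v - (1 - ν) * herm r v / herm r r * herm r r) / herm r r = 0 := by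
    field_simp
    linear_combination -herm r v * hμν
  simp only [reflMap, herm_sub_right, herm_smul_right]
  rw [sub_sub, ← add_smul, hcoef, zero_smul, sub_zero]

lemma herm_reflMap {μ : ℂ} (hμ : μ * conj μ = 1) {r : V} (hr : herm r r ≠ 0) (u v : V) :
    herm (reflMap μ r u) (reflMap μ r v) = herm u v := by
  simp only [reflMap, herm_sub_right, herm_smul_right, herm_sub_left, herm_smul_left, map_div₀,
    map_mul, map_sub, map_one, conj_herm]
  field_simp
  linear_combination herm r v * herm u r * hμ

lemma reflMap_mem_lset {μ : ℂ} (hμ : μ = ω ∨ μ = conj ω) {r : V} (hr : IsRoot r) {v : V}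
    (hv : v ∈ Lset) : reflMap μ r v ∈ Lset := by
  obtain ⟨e, he, hherm⟩ := exists_herm_eq_theta_mul hr.1 hv
  have hcoef : EisP (-((1 - μ) * herm r v / herm r r)) := by
    rw [hherm, hr.2.1]
    obtain rfl | rfl := hμ
    · convert (eisP_one.add eisP_omega).mul he using 1
      rw [theta_eq]
      linear_combination (-2 / 3 * e) * omega_sq
    · convert eisP_omega.mul he using 1
      rw [theta_eq, conj_omega]
      linear_combination (2 / 3 * e) * omega_sq
  rw [reflMap, sub_eq_add_neg, ← neg_smul]
  exact add_mem_lset hv (smul_mem_lset hr.1 hcoef)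

lemma IsRoot.herm_self_ne_zero {r : V} (hr : IsRoot r) : herm r r ≠ 0 := by
  rw [hr.2.1]
  norm_num

/-- The `ω`-reflection in a root, as a linear automorphism of `ℂ¹⁴`. -/
def IsRoot.refl {r : V} (hr : IsRoot r) : V ≃ₗ[ℂ] V where
  toFun := reflMap ω r
  map_add' := reflMap_add ω r
  map_smul' c v := reflMap_smul ω r v c
  invFun := reflMap (conj ω) r
  left_inv := reflMap_reflMap (by rw [mul_comm, omega_mul_conj_omega]) hr.herm_self_ne_zero
  right_inv := reflMap_reflMap omega_mul_conj_omega hr.herm_self_ne_zero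

lemma IsRoot.refl_mem_autL {r : V} (hr : IsRoot r) : hr.refl ∈ AutL := by
  refine ⟨fun v => ⟨reflMap_mem_lset (.inl rfl) hr, fun hv => ?_⟩,
    herm_reflMap omega_mul_conj_omega hr.herm_self_ne_zero⟩
  rw [← hr.refl.symm_apply_apply v]
  exact reflMap_mem_lset (.inr rfl) hr hv

lemma IsRoot.apply {r : V} (hr : IsRoot r) {g : V ≃ₗ[ℂ] V} (hg : g ∈ AutL) : IsRoot (g r) :=
  isRoot_iff.2 ⟨(hg.1 r).1 hr.1, by rw [hg.2, hr.2.1]⟩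

variable {G : Subgroup (V ≃ₗ[ℂ] V)} {r : V}

/-- The group `G` contains the `ω`-reflection in the vector `r`. -/
def HasRefl (G : Subgroup (V ≃ₗ[ℂ] V)) (r : V) : Prop := ∃ g ∈ G, ∀ v, g v = reflMap ω r v

lemma HasRefl.mem (hr : HasRefl G r) {g : V ≃ₗ[ℂ] V} (hg : ∀ v, g v = reflMap ω r v) : g ∈ G := by
  obtain ⟨g', hg', hrefl⟩ := hr
  rwa [show g = g' from LinearEquiv.ext fun v => by rw [hg, hrefl]]

lemma IsRoot.hasRefl_closure {S : Set V} (hr : IsRoot r) (hrS : r ∈ S) :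
    HasRefl (Subgroup.closure (ReflAutos S)) r :=
  ⟨hr.refl, Subgroup.subset_closure ⟨hr.refl_mem_autL, r, hrS, fun _ => rfl⟩, fun _ => rfl⟩

lemma HasRefl.apply (hG : G ≤ AutL) (hr : HasRefl G r) {h : V ≃ₗ[ℂ] V} (hh : h ∈ G) :
    HasRefl G (h r) := by
  obtain ⟨g, hg, hrefl⟩ := hr
  have isometry := (hG hh).2
  refine ⟨h * g * h⁻¹, G.mul_mem (G.mul_mem hh hg) (G.inv_mem hh), fun v => ?_⟩
  have hherm : herm (h r) v = herm r (h.symm v) := by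
    rw [← isometry r (h.symm v), h.apply_symm_apply]
  change h (g (h.symm v)) = _
  rw [hrefl, reflMap, reflMap, map_sub, h.apply_symm_apply, map_smul, hherm, isometry]

lemma HasRefl.of_apply (hG : G ≤ AutL) {h : V ≃ₗ[ℂ] V} (hh : h ∈ G) (hr : HasRefl G (h r)) :
    HasRefl G r := by
  have := hr.apply hG (G.inv_mem hh)
  rwa [LinearEquiv.coe_inv, h.symm_apply_apply] at this

lemma HasRefl.smul (hr : HasRefl G r) {u : ℂ} (hu : conj u * u = 1) : HasRefl G (u • r) := by
  obtain ⟨g, hg, hrefl⟩ := hr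
  refine ⟨g, hg, fun v => ?_⟩
  rw [hrefl, reflMap, reflMap, herm_smul_left, herm_smul_left, herm_smul_right, smul_smul]
  congr 2
  rw [← mul_assoc (conj u), hu, one_mul]
  linear_combination -((1 - ω) * herm r v / herm r r) * hu

lemma HasRefl.exists_eq_reflMap (hr : HasRefl G r) (hr0 : herm r r ≠ 0) {μ : ℂ}
    (hμ : μ = ω ∨ μ = conj ω) : ∃ g ∈ G, ∀ v, g v = reflMap μ r v := by
  obtain ⟨g, hg, hrefl⟩ := hr
  obtain rfl | rfl := hμ
  · exact ⟨g, hg, hrefl⟩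
  · refine ⟨g⁻¹, G.inv_mem hg, fun v => ?_⟩
    rw [LinearEquiv.coe_inv, LinearEquiv.symm_apply_eq, hrefl,
      reflMap_reflMap omega_mul_conj_omega hr0]

end Reflections

section Translations

/-- The map `(μ; α, β) ↦ (μ + αl; α, β + θ⁻¹⟨l, μ⟩ + cα)`, for the Hermitian form `-(1/3)Σ ūᵢvᵢ` on
`ℂ¹²`: the translation `T_{l,z}` with its last matrix entry replaced by a free parameter. -/
def transl (l : Fin 12 → ℂ) (c : ℂ) (v : V) : V :=
  glue (leechPart v + v 12 • l) (v 12) (v 13 + θ / 9 * star l ⬝ᵥ leechPart v + c * v 12)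

lemma theta_inv : θ⁻¹ = -θ / 3 := by
  have := theta_ne_zero
  field_simp
  linear_combination theta_sq

lemma normL_eq (l : Fin 12 → ℂ) : normL l = -(1 / 3) * star l ⬝ᵥ l := rfl

lemma tmap_eq_transl (l : Fin 12 → ℂ) (z : ℂ) :
    Tmap l z = transl l ((conj θ)⁻¹ * (z - normL l / 2)) := by
  funext v
  apply ext_leechPart
  · rw [Tmap, transl, leechPart_glue, leechPart_glue]
    funext i
    exact congrArg _ (mul_comm _ _)
  · simp [Tmap, transl]
  · simp only [Tmap, transl, glue_thirteen, theta_inv, dotProduct, leechPart, Pi.star_apply,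
      starRingEnd_apply]
    ring

lemma transl_transl (l l' : Fin 12 → ℂ) (c c' : ℂ) (v : V) :
    transl l c (transl l' c' v) = transl (l + l') (c + c' + θ / 9 * star l ⬝ᵥ l') v := by
  apply ext_leechPart
  · simp only [transl, leechPart_glue, glue_twelve]
    module
  · simp [transl]
  · simp only [transl, leechPart_glue, glue_twelve, glue_thirteen, star_add, add_dotProduct,
      dotProduct_add, dotProduct_smul, smul_eq_mul]
    ring

lemma transl_zero (v : V) : transl 0 0 v = v := by
  apply ext_leechPart <;> simp [transl]

lemma transl_neg (l : Fin 12 → ℂ) (c : ℂ) (v : V) :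
    transl l c (transl (-l) (θ / 9 * star l ⬝ᵥ l - c) v) = v := by
  rw [transl_transl, dotProduct_neg, add_neg_cancel]
  convert transl_zero v using 2
  ring

lemma transl_sub_smul (l : Fin 12 → ℂ) (c k : ℂ) (u v : V) :
    transl l c (u - k • v) = transl l c u - k • transl l c v := by
  apply ext_leechPart
  · simp only [transl, leechPart_glue, leechPart_sub, leechPart_smul, Pi.sub_apply, Pi.smul_apply,
      smul_eq_mul]
    module
  · simp [transl]
  · simp only [transl, Pi.sub_apply, Pi.smul_apply, smul_eq_mul, glue_thirteen, leechPart_sub,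
      leechPart_smul, dotProduct_sub, dotProduct_smul]
    ring

lemma herm_transl {l : Fin 12 → ℂ} {c : ℂ} (hc : θ * (conj c - c) = star l ⬝ᵥ l / 3) (u v : V) :
    herm (transl l c u) (transl l c v) = herm u v := by
  simp only [herm_eq, transl, leechPart_glue, glue_twelve, glue_thirteen, star_add, add_dotProduct,
    dotProduct_add, star_smul_dotProduct, dotProduct_smul, smul_eq_mul, map_add, map_mul, map_div₀,
    conj_theta, conj_star_dotProduct, map_ofNat]
  linear_combination (conj (u 12) * v 12) * hc -
    1 / 9 * (conj (u 12) * star l ⬝ᵥ leechPart v + star (leechPart u) ⬝ᵥ l * v 12) * theta_sq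

lemma reflMap_transl {l : Fin 12 → ℂ} {c : ℂ} (hc : θ * (conj c - c) = star l ⬝ᵥ l / 3) (μ : ℂ)
    (r v : V) : reflMap μ (transl l c r) (transl l c v) = transl l c (reflMap μ r v) := by
  rw [reflMap, reflMap, herm_transl hc, herm_transl hc, transl_sub_smul]

lemma transl_mem_lset {l : Fin 12 → ℂ} {c : ℂ} (hl : l ∈ Leech) (hc : EisP c) {v : V}
    (hv : v ∈ Lset) : transl l c v ∈ Lset := by
  obtain ⟨hv0, hv12, hv13⟩ := mem_lset_iff.1 hv
  obtain ⟨e, he, hlv⟩ := exists_star_dotProduct_eq hl hv0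
  have hint : θ / 9 * star l ⬝ᵥ leechPart v = -e := by
    rw [hlv]
    linear_combination e / 3 * theta_sq
  refine glue_mem_lset (add_mem_leech hv0 (smul_mem_leech hl hv12)) hv12 ?_
  rw [hint]
  exact (hv13.add he.neg).add (hc.mul hv12)

lemma memT.exists_eq_transl {l : Fin 12 → ℂ} {z : ℂ} (h : memT l z) :
    ∃ c, EisP c ∧ Tmap l z = transl l c ∧ θ * (conj c - c) = star l ⬝ᵥ l / 3 := by
  obtain ⟨hl, a, j, t, hz, hj, ht⟩ := h
  obtain ⟨n, hn, -⟩ := exists_star_dotProduct_self_eq hl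
  have hjn : j = -3 * n := by
    have : (j : ℂ) = ((-3 * n : ℤ) : ℂ) := by
      rw [← hj, normL_eq, hn]
      push_cast
      ring
    exact_mod_cast this
  have ha : a = 2 * t - 3 * n := by omega
  have hω : ω = (θ - 1) / 2 := by
    rw [theta_eq]
    ring
  refine ⟨(2 * n - t : ℤ) + n * ω, ⟨_, _, rfl⟩, ?_, ?_⟩
  · rw [tmap_eq_transl, hz, hj, conj_theta, inv_neg, theta_inv, ha, hjn, hω]
    congr 1
    push_cast
    linear_combination (t / 3 - n / 2 : ℂ) * theta_sq
  · simp only [hn, map_add, map_mul, map_intCast, conj_omega]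
    rw [hω]
    linear_combination (-n : ℂ) * theta_sq

lemma IsRoot.tmap {r : V} (hr : IsRoot r) {l : Fin 12 → ℂ} {z : ℂ} (hz : memT l z) :
    IsRoot (Tmap l z r) := by
  obtain ⟨c, hc, htransl, hisom⟩ := hz.exists_eq_transl
  rw [htransl]
  exact isRoot_iff.2 ⟨transl_mem_lset hz.1 hc hr.1, by rw [herm_transl hisom, hr.2.1]⟩

end Translations

section BasicReflections

lemma isRoot_r1 : IsRoot r1 := by
  refine isRoot_iff.2 ⟨glue_mem_lset leechModule.zero_mem eisP_one
    (by rw [pow_two]; exact eisP_omega.mul eisP_omega), ?_⟩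
  simp only [herm_eq, r1, leechPart_glue, glue_twelve, glue_thirteen, dotProduct_zero, conj_theta,
    map_pow, conj_omega, map_one]
  rw [theta_eq]
  linear_combination 4 * omega_sq

lemma isRoot_r2 : IsRoot r2 := by
  refine isRoot_iff.2 ⟨glue_mem_lset leechModule.zero_mem eisP_one eisP_omega.neg, ?_⟩
  simp only [herm_eq, r2, leechPart_glue, glue_twelve, glue_thirteen, dotProduct_zero, conj_theta,
    map_neg, conj_omega, map_one]
  rw [theta_eq]
  linear_combination 4 * omega_sq

lemma reflMap_r1 (v : V) : reflMap ω r1 v =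
    glue (leechPart v) (ω ^ 2 * v 13) (-ω ^ 2 * v 13 - ω ^ 2 * v 12) := by
  rw [reflMap, isRoot_r1.2.1]
  apply ext_leechPart
  · simp [r1]
  all_goals
    simp only [Pi.sub_apply, Pi.smul_apply, smul_eq_mul, herm_eq, r1, leechPart_glue, glue_twelve,
      glue_thirteen, star_zero, zero_dotProduct, conj_theta, map_pow, conj_omega, map_one]
    rw [theta_eq]
    grind [omega_sq]

lemma reflMap_r2 (v : V) : reflMap ω r2 v =
    glue (leechPart v) (-ω ^ 2 * v 12 + ω ^ 2 * v 13) (-ω ^ 2 * v 12) := by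
  rw [reflMap, isRoot_r2.2.1]
  apply ext_leechPart
  · simp [r2]
  all_goals
    simp only [Pi.sub_apply, Pi.smul_apply, smul_eq_mul, herm_eq, r2, leechPart_glue, glue_twelve,
      glue_thirteen, star_zero, zero_dotProduct, conj_theta, map_neg, conj_omega, map_one]
    rw [theta_eq]
    grind [omega_sq]

/-- The product of the `ω`-reflections in `r₁` and `r₂`. It acts on `H` as `-ω` times a unipotent
map, hence normalizes the group of translations. -/
def reflProd (v : V) : V := glue (leechPart v) (-ω * v 12) (-ω * (v 13 - 2 * v 12))

lemma reflMap_r1_reflMap_r2 (v : V) : reflMap ω r1 (reflMap ω r2 v) = reflProd v := by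
  rw [reflMap_r2, reflMap_r1, reflProd]
  apply ext_leechPart <;> simp only [leechPart_glue, glue_twelve, glue_thirteen]
  · linear_combination (-ω * v 12) * omega_cube
  · linear_combination (2 * ω * v 12 - ω * v 13) * omega_cube

lemma reflProd_transl (l : Fin 12 → ℂ) (c : ℂ) (v : V) :
    reflProd (transl l c v) = transl ((-ω ^ 2) • l) c (reflProd v) := by
  apply ext_leechPart
  · simp only [reflProd, transl, leechPart_glue, glue_twelve, smul_smul]
    rw [show -ω * v 12 * -ω ^ 2 = v 12 by linear_combination v 12 * omega_cube]
  · simp [reflProd, transl]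
  · simp only [reflProd, transl, leechPart_glue, glue_twelve, glue_thirteen, star_smul_dotProduct,
      map_neg, map_pow, conj_omega]
    linear_combination (θ / 9 * star l ⬝ᵥ leechPart v) * omega_sq

variable {G : Subgroup (V ≃ₗ[ℂ] V)}

lemma exists_eq_reflProd (h1 : HasRefl G r1) (h2 : HasRefl G r2) :
    ∃ γ ∈ G, ∀ v, γ v = reflProd v := by
  obtain ⟨g1, hg1, hrefl1⟩ := h1
  obtain ⟨g2, hg2, hrefl2⟩ := h2
  exact ⟨g1 * g2, G.mul_mem hg1 hg2, fun v => by
    rw [LinearEquiv.mul_apply, hrefl2, hrefl1, reflMap_r1_reflMap_r2]⟩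

/-- The vectors `l` such that `G` contains a translation by `l`. -/
def translVectors (G : Subgroup (V ≃ₗ[ℂ] V)) : AddSubgroup (Fin 12 → ℂ) where
  carrier := {l | ∃ g ∈ G, ∃ c, ∀ v, g v = transl l c v}
  zero_mem' := ⟨1, G.one_mem, 0, fun v => (transl_zero v).symm⟩
  add_mem' := by
    rintro l l' ⟨g, hg, c, h⟩ ⟨g', hg', c', h'⟩
    exact ⟨g * g', G.mul_mem hg hg', _, fun v => by
      rw [LinearEquiv.mul_apply, h', h, transl_transl]⟩
  neg_mem' := by
    rintro l ⟨g, hg, c, h⟩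
    refine ⟨g⁻¹, G.inv_mem hg, θ / 9 * star l ⬝ᵥ l - c, fun v => ?_⟩
    rw [LinearEquiv.coe_inv, LinearEquiv.symm_apply_eq, h, transl_neg]

lemma neg_omega_sq_smul_mem_translVectors (h1 : HasRefl G r1) (h2 : HasRefl G r2)
    {l : Fin 12 → ℂ} (hl : l ∈ translVectors G) : (-ω ^ 2) • l ∈ translVectors G := by
  obtain ⟨γ, hγ, hprod⟩ := exists_eq_reflProd h1 h2
  obtain ⟨g, hg, c, h⟩ := hl
  refine ⟨γ * g * γ⁻¹, G.mul_mem (G.mul_mem hγ hg) (G.inv_mem hγ), c, fun v => ?_⟩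
  rw [LinearEquiv.mul_apply, LinearEquiv.mul_apply, hprod, h, reflProd_transl, ← hprod,
    LinearEquiv.coe_inv, γ.apply_symm_apply]

lemma omega_smul_mem_translVectors (h1 : HasRefl G r1) (h2 : HasRefl G r2)
    {l : Fin 12 → ℂ} (hl : l ∈ translVectors G) : ω • l ∈ translVectors G := by
  have h := neg_omega_sq_smul_mem_translVectors h1 h2
    (neg_omega_sq_smul_mem_translVectors h1 h2 hl)
  rwa [smul_smul, show -ω ^ 2 * -ω ^ 2 = ω by linear_combination ω * omega_cube] at h

/- With `T = T_{l,z}` and `γ = φ_{r₁}φ_{r₂}`, the product `φ_{Tr₁}φ_{Tr₂}γ⁻¹ = T(γT⁻¹γ⁻¹)` is a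
translation by `l + ω²l = -ωl`. -/
lemma mem_translVectors_of_hasRefl_tmap (h1 : HasRefl G r1) (h2 : HasRefl G r2)
    {l : Fin 12 → ℂ} {z : ℂ} (hz : memT l z) (hT1 : HasRefl G (Tmap l z r1))
    (hT2 : HasRefl G (Tmap l z r2)) : l ∈ translVectors G := by
  obtain ⟨γ, hγ, hprod⟩ := exists_eq_reflProd h1 h2
  obtain ⟨c, -, htransl, hisom⟩ := hz.exists_eq_transl
  obtain ⟨g1, hg1, hrefl1⟩ := hT1
  obtain ⟨g2, hg2, hrefl2⟩ := hT2
  have hcommutator : (-ω) • l ∈ translVectors G := by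
    refine ⟨g1 * g2 * γ⁻¹, G.mul_mem (G.mul_mem hg1 hg2) (G.inv_mem hγ),
      c + (θ / 9 * star l ⬝ᵥ l - c) + θ / 9 * star l ⬝ᵥ (ω ^ 2 • l), fun v => ?_⟩
    rw [LinearEquiv.mul_apply, LinearEquiv.mul_apply, hrefl1, hrefl2, htransl,
      ← transl_neg l c (γ⁻¹ v), reflMap_transl hisom, reflMap_transl hisom, reflMap_r1_reflMap_r2,
      reflProd_transl, ← hprod, LinearEquiv.coe_inv, γ.apply_symm_apply, smul_neg, neg_smul,
      neg_neg, transl_transl]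
    congr 1
    rw [omega_sq]
    module
  have h := neg_omega_sq_smul_mem_translVectors h1 h2 hcommutator
  rwa [smul_smul, show -ω ^ 2 * -ω = 1 by linear_combination omega_cube, one_smul] at h

lemma hasRefl_glue_zero_one_sub_two (hG : G ≤ AutL) (h1 : HasRefl G r1) (h2 : HasRefl G r2)
    {b : ℂ} : HasRefl G (glue 0 1 (b - 2)) ↔ HasRefl G (glue 0 1 b) := by
  obtain ⟨γ, hγ, hprod⟩ := exists_eq_reflProd h1 h2
  have hact : γ (glue 0 1 b) = (-ω) • glue 0 1 (b - 2) := by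
    rw [hprod]
    apply ext_leechPart <;> simp [reflProd, -neg_smul]
  have hinv : conj (-ω) * -ω = 1 := by
    rw [map_neg, neg_mul_neg, mul_comm, omega_mul_conj_omega]
  refine ⟨fun h => .of_apply hG hγ (hact ▸ h.smul hinv), fun h => ?_⟩
  have := (h.apply hG hγ).smul (u := conj (-ω)) (by rw [Complex.conj_conj, mul_comm, hinv])
  rwa [hact, smul_smul, hinv, one_smul] at this

lemma hasRefl_glue_zero_one_add_two_mul (hG : G ≤ AutL) (h1 : HasRefl G r1) (h2 : HasRefl G r2)
    {b : ℂ} (hb : HasRefl G (glue 0 1 b)) (n : ℤ) : HasRefl G (glue 0 1 (b + 2 * n)) := by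
  induction n using Int.induction_on with
  | zero => simpa using hb
  | succ n ih =>
    rw [← hasRefl_glue_zero_one_sub_two hG h1 h2]
    convert ih using 2
    push_cast
    ring
  | pred n ih =>
    rw [← hasRefl_glue_zero_one_sub_two hG h1 h2] at ih
    convert ih using 2
    push_cast
    ring

lemma hasRefl_glue_zero_one_sub_omega (hG : G ≤ AutL) (h1 : HasRefl G r1) (h2 : HasRefl G r2)
    (a : ℤ) : HasRefl G (glue 0 1 (a - ω)) := by
  obtain ⟨k, rfl | rfl⟩ := Int.even_or_odd' a
  · convert hasRefl_glue_zero_one_add_two_mul hG h1 h2 h2 k using 2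
    push_cast
    ring
  · convert hasRefl_glue_zero_one_add_two_mul hG h1 h2 h1 (k + 1) using 2
    rw [omega_sq]
    push_cast
    ring

lemma exists_eq_glue_zero_one_sub_omega {r : V} (hr : IsRoot r) (h0 : leechPart r = 0)
    (h12 : r 12 = 1) : ∃ a : ℤ, r = glue 0 1 (a - ω) := by
  obtain ⟨a, b, hab⟩ := hr.1.2.2
  have hnorm := hr.2.1
  simp only [herm_eq, h0, h12, hab, dotProduct_zero, conj_theta, map_one, map_add, map_mul,
    map_intCast, conj_omega] at hnorm
  rw [theta_eq] at hnorm
  have hb : b = -1 := by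
    have : (b : ℂ) = ((-1 : ℤ) : ℂ) := by
      push_cast
      linear_combination hnorm / 3 + 4 / 3 * b * omega_sq
    exact_mod_cast this
  refine ⟨a, ext_leechPart ?_ ?_ ?_⟩
  · rw [h0, leechPart_glue]
  · rw [h12, glue_twelve]
  · rw [hab, glue_thirteen, hb]
    push_cast
    ring

lemma hasRefl_of_apply_twelve_eq_one (hG : G ≤ AutL) (h1 : HasRefl G r1) (h2 : HasRefl G r2)
    (htransl : Leech ⊆ translVectors G) {r : V} (hr : IsRoot r) (h12 : r 12 = 1) :
    HasRefl G r := by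
  obtain ⟨g, hg, c, h⟩ := htransl (leechModule.neg_mem hr.1.1)
  obtain ⟨a, ha⟩ := exists_eq_glue_zero_one_sub_omega (hr.apply (hG hg))
    (by rw [h, transl, leechPart_glue, h12, one_smul]; exact add_neg_cancel (leechPart r))
    (by rw [h, transl, glue_twelve, h12])
  exact .of_apply hG hg (ha ▸ hasRefl_glue_zero_one_sub_omega hG h1 h2 a)

end BasicReflections

section HeightReduction

lemma theta_im : θ.im = √3 := by
  simp only [θ, Complex.sub_im, Complex.conj_im, omega_im]
  ring

lemma normSq_one_add_one_sub_omega_mul (w : ℂ) : Complex.normSq (1 + (1 - ω) * w / 3) =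
    1 + w.re * (1 + w.re / 3) + w.im * (√3 + w.im) / 3 := by
  have hsqrt : √3 ^ 2 = 3 := Real.sq_sqrt (by norm_num)
  rw [show (1 - ω) * w / 3 = ((1 / 3 : ℝ) : ℂ) * ((1 - ω) * w) by push_cast; ring,
    Complex.normSq_apply]
  simp only [Complex.add_re, Complex.add_im, Complex.ofReal_re, Complex.ofReal_im,
    Complex.mul_re, Complex.mul_im, Complex.sub_re, Complex.sub_im, Complex.one_re,
    Complex.one_im, omega_re, omega_im]
  linear_combination (w.re ^ 2 / 36 + w.im ^ 2 / 36) * hsqrt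

lemma normSq_one_add_one_sub_omega_mul_lt_one {w : ℂ} (hre : -3 < w.re) (hre' : w.re < 0)
    (him : -√3 ≤ w.im) (him' : w.im ≤ 0) : Complex.normSq (1 + (1 - ω) * w / 3) < 1 := by
  have h1 : w.re * (1 + w.re / 3) < 0 := mul_neg_of_neg_of_pos hre' (by linarith)
  have h2 : w.im * (√3 + w.im) ≤ 0 := mul_nonpos_of_nonpos_of_nonneg him' (by linarith)
  rw [normSq_one_add_one_sub_omega_mul]
  linarith

lemma exists_normSq_one_add_mul_lt_one {w : ℂ} (hre : -3 < w.re) (hre' : w.re < 0)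
    (him : |w.im| ≤ √3) :
    ∃ μ, (μ = ω ∨ μ = conj ω) ∧ Complex.normSq (1 + (1 - μ) * w / 3) < 1 := by
  obtain ⟨him₁, him₂⟩ := abs_le.1 him
  obtain h | h := le_total w.im 0
  · exact ⟨ω, .inl rfl, normSq_one_add_one_sub_omega_mul_lt_one hre hre' him₁ h⟩
  · refine ⟨conj ω, .inr rfl, ?_⟩
    rw [← Complex.normSq_conj]
    have := normSq_one_add_one_sub_omega_mul_lt_one (w := conj w) hre hre'
      (by rw [Complex.conj_im]; linarith) (by rw [Complex.conj_im]; linarith)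
    simpa only [map_add, map_div₀, map_mul, map_sub, map_one, map_ofNat, Complex.conj_conj]

/- The difference `u - v` lies in the hyperplane where the form is that of `ℂ¹²`. -/
lemma two_mul_re_herm {u v : V} (h : u 12 = v 12) : 2 * (herm u v).re =
    (herm u u).re + (herm v v).re +
      (∑ i, Complex.normSq (leechPart v i - leechPart u i)) / 3 := by
  have hdiff : herm (v - u) (v - u) =
      ((-(∑ i, Complex.normSq (leechPart v i - leechPart u i)) / 3 : ℝ) : ℂ) := by
    have h0 : (v - u) 12 = 0 := sub_eq_zero.2 h.symm
    rw [herm_eq, h0, star_dotProduct_self]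
    simp only [leechPart_sub, Pi.sub_apply, map_zero]
    push_cast
    ring
  have hre := congrArg Complex.re hdiff
  rw [Complex.ofReal_re, herm_sub_left, herm_sub_right, herm_sub_right, ← conj_herm u v] at hre
  simp only [Complex.sub_re, Complex.conj_re] at hre
  linarith

lemma exists_forall_isRoot_glue_one_add {l : Fin 12 → ℂ} (hl : l ∈ Leech) :
    ∃ b, ∀ k : ℤ, IsRoot (glue l 1 (b + k)) := by
  obtain ⟨n, hn, -⟩ := exists_star_dotProduct_self_eq hl
  refine ⟨(n - 1 : ℤ) * ω, fun k => isRoot_iff.2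
    ⟨glue_mem_lset hl eisP_one ⟨k, n - 1, add_comm _ _⟩, ?_⟩⟩
  simp only [herm_eq, leechPart_glue, glue_twelve, glue_thirteen, hn, conj_theta, map_one, map_add,
    map_mul, map_intCast, conj_omega]
  rw [theta_eq]
  push_cast
  linear_combination (-4 * (n - 1) : ℂ) * omega_sq

lemma exists_isRoot_glue_one_abs_im_herm_le {l : Fin 12 → ℂ} (hl : l ∈ Leech) {v : V}
    (hv : v 12 = 1) : ∃ b, IsRoot (glue l 1 b) ∧ |(herm (glue l 1 b) v).im| ≤ √3 := by
  obtain ⟨b, hb⟩ := exists_forall_isRoot_glue_one_add hl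
  have him : ∀ k : ℤ, (herm (glue l 1 (b + k)) v).im = (herm (glue l 1 b) v).im + k * √3 := by
    intro k
    have : herm (glue l 1 (b + k)) v = herm (glue l 1 b) v + (k : ℝ) * θ := by
      simp only [herm_eq, leechPart_glue, glue_twelve, glue_thirteen, map_add, map_intCast, hv,
        Complex.ofReal_intCast]
      ring
    rw [this, Complex.add_im, Complex.im_ofReal_mul, theta_im]
  refine ⟨_, hb (-⌊(herm (glue l 1 b) v).im / √3⌋), ?_⟩
  have hsqrt : 0 < √3 := by positivity
  have hle := mul_le_mul_of_nonneg_right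
    (Int.floor_le ((herm (glue l 1 b) v).im / √3)) hsqrt.le
  have hlt := mul_lt_mul_of_pos_right
    (Int.lt_floor_add_one ((herm (glue l 1 b) v).im / √3)) hsqrt
  rw [div_mul_cancel₀ _ hsqrt.ne'] at hle hlt
  rw [him, abs_le]
  push_cast
  constructor <;> linarith

lemma exists_isRoot_normSq_reflMap_lt {r : V} (hr : IsRoot r)
    (h1 : 1 < Complex.normSq (r 12)) : ∃ s, IsRoot s ∧ s 12 = 1 ∧ ∃ μ, (μ = ω ∨ μ = conj ω) ∧
      Complex.normSq (reflMap μ s r 12) < Complex.normSq (r 12) := by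
  set α := r 12
  have hpos : 0 < Complex.normSq α := one_pos.trans h1
  have hα0 : α ≠ 0 := Complex.normSq_pos.1 hpos
  obtain ⟨v, hv⟩ : ∃ v, r = α • v := ⟨α⁻¹ • r, (smul_inv_smul₀ hα0 r).symm⟩
  have hv12 : v 12 = 1 := mul_left_cancel₀ hα0 ((congrFun hv 12).symm.trans (mul_one α).symm)
  obtain ⟨l, hl, hdist⟩ := exists_mem_leech_sum_normSq_le (leechPart v)
  obtain ⟨b, hs, him⟩ := exists_isRoot_glue_one_abs_im_herm_le hl hv12
  have hvv : (herm v v).re = -3 / Complex.normSq α := by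
    have := hr.2.1
    rw [hv, herm_smul_left, herm_smul_right, ← mul_assoc, ← Complex.normSq_eq_conj_mul_self] at this
    have hre := congrArg Complex.re this
    rw [Complex.re_ofReal_mul] at hre
    rw [eq_div_iff hpos.ne', mul_comm, hre]
    simp
  have hre := two_mul_re_herm (u := glue l 1 b) (v := v) (by rw [glue_twelve, hv12])
  rw [leechPart_glue, hs.2.1, hvv, neg_div] at hre
  have hdist0 : 0 ≤ ∑ i, Complex.normSq (leechPart v i - l i) :=
    Finset.sum_nonneg fun i _ => Complex.normSq_nonneg _
  have hquot : 3 / Complex.normSq α < 3 := (div_lt_iff₀ hpos).2 (by linarith)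
  have hquot0 : 0 < 3 / Complex.normSq α := by positivity
  simp only [Complex.neg_re, Complex.re_ofNat] at hre
  obtain ⟨μ, hμ, hlt⟩ := exists_normSq_one_add_mul_lt_one (w := herm (glue l 1 b) v)
    (by linarith) (by linarith) him
  refine ⟨glue l 1 b, hs, glue_twelve _ _ _, μ, hμ, ?_⟩
  have hrefl : reflMap μ (glue l 1 b) r 12 = α * (1 + (1 - μ) * herm (glue l 1 b) v / 3) := by
    rw [hv, reflMap_smul, Pi.smul_apply, smul_eq_mul, reflMap, hs.2.1, Pi.sub_apply, Pi.smul_apply,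
      glue_twelve, hv12, smul_eq_mul]
    ring
  rw [hrefl, map_mul]
  exact mul_lt_of_lt_one_right hpos hlt

lemma IsRoot.apply_twelve_ne_zero {r : V} (hr : IsRoot r) : r 12 ≠ 0 := fun h0 => by
  obtain ⟨n, hn, hn1⟩ := exists_star_dotProduct_self_eq (mem_lset_iff.1 hr.1).1
  have hnorm := hr.2.1
  rw [herm_eq, h0, hn] at hnorm
  simp only [map_zero, zero_mul, mul_zero, add_zero] at hnorm
  refine hn1 ?_
  have : (n : ℂ) = ((1 : ℤ) : ℂ) := by
    push_cast
    linear_combination -hnorm / 3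
  exact_mod_cast this

variable {G : Subgroup (V ≃ₗ[ℂ] V)}

lemma hasRefl_of_normSq_apply_twelve_eq_one (h : ∀ r, IsRoot r → r 12 = 1 → HasRefl G r) {r : V}
    (hr : IsRoot r) (h1 : Complex.normSq (r 12) = 1) : HasRefl G r := by
  have hunit : conj (r 12) * r 12 = 1 := by
    rw [← Complex.normSq_eq_conj_mul_self, h1, Complex.ofReal_one]
  rw [← one_smul ℂ r, ← hunit, mul_comm, mul_smul]
  refine (h _ (isRoot_iff.2 ⟨smul_mem_lset hr.1 hr.1.2.1.conj, ?_⟩) hunit).smul hunit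
  rw [herm_smul_left, herm_smul_right, hr.2.1, Complex.conj_conj]
  linear_combination -3 * hunit

lemma hasRefl_of_isRoot (hG : G ≤ AutL) (h : ∀ r, IsRoot r → r 12 = 1 → HasRefl G r) {r : V}
    (hr : IsRoot r) : HasRefl G r := by
  obtain ⟨n, hn⟩ := hr.1.2.1.exists_normSq_eq_natCast
  induction n using Nat.strong_induction_on generalizing r with
  | _ n ih =>
  have hn0 : n ≠ 0 := fun h0 =>
    hr.apply_twelve_ne_zero (Complex.normSq_eq_zero.1 (by rw [hn, h0, Nat.cast_zero]))
  obtain rfl | hlt : n = 1 ∨ 1 < n := by omega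
  · exact hasRefl_of_normSq_apply_twelve_eq_one h hr (by rw [hn, Nat.cast_one])
  · obtain ⟨s, hs, hs12, μ, hμ, hdecrease⟩ :=
      exists_isRoot_normSq_reflMap_lt hr (by rw [hn]; exact_mod_cast hlt)
    obtain ⟨g, hg, hrefl⟩ := (h s hs hs12).exists_eq_reflMap hs.herm_self_ne_zero hμ
    have hgr := hr.apply (hG hg)
    obtain ⟨m, hm⟩ := hgr.1.2.1.exists_normSq_eq_natCast
    rw [← hrefl, hm, hn] at hdecrease
    exact .of_apply hG hg (ih m (by exact_mod_cast hdecrease) hgr hm)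

end HeightReduction

theorem stmt10_general {ι : Type*} (bas : ι → Fin 12 → ℂ)
    (hspan : Leech ⊆ Submodule.span ℤ (Set.range bas ∪ Set.range fun j => ω • bas j))
    (z : ι → ℂ) (hz : ∀ j, memT (bas j) (z j)) :
    Subgroup.closure (ReflAutos ({r1, r2} ∪
      ⋃ j, {Tmap (bas j) (z j) r1, Tmap (bas j) (z j) r2})) = RL := by
  set S : Set V := {r1, r2} ∪ ⋃ j, {Tmap (bas j) (z j) r1, Tmap (bas j) (z j) r2}
  set G := Subgroup.closure (ReflAutos S)
  have hroot : ∀ r ∈ S, IsRoot r := by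
    simp only [S, Set.mem_union, Set.mem_insert_iff, Set.mem_singleton_iff, Set.mem_iUnion]
    rintro r ((rfl | rfl) | ⟨j, rfl | rfl⟩)
    exacts [isRoot_r1, isRoot_r2, isRoot_r1.tmap (hz j), isRoot_r2.tmap (hz j)]
  have hG : G ≤ AutL := (Subgroup.closure_le _).2 fun g hg => hg.1
  have hS : ∀ r ∈ S, HasRefl G r := fun r hr => (hroot r hr).hasRefl_closure hr
  have h1 : HasRefl G r1 := hS _ (by simp [S])
  have h2 : HasRefl G r2 := hS _ (by simp [S])
  have hbas : ∀ j, bas j ∈ translVectors G := fun j =>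
    mem_translVectors_of_hasRefl_tmap h1 h2 (hz j)
      (hS _ (.inr (Set.mem_iUnion.2 ⟨j, .inl rfl⟩))) (hS _ (.inr (Set.mem_iUnion.2 ⟨j, .inr rfl⟩)))
  have htransl : Leech ⊆ translVectors G := by
    refine hspan.trans (Submodule.span_le (p := (translVectors G).toIntSubmodule).2 ?_)
    rintro _ (⟨j, rfl⟩ | ⟨j, rfl⟩)
    exacts [hbas j, omega_smul_mem_translVectors h1 h2 (hbas j)]
  refine le_antisymm (Subgroup.closure_mono fun g ⟨hg, r, hr, hrefl⟩ =>
    ⟨hg, r, hroot r hr, hrefl⟩) ((Subgroup.closure_le _).2 fun g ⟨_, r, hr, hrefl⟩ => ?_)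
  exact (hasRefl_of_isRoot hG (fun s hs hs12 =>
    hasRefl_of_apply_twelve_eq_one hG h1 h2 htransl hs hs12) hr).mem hrefl

/-- For any `ℤ`-basis `λ₁,…,λ₂₄` of the complex Leech lattice `Λ` and any choices
`z_j` with `T_{λ_j,z_j} ∈ 𝕋`, the `ω`-reflections in the 50 roots
`r₁, r₂, T_{λ_j,z_j}(r₁), T_{λ_j,z_j}(r₂)` generate the reflection group `R(L)`. -/
theorem stmt10 (bas : Fin 24 → Fin 12 → ℂ) (hbas : ∀ j, bas j ∈ Leech)
    (hind : LinearIndependent ℤ bas)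
    (hspan : (Submodule.span ℤ (Set.range bas) : Set (Fin 12 → ℂ)) = Leech)
    (z : Fin 24 → ℂ) (hz : ∀ j, memT (bas j) (z j)) :
    Subgroup.closure (ReflAutos ({r1, r2} ∪
      ⋃ j : Fin 24, {Tmap (bas j) (z j) r1, Tmap (bas j) (z j) r2})) = RL :=
  stmt10_general bas (hspan.ge.trans (Submodule.span_mono Set.subset_union_left)) z hz

end Bimonster
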